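/- Let ψ : ℂ[a_0, a_2, a_3, a_4, b_0, b_1, …, b_6] → ℂ[α_0,…,α_4, β_0,…,β_6, α_0^{−1}] be the map of function rings given by substituting a_i ↦ â_i and b_j ↦ b̂_j into the unique polynomial expression, and ψ̃ : ℂ[c_0, …, c_4, d_0, d_2, …, d_6] → ℂ[α_0,…,α_4, β_0,…,β_6, β_0^{−1}] the map given by substituting c_i ↦ ĉ_i and d_j ↦ d̂_j. Then ψ and ψ̃ are injective ℂ-algebra homomorphisms; the inverse of ψ on its image is given by the substitution α_i ↦ a_i (i ≠ 1), α_1 ↦ 0, β_j ↦ b_j, and the inverse of ψ̃ on its image by α_i ↦ c_i, β_j ↦ d_j (j ≠ 1), β_1 ↦ 0. Moreover, the restrictions of ψ and ψ̃ to the intersection J^{E8}_{*,*} = ℂ[a_0,a_2,a_3,a_4,b_0,…,b_6] ∩ ℂ[c_0,…,c_4,d_0,d_2,…,d_6] coincide and define an injection of J^{E8}_{*,*} into the polynomial ring ℂ[α_0,…,α_4, β_0,…,β_6]. -/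

import Mathlib

noncomputable section

open Complex Finset

namespace E8Jacobi

/-- π as a complex number. -/
def πC : ℂ := Real.pi

/-- The E8 lattice as a subset of ℝ^8. -/
def E8Lattice : Set (Fin 8 → ℝ) :=
  {x | ((∀ i, ∃ n : ℤ, x i = n) ∨ (∀ i, ∃ n : ℤ, x i = n + 1/2)) ∧ ∃ m : ℤ, ∑ i, x i = 2 * m}

/-- Complexification of a real vector. -/
def cv (x : Fin 8 → ℝ) : Fin 8 → ℂ := fun i => (x i : ℂ)

/-- The dot product on ℝ^8. -/
def dotR (x y : Fin 8 → ℝ) : ℝ := ∑ i, x i * y i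

/-- The dot product on ℂ^8. -/
def dotC (z w : Fin 8 → ℂ) : ℂ := ∑ i, z i * w i

/-- The Weyl group W(E8): orthogonal matrices preserving the E8 lattice. -/
def WeylE8 : Set (Matrix (Fin 8) (Fin 8) ℝ) :=
  {M | (∀ x y, dotR (M.mulVec x) (M.mulVec y) = dotR x y) ∧
       (∀ x ∈ E8Lattice, M.mulVec x ∈ E8Lattice) ∧
       (∀ x ∈ E8Lattice, ∃ y ∈ E8Lattice, M.mulVec y = x)}

/-- The complexified (ℂ-linear) action of a real matrix on ℂ^8. -/
def actC (M : Matrix (Fin 8) (Fin 8) ℝ) (z : Fin 8 → ℂ) : Fin 8 → ℂ :=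
  fun i => ∑ j, (M i j : ℂ) * z j

/-- A W(E8)-invariant weak Jacobi form of weight `k` and index `m`. -/
structure IsWeakJacobiFormE8 (k : ℤ) (m : ℕ) (φ : ℂ → (Fin 8 → ℂ) → ℂ) : Prop where
  holo : DifferentiableOn ℂ (fun p : ℂ × (Fin 8 → ℂ) => φ p.1 p.2) {p | 0 < p.1.im}
  weyl_inv : ∀ M ∈ WeylE8, ∀ τ : ℂ, 0 < τ.im → ∀ z, φ τ (actC M z) = φ τ z
  quasi_periodic : ∀ α ∈ E8Lattice, ∀ β ∈ E8Lattice, ∀ τ : ℂ, 0 < τ.im → ∀ z,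
    φ τ (fun i => z i + τ * (α i : ℂ) + (β i : ℂ)) =
      Complex.exp (-(m : ℂ) * πC * I * (τ * dotC (cv α) (cv α) + 2 * dotC z (cv α))) * φ τ z
  modular : ∀ a b c d : ℤ, a * d - b * c = 1 → ∀ τ : ℂ, 0 < τ.im → ∀ z,
    φ (((a : ℂ) * τ + (b : ℂ)) / ((c : ℂ) * τ + (d : ℂ))) (fun i => z i / ((c : ℂ) * τ + (d : ℂ))) =
      ((c : ℂ) * τ + (d : ℂ)) ^ k *
        Complex.exp ((m : ℂ) * πC * I * (c : ℂ) / ((c : ℂ) * τ + (d : ℂ)) * dotC z z) * φ τ z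
  fourier : ∃ co : ℕ → E8Lattice → ℂ, ∀ τ : ℂ, 0 < τ.im → ∀ z,
    φ τ z = ∑' (n : ℕ) (w : E8Lattice), co n w *
      Complex.exp (2 * πC * I * dotC (cv w.1) z) * Complex.exp (2 * πC * I * τ) ^ n

/-- Membership in the ring J^{E8}_{*,*} of W(E8)-invariant weak Jacobi forms:
a finite sum of weak Jacobi forms of various weights and indices. -/
def MemJE8 (φ : ℂ → (Fin 8 → ℂ) → ℂ) : Prop :=
  ∃ (n : ℕ) (k : Fin n → ℤ) (m : Fin n → ℕ) (ψ : Fin n → ℂ → (Fin 8 → ℂ) → ℂ),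
    (∀ i, IsWeakJacobiFormE8 (k i) (m i) (ψ i)) ∧
    ∀ τ : ℂ, 0 < τ.im → ∀ z, φ τ z = ∑ i, ψ i τ z

/-- The nome q = e^{2πiτ}. -/
def qExp (τ : ℂ) : ℂ := Complex.exp (2 * πC * I * τ)

/-- The Eisenstein series E4. -/
def E4 (τ : ℂ) : ℂ :=
  1 + 240 * ∑' n : ℕ+, (n : ℂ) ^ 3 * qExp τ ^ (n : ℕ) / (1 - qExp τ ^ (n : ℕ))

/-- The Eisenstein series E6. -/
def E6 (τ : ℂ) : ℂ :=
  1 - 504 * ∑' n : ℕ+, (n : ℂ) ^ 5 * qExp τ ^ (n : ℕ) / (1 - qExp τ ^ (n : ℕ))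

/-- The modular discriminant Δ. -/
def Dl (τ : ℂ) : ℂ := (E4 τ ^ 3 - E6 τ ^ 2) / 1728

/-- The Dedekind eta function. -/
def etaF (τ : ℂ) : ℂ := Complex.exp (2 * πC * I * τ / 24) * ∏' n : ℕ, (1 - qExp τ ^ (n + 1))

/-- The theta function of the E8 lattice. -/
def Theta (τ : ℂ) (z : Fin 8 → ℂ) : ℂ :=
  ∑' w : E8Lattice, Complex.exp (πC * I * τ * dotC (cv w.1) (cv w.1) + 2 * πC * I * dotC z (cv w.1))

/-- The Jacobi theta function θ1. -/
def th1 (z τ : ℂ) : ℂ :=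
  I * ∑' n : ℤ, (-1 : ℂ) ^ n * Complex.exp (2 * πC * I * z * ((n : ℂ) - 1/2)) *
    Complex.exp (πC * I * τ * ((n : ℂ) - 1/2) ^ 2)

/-- The Jacobi theta function θ2. -/
def th2 (z τ : ℂ) : ℂ :=
  ∑' n : ℤ, Complex.exp (2 * πC * I * z * ((n : ℂ) - 1/2)) *
    Complex.exp (πC * I * τ * ((n : ℂ) - 1/2) ^ 2)

/-- The Jacobi theta function θ3. -/
def th3 (z τ : ℂ) : ℂ :=
  ∑' n : ℤ, Complex.exp (2 * πC * I * z * (n : ℂ)) * Complex.exp (πC * I * τ * (n : ℂ) ^ 2)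

/-- The Jacobi theta function θ4. -/
def th4 (z τ : ℂ) : ℂ :=
  ∑' n : ℤ, (-1 : ℂ) ^ n * Complex.exp (2 * πC * I * z * (n : ℂ)) *
    Complex.exp (πC * I * τ * (n : ℂ) ^ 2)

/-- A1 = Θ(τ,z). -/
def A1 (τ : ℂ) (z : Fin 8 → ℂ) : ℂ := Theta τ z

/-- A_m for m = 2, 3, 5. -/
def AM (m : ℕ) (τ : ℂ) (z : Fin 8 → ℂ) : ℂ :=
  ((m : ℂ) ^ 3 / ((m : ℂ) ^ 3 + 1)) *
    (Theta ((m : ℂ) * τ) (fun i => (m : ℂ) * z i) +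
      ((m : ℂ) ^ 4)⁻¹ * ∑ k ∈ Finset.range m, Theta ((τ + (k : ℂ)) / (m : ℂ)) z)

def A2 : ℂ → (Fin 8 → ℂ) → ℂ := AM 2
def A3 : ℂ → (Fin 8 → ℂ) → ℂ := AM 3
def A5 : ℂ → (Fin 8 → ℂ) → ℂ := AM 5

/-- A4 = Θ(τ,2z). -/
def A4 (τ : ℂ) (z : Fin 8 → ℂ) : ℂ := Theta τ (fun i => 2 * z i)

def ee1 (τ : ℂ) : ℂ := (th3 0 τ ^ 4 + th4 0 τ ^ 4) / 12
def ee2 (τ : ℂ) : ℂ := (th2 0 τ ^ 4 - th4 0 τ ^ 4) / 12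
def ee3 (τ : ℂ) : ℂ := (-th2 0 τ ^ 4 - th3 0 τ ^ 4) / 12
def h0 (τ : ℂ) : ℂ := th3 0 (2*τ) * th3 0 (6*τ) + th2 0 (2*τ) * th2 0 (6*τ)

def B2 (τ : ℂ) (z : Fin 8 → ℂ) : ℂ :=
  (32/5) * (ee1 τ * Theta (2*τ) (fun i => 2 * z i)
    + (1/2^4) * ee3 τ * Theta (τ/2) z + (1/2^4) * ee2 τ * Theta ((τ+1)/2) z)

def B3 (τ : ℂ) (z : Fin 8 → ℂ) : ℂ :=
  (81/80) * (h0 τ ^ 2 * Theta (3*τ) (fun i => 3 * z i)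
    - (1/3^5) * ∑ k ∈ Finset.range 3, h0 ((τ + (k:ℂ))/3) ^ 2 * Theta ((τ + (k:ℂ))/3) z)

def B4 (τ : ℂ) (z : Fin 8 → ℂ) : ℂ :=
  (16/15) * (th4 0 (2*τ) ^ 4 * Theta (4*τ) (fun i => 4 * z i)
    - (1/2^4) * th4 0 (2*τ) ^ 4 * Theta (τ + 1/2) (fun i => 2 * z i)
    - (1/(2^2 * 4^4)) * ∑ k ∈ Finset.range 4, th2 0 ((τ + (k:ℂ))/2) ^ 4 * Theta ((τ + (k:ℂ))/4) z)

def B6 (τ : ℂ) (z : Fin 8 → ℂ) : ℂ :=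
  (9/10) * (h0 τ ^ 2 * Theta (6*τ) (fun i => 6 * z i)
    + (1/2^4) * ∑ k ∈ Finset.range 2, h0 (τ + (k:ℂ)) ^ 2 * Theta ((3*τ + 3*(k:ℂ))/2) (fun i => 3 * z i)
    - (1/(3 * 3^4)) * ∑ k ∈ Finset.range 3, h0 ((τ + (k:ℂ))/3) ^ 2 * Theta ((2*τ + 2*(k:ℂ))/3) (fun i => 2 * z i)
    - (1/(3 * 6^4)) * ∑ k ∈ Finset.range 6, h0 ((τ + (k:ℂ))/3) ^ 2 * Theta ((τ + (k:ℂ))/6) z)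

/-- The nine basic W(E8)-invariant holomorphic Jacobi forms A1,…,A5,B2,…,B6. -/
def nineForms : Fin 9 → ℂ → (Fin 8 → ℂ) → ℂ := ![A1, A2, A3, A4, A5, B2, B3, B4, B6]

/- The basic meromorphic Jacobi forms a_i, b_j (Appendix A of the paper). -/

def a0f (τ : ℂ) (_z : Fin 8 → ℂ) : ℂ := E4 τ / 12

def a2f (τ : ℂ) (z : Fin 8 → ℂ) : ℂ :=
  6 / (E4 τ * Dl τ) * (-(E4 τ) * A2 τ z + A1 τ z ^ 2)

def a3f (τ : ℂ) (z : Fin 8 → ℂ) : ℂ :=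
  1 / (9 * E4 τ ^ 2 * Dl τ ^ 2) *
    (-7 * E4 τ ^ 2 * E6 τ * A3 τ z - 20 * E4 τ ^ 3 * B3 τ z
      - 9 * E4 τ * E6 τ * A1 τ z * A2 τ z + 30 * E4 τ ^ 2 * A1 τ z * B2 τ z
      + 6 * E6 τ * A1 τ z ^ 3)

def a4f (τ : ℂ) (z : Fin 8 → ℂ) : ℂ :=
  1 / (288 * E4 τ ^ 3 * Dl τ ^ 3) *
    (576 * E4 τ ^ 3 * Dl τ * A4 τ z + 32256 * E4 τ ^ 2 * Dl τ * A1 τ z * A3 τ z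
      - 9 * E4 τ ^ 5 * A2 τ z ^ 2 - 30 * E4 τ ^ 3 * E6 τ * A2 τ z * B2 τ z
      - 25 * E4 τ ^ 4 * B2 τ z ^ 2
      + (60 * E4 τ ^ 4 - 12 * E4 τ * E6 τ ^ 2) * A1 τ z ^ 2 * A2 τ z
      + 80 * E4 τ ^ 2 * E6 τ * A1 τ z ^ 2 * B2 τ z
      + (-70 * E4 τ ^ 3 + 6 * E6 τ ^ 2) * A1 τ z ^ 4)

def b0f (τ : ℂ) (_z : Fin 8 → ℂ) : ℂ := E6 τ / 216

def b1f (τ : ℂ) (z : Fin 8 → ℂ) : ℂ := -4 / E4 τ * A1 τ z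

def b2f (τ : ℂ) (z : Fin 8 → ℂ) : ℂ :=
  5 / (6 * E4 τ ^ 2 * Dl τ) * (E4 τ ^ 2 * B2 τ z - E6 τ * A1 τ z ^ 2)

def b3f (τ : ℂ) (z : Fin 8 → ℂ) : ℂ :=
  1 / (108 * E4 τ ^ 3 * Dl τ ^ 2) *
    (-7 * E4 τ ^ 5 * A3 τ z - 20 * E4 τ ^ 3 * E6 τ * B3 τ z
      - 9 * E4 τ ^ 4 * A1 τ z * A2 τ z + 30 * E4 τ ^ 2 * E6 τ * A1 τ z * B2 τ z
      + (16 * E4 τ ^ 3 - 10 * E6 τ ^ 2) * A1 τ z ^ 3)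

def b4f (τ : ℂ) (z : Fin 8 → ℂ) : ℂ :=
  1 / (1728 * E4 τ ^ 4 * Dl τ ^ 3) *
    (-8640 * E4 τ ^ 4 * Dl τ * B4 τ z + 138240 * E4 τ ^ 3 * Dl τ * A1 τ z * B3 τ z
      + 9 * E4 τ ^ 5 * E6 τ * A2 τ z ^ 2 + 30 * E4 τ ^ 6 * A2 τ z * B2 τ z
      + 25 * E4 τ ^ 4 * E6 τ * B2 τ z ^ 2
      - 48 * E4 τ ^ 4 * E6 τ * A1 τ z ^ 2 * A2 τ z
      + (-140 * E4 τ ^ 5 + 60 * E4 τ ^ 2 * E6 τ ^ 2) * A1 τ z ^ 2 * B2 τ z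
      + (74 * E4 τ ^ 3 * E6 τ - 10 * E6 τ ^ 3) * A1 τ z ^ 4)

def b5f (τ : ℂ) (z : Fin 8 → ℂ) : ℂ :=
  1 / (72 * E4 τ ^ 5 * Dl τ ^ 3) *
    (-36288 * E4 τ ^ 4 * Dl τ * A5 τ z - 294 * E4 τ ^ 6 * A2 τ z * A3 τ z
      - 770 * E4 τ ^ 4 * E6 τ * B2 τ z * A3 τ z - 840 * E4 τ ^ 4 * E6 τ * A2 τ z * B3 τ z
      - 2200 * E4 τ ^ 5 * B2 τ z * B3 τ z + 168 * E4 τ ^ 5 * A1 τ z ^ 2 * A3 τ z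
      + 480 * E4 τ ^ 3 * E6 τ * A1 τ z ^ 2 * B3 τ z - 621 * E4 τ ^ 5 * A1 τ z * A2 τ z ^ 2
      + 3525 * E4 τ ^ 4 * A1 τ z * B2 τ z ^ 2 + 1224 * E4 τ ^ 4 * A1 τ z ^ 3 * A2 τ z
      - 240 * E4 τ ^ 2 * E6 τ * A1 τ z ^ 3 * B2 τ z
      + (-456 * E4 τ ^ 3 + 24 * E6 τ ^ 2) * A1 τ z ^ 5)

def b6f (τ : ℂ) (z : Fin 8 → ℂ) : ℂ :=
  1 / (4478976 * E4 τ ^ 6 * Dl τ ^ 5) *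
    (-19906560 * E4 τ ^ 6 * Dl τ ^ 2 * B6 τ z
      - 188116992 * E4 τ ^ 4 * E6 τ * Dl τ ^ 2 * A1 τ z * A5 τ z
      - 5184 * E4 τ ^ 7 * E6 τ * Dl τ * A2 τ z * A4 τ z
      - 8640 * E4 τ ^ 8 * Dl τ * B2 τ z * A4 τ z
      - 103680 * E4 τ ^ 8 * Dl τ * A2 τ z * B4 τ z
      - 172800 * E4 τ ^ 6 * E6 τ * Dl τ * B2 τ z * B4 τ z
      + 12672 * E4 τ ^ 6 * E6 τ * Dl τ * A1 τ z ^ 2 * A4 τ z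
      + 17280 * (5 * E4 τ ^ 7 + 9 * E4 τ ^ 4 * E6 τ ^ 2) * Dl τ * A1 τ z ^ 2 * B4 τ z
      + 112896 * E4 τ ^ 7 * E6 τ * Dl τ * A3 τ z ^ 2
      + 645120 * E4 τ ^ 8 * Dl τ * A3 τ z * B3 τ z
      + 921600 * E4 τ ^ 6 * E6 τ * Dl τ * B3 τ z ^ 2
      - 1717632 * E4 τ ^ 6 * E6 τ * Dl τ * A1 τ z * A2 τ z * A3 τ z
      - 362880 * (4 * E4 τ ^ 7 + 11 * E4 τ ^ 4 * E6 τ ^ 2) * Dl τ * A1 τ z * B2 τ z * A3 τ z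
      + 483840 * (4 * E4 τ ^ 7 - 9 * E4 τ ^ 4 * E6 τ ^ 2) * Dl τ * A1 τ z * A2 τ z * B3 τ z
      - 11404800 * E4 τ ^ 5 * E6 τ * Dl τ * A1 τ z * B2 τ z * B3 τ z
      + 1161216 * E4 τ ^ 5 * E6 τ * Dl τ * A1 τ z ^ 3 * A3 τ z
      - 92160 * (37 * E4 τ ^ 6 - 9 * E4 τ ^ 3 * E6 τ ^ 2) * Dl τ * A1 τ z ^ 3 * B3 τ z
      + (135 * E4 τ ^ 9 * E6 τ + 54 * E4 τ ^ 6 * E6 τ ^ 3) * A2 τ z ^ 3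
      + (405 * E4 τ ^ 10 + 540 * E4 τ ^ 7 * E6 τ ^ 2) * A2 τ z ^ 2 * B2 τ z
      + 1575 * E4 τ ^ 8 * E6 τ * A2 τ z * B2 τ z ^ 2
      + (375 * E4 τ ^ 9 + 500 * E4 τ ^ 6 * E6 τ ^ 2) * B2 τ z ^ 3
      + (-3159 * E4 τ ^ 8 * E6 τ + 1701 * E4 τ ^ 5 * E6 τ ^ 3) * A1 τ z ^ 2 * A2 τ z ^ 2
      + (-3060 * E4 τ ^ 9 - 1800 * E4 τ ^ 6 * E6 τ ^ 2) * A1 τ z ^ 2 * A2 τ z * B2 τ z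
      + (6975 * E4 τ ^ 7 * E6 τ - 11025 * E4 τ ^ 4 * E6 τ ^ 3) * A1 τ z ^ 2 * B2 τ z ^ 2
      + (6768 * E4 τ ^ 7 * E6 τ - 3024 * E4 τ ^ 4 * E6 τ ^ 3) * A1 τ z ^ 4 * A2 τ z
      + (4260 * E4 τ ^ 8 + 1800 * E4 τ ^ 5 * E6 τ ^ 2 + 180 * E4 τ ^ 2 * E6 τ ^ 4) * A1 τ z ^ 4 * B2 τ z
      + (-3692 * E4 τ ^ 6 * E6 τ + 504 * E4 τ ^ 3 * E6 τ ^ 3 - 12 * E6 τ ^ 5) * A1 τ z ^ 6)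

/-- The Seiberg–Witten coefficients a_0, …, a_4 (a_1 = 0). -/
def aSW : ℕ → ℂ → (Fin 8 → ℂ) → ℂ
  | 0 => a0f
  | 2 => a2f
  | 3 => a3f
  | 4 => a4f
  | _ => fun _ _ => 0

/-- The Seiberg–Witten coefficients b_0, …, b_6. -/
def bSW : ℕ → ℂ → (Fin 8 → ℂ) → ℂ
  | 0 => b0f
  | 1 => b1f
  | 2 => b2f
  | 3 => b3f
  | 4 => b4f
  | 5 => b5f
  | 6 => b6f
  | _ => fun _ _ => 0

/-- The translation parameter −b₁/(6b₀). -/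
def uShift (τ : ℂ) (z : Fin 8 → ℂ) : ℂ := -(bSW 1 τ z) / (6 * bSW 0 τ z)

/-- The coefficients c_i. -/
def cSW (i : ℕ) (τ : ℂ) (z : Fin 8 → ℂ) : ℂ :=
  ∑ j ∈ Finset.range (i+1), aSW j τ z * (Nat.choose (4-j) (4-i) : ℂ) * uShift τ z ^ (i-j)

/-- The coefficients d_j. -/
def dSW (j : ℕ) (τ : ℂ) (z : Fin 8 → ℂ) : ℂ :=
  ∑ l ∈ Finset.range (j+1), bSW l τ z * (Nat.choose (6-l) (6-j) : ℂ) * uShift τ z ^ (j-l)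

/-- Points of the upper half-plane avoiding the zeros of E4, E6 and Δ
(where all the meromorphic Jacobi forms above are defined). -/
def GoodTau (τ : ℂ) : Prop := 0 < τ.im ∧ E4 τ ≠ 0 ∧ E6 τ ≠ 0 ∧ Dl τ ≠ 0

/-- The eleven generators a_0, a_2, a_3, a_4, b_0, …, b_6 of R. -/
def abGens : Fin 11 → ℂ → (Fin 8 → ℂ) → ℂ :=
  ![aSW 0, aSW 2, aSW 3, aSW 4, bSW 0, bSW 1, bSW 2, bSW 3, bSW 4, bSW 5, bSW 6]

/-- The eleven generators c_0, …, c_4, d_0, d_2, …, d_6 of R̃. -/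
def cdGens : Fin 11 → ℂ → (Fin 8 → ℂ) → ℂ :=
  ![cSW 0, cSW 1, cSW 2, cSW 3, cSW 4, dSW 0, dSW 2, dSW 3, dSW 4, dSW 5, dSW 6]

/-- Membership in the polynomial ring R = ℂ[a_0,a_2,a_3,a_4,b_0,…,b_6]
(as meromorphic functions on ℍ × ℂ^8). -/
def MemR (φ : ℂ → (Fin 8 → ℂ) → ℂ) : Prop :=
  ∃ P : MvPolynomial (Fin 11) ℂ, ∀ τ : ℂ, GoodTau τ → ∀ z,
    φ τ z = MvPolynomial.eval (fun i => abGens i τ z) P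

/-- Membership in the polynomial ring R̃ = ℂ[c_0,…,c_4,d_0,d_2,…,d_6]
(as meromorphic functions on ℍ × ℂ^8). -/
def MemRt (φ : ℂ → (Fin 8 → ℂ) → ℂ) : Prop :=
  ∃ P : MvPolynomial (Fin 11) ℂ, ∀ τ : ℂ, GoodTau τ → ∀ z,
    φ τ z = MvPolynomial.eval (fun i => cdGens i τ z) P

/- Invariant theory of binary forms. -/

/-- `BinTrans n T α α'` says that `α'` is the coefficient family of the degree-`n`
binary form with coefficients `α` transformed by `T ∈ SL2(ℂ)`. -/
def BinTrans (n : ℕ) (T : Matrix (Fin 2) (Fin 2) ℂ) (α α' : ℕ → ℂ) : Prop :=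
  ∀ u v : ℂ,
    ∑ j ∈ Finset.range (n+1), α' j * u ^ (n - j) * v ^ j
      = ∑ i ∈ Finset.range (n+1), α i * (T 0 0 * u + T 0 1 * v) ^ (n - i) *
          (T 1 0 * u + T 1 1 * v) ^ i

/-- Variables for polynomials in the coefficients of a binary quartic and sextic. -/
abbrev SV := Fin 5 ⊕ Fin 7

/-- Evaluation of a polynomial in the coefficients of the quartic and sextic. -/
def evalSV (Φ : MvPolynomial SV ℂ) (α β : ℕ → ℂ) : ℂ :=
  MvPolynomial.eval (Sum.elim (fun i : Fin 5 => α i.1) (fun j : Fin 7 => β j.1)) Φ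

/-- Membership in the ring of joint semiinvariants ℂ[V4 ⊕ V6]^{U2(ℂ)}. -/
def IsSemiinvRingElem (Φ : MvPolynomial SV ℂ) : Prop :=
  ∀ κ : ℂ, ∀ α α' β β' : ℕ → ℂ,
    BinTrans 4 !![1, κ; 0, 1] α α' → BinTrans 6 !![1, κ; 0, 1] β β' →
      evalSV Φ α' β' = evalSV Φ α β

/-- Membership in the ring of joint invariants ℂ[V4 ⊕ V6]^{SL2(ℂ)}. -/
def IsInvRingElem (Φ : MvPolynomial SV ℂ) : Prop :=
  ∀ T : Matrix (Fin 2) (Fin 2) ℂ, T.det = 1 → ∀ α α' β β' : ℕ → ℂ,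
    BinTrans 4 T α α' → BinTrans 6 T β β' → evalSV Φ α' β' = evalSV Φ α β

/-- Variables for joint covariants: coefficients of the two forms together with (u,v). -/
abbrev CVV := (Fin 5 ⊕ Fin 7) ⊕ Fin 2

/-- Evaluation of a polynomial in the coefficients and (u,v). -/
def evalCov (Ψ : MvPolynomial CVV ℂ) (α β : ℕ → ℂ) (u v : ℂ) : ℂ :=
  MvPolynomial.eval
    (Sum.elim (Sum.elim (fun i : Fin 5 => α i.1) (fun j : Fin 7 => β j.1))
      (fun p : Fin 2 => if p = 0 then u else v)) Ψ

/-- Membership in the ring of joint covariants ℂ[V4 ⊕ V6 ⊕ ℂ²]^{SL2(ℂ)}. -/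
def IsCovRingElem (Ψ : MvPolynomial CVV ℂ) : Prop :=
  ∀ T : Matrix (Fin 2) (Fin 2) ℂ, T.det = 1 → ∀ α α' β β' : ℕ → ℂ,
    BinTrans 4 T α α' → BinTrans 6 T β β' → ∀ u v : ℂ,
      evalCov Ψ α' β' u v = evalCov Ψ α β (T 0 0 * u + T 0 1 * v) (T 1 0 * u + T 1 1 * v)

/-- â_i in ℂ[α, β, α₀⁻¹]. -/
def ahat (α : ℕ → ℂ) (i : ℕ) : ℂ :=
  ∑ j ∈ Finset.range (i+1), α j * (Nat.choose (4-j) (4-i) : ℂ) * (-(α 1)/(4 * α 0)) ^ (i-j)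

/-- b̂_i in ℂ[α, β, α₀⁻¹]. -/
def bhat (α β : ℕ → ℂ) (i : ℕ) : ℂ :=
  ∑ j ∈ Finset.range (i+1), β j * (Nat.choose (6-j) (6-i) : ℂ) * (-(α 1)/(4 * α 0)) ^ (i-j)

/-- ĉ_i in ℂ[α, β, β₀⁻¹]. -/
def chat (α β : ℕ → ℂ) (i : ℕ) : ℂ :=
  ∑ j ∈ Finset.range (i+1), α j * (Nat.choose (4-j) (4-i) : ℂ) * (-(β 1)/(6 * β 0)) ^ (i-j)

/-- d̂_i in ℂ[α, β, β₀⁻¹]. -/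
def dhat (β : ℕ → ℂ) (i : ℕ) : ℂ :=
  ∑ j ∈ Finset.range (i+1), β j * (Nat.choose (6-j) (6-i) : ℂ) * (-(β 1)/(6 * β 0)) ^ (i-j)

/-- The images of the eleven generators of R under ψ. -/
def hatGens (α β : ℕ → ℂ) : Fin 11 → ℂ :=
  ![ahat α 0, ahat α 2, ahat α 3, ahat α 4, bhat α β 0, bhat α β 1, bhat α β 2,
    bhat α β 3, bhat α β 4, bhat α β 5, bhat α β 6]

/-- The images of the eleven generators of R̃ under ψ̃. -/
def cdhatGens (α β : ℕ → ℂ) : Fin 11 → ℂ :=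
  ![chat α β 0, chat α β 1, chat α β 2, chat α β 3, chat α β 4, dhat β 0, dhat β 2,
    dhat β 3, dhat β 4, dhat β 5, dhat β 6]

/-- Weights picking out the a-variables among the eleven generators. -/
def wA : Fin 11 → ℕ := ![1, 1, 1, 1, 0, 0, 0, 0, 0, 0, 0]

/-- Weights picking out the b-variables among the eleven generators. -/
def wB : Fin 11 → ℕ := ![0, 0, 0, 0, 1, 1, 1, 1, 1, 1, 1]

/-- Weights picking out the α-variables. -/
def wSVα : SV → ℕ := Sum.elim (fun _ => 1) (fun _ => 0)

/-- Weights picking out the β-variables. -/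
def wSVβ : SV → ℕ := Sum.elim (fun _ => 0) (fun _ => 1)

/-- A joint semiinvariant of the quartic and sextic, of degrees (da, db) and order ω. -/
def IsSemiinvOf (Φ : MvPolynomial SV ℂ) (da db : ℕ) (ω : ℤ) : Prop :=
  MvPolynomial.IsWeightedHomogeneous wSVα Φ da ∧
  MvPolynomial.IsWeightedHomogeneous wSVβ Φ db ∧
  IsSemiinvRingElem Φ ∧
  ∀ l : ℂ, l ≠ 0 → ∀ α α' β β' : ℕ → ℂ,
    BinTrans 4 !![l, 0; 0, l⁻¹] α α' → BinTrans 6 !![l, 0; 0, l⁻¹] β β' →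
      evalSV Φ α' β' = l ^ ω * evalSV Φ α β

/-- Substitution α_i ↦ a_i (with a_1 = 0), β_j ↦ b_j into a polynomial in (α, β). -/
def subAB (Φ : MvPolynomial SV ℂ) : ℂ → (Fin 8 → ℂ) → ℂ :=
  fun τ z => MvPolynomial.eval
    (Sum.elim (fun i : Fin 5 => aSW i.1 τ z) (fun j : Fin 7 => bSW j.1 τ z)) Φ

/-- The graph of the map ψ_J : a Jacobi form φ = Q(a_i, b_j) is sent to the
polynomial Φ = Q(â_i, b̂_j). -/
def PsiJRel (φ : ℂ → (Fin 8 → ℂ) → ℂ) (Φ : MvPolynomial SV ℂ) : Prop :=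
  ∃ Q : MvPolynomial (Fin 11) ℂ,
    (∀ τ : ℂ, GoodTau τ → ∀ z, φ τ z = MvPolynomial.eval (fun i => abGens i τ z) Q) ∧
    (∀ α β : ℕ → ℂ, α 0 ≠ 0 → evalSV Φ α β = MvPolynomial.eval (hatGens α β) Q)

/-! ### Clearing denominators -/

/-- A function on affine space that becomes polynomial after multiplication by a power of `d`. -/
def IsCleared {σ : Type*} (d : MvPolynomial σ ℂ) (f : (σ → ℂ) → ℂ) : Prop :=
  ∃ (N : ℕ) (P : MvPolynomial σ ℂ), ∀ v, MvPolynomial.eval v d ≠ 0 →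
    MvPolynomial.eval v d ^ N * f v = MvPolynomial.eval v P

namespace IsCleared

variable {σ : Type*} {d : MvPolynomial σ ℂ} {f g : (σ → ℂ) → ℂ}

theorem const (c : ℂ) : IsCleared d (fun _ => c) := ⟨0, MvPolynomial.C c, fun v _ => by simp⟩

theorem coord (i : σ) : IsCleared d (fun v => v i) := ⟨0, MvPolynomial.X i, fun v _ => by simp⟩

theorem add (hf : IsCleared d f) (hg : IsCleared d g) : IsCleared d (fun v => f v + g v) := by
  obtain ⟨N, P, hP⟩ := hf
  obtain ⟨M, R, hR⟩ := hg
  refine ⟨N + M, d ^ M * P + d ^ N * R, fun v hv => ?_⟩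
  simp only [map_add, map_mul, map_pow, ← hP v hv, ← hR v hv]
  ring

theorem mul (hf : IsCleared d f) (hg : IsCleared d g) : IsCleared d (fun v => f v * g v) := by
  obtain ⟨N, P, hP⟩ := hf
  obtain ⟨M, R, hR⟩ := hg
  refine ⟨N + M, P * R, fun v hv => ?_⟩
  simp only [map_mul, ← hP v hv, ← hR v hv]
  ring

theorem pow (hf : IsCleared d f) (n : ℕ) : IsCleared d (fun v => f v ^ n) := by
  induction n with
  | zero => simpa using const 1
  | succ n ih => simpa only [pow_succ] using ih.mul hf

theorem sum {ι : Type*} (s : Finset ι) {F : ι → (σ → ℂ) → ℂ} (h : ∀ i ∈ s, IsCleared d (F i)) :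
    IsCleared d (fun v => ∑ i ∈ s, F i v) := by
  classical
  induction s using Finset.induction_on with
  | empty => simpa using const 0
  | insert a s ha ih =>
    simp only [Finset.sum_insert ha]
    exact (h a (Finset.mem_insert_self a s)).add
      (ih fun i hi => h i (Finset.mem_insert_of_mem hi))

theorem div_denom (hf : IsCleared d f) {c : ℂ} (hc : c ≠ 0) :
    IsCleared d (fun v => f v / (c * MvPolynomial.eval v d)) := by
  obtain ⟨N, P, hP⟩ := hf
  refine ⟨N + 1, MvPolynomial.C c⁻¹ * P, fun v hv => ?_⟩
  simp only [map_mul, MvPolynomial.eval_C, ← hP v hv, pow_succ]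
  field_simp

theorem eval_gens {ι : Type*} {G : (σ → ℂ) → ι → ℂ} (hG : ∀ i, IsCleared d (fun v => G v i))
    (Q : MvPolynomial ι ℂ) : IsCleared d (fun v => MvPolynomial.eval (G v) Q) := by
  induction Q using MvPolynomial.induction_on with
  | C a => simpa using const a
  | add p q hp hq => simpa using hp.add hq
  | mul_X p i hp => simpa using hp.mul (hG i)

end IsCleared

/-- Two polynomials over `ℂ` that agree where a fixed nonzero polynomial does not vanish are
equal. -/
theorem eq_of_eval_eq_of_ne {σ : Type*} {d : MvPolynomial σ ℂ} (hd : d ≠ 0)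
    {P R : MvPolynomial σ ℂ}
    (h : ∀ v, MvPolynomial.eval v d ≠ 0 → MvPolynomial.eval v P = MvPolynomial.eval v R) :
    P = R := by
  have : d * P = d * R := by
    refine MvPolynomial.funext fun v => ?_
    by_cases hv : MvPolynomial.eval v d = 0
    · simp [hv]
    · simp [h v hv]
  exact mul_left_cancel₀ hd this

/-! ### Coefficient families of the quartic and the sextic -/

/-- The quartic coefficients of a point of `SV → ℂ`, extended by zero. -/
def svα (v : SV → ℂ) (i : ℕ) : ℂ := if h : i < 5 then v (Sum.inl ⟨i, h⟩) else 0

/-- The sextic coefficients of a point of `SV → ℂ`, extended by zero. -/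
def svβ (v : SV → ℂ) (i : ℕ) : ℂ := if h : i < 7 then v (Sum.inr ⟨i, h⟩) else 0

/-- The point of `SV → ℂ` attached to two coefficient families. -/
def svPoint (α β : ℕ → ℂ) : SV → ℂ :=
  Sum.elim (fun i : Fin 5 => α i.1) (fun j : Fin 7 => β j.1)

/-- The coefficients of a degree-`n` polynomial after translating its variable by `s`. -/
def translate (n : ℕ) (α : ℕ → ℂ) (s : ℂ) (i : ℕ) : ℂ :=
  ∑ j ∈ Finset.range (i + 1), α j * (Nat.choose (n - j) (n - i) : ℂ) * s ^ (i - j)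

theorem translate_congr {n : ℕ} {α α' : ℕ → ℂ} (h : ∀ i ≤ n, α i = α' i) (s : ℂ) {k : ℕ}
    (hk : k ≤ n) : translate n α s k = translate n α' s k :=
  Finset.sum_congr rfl fun j hj => by
    rw [h j (by have := Finset.mem_range.1 hj; omega)]

theorem hatGens_congr {α α' β β' : ℕ → ℂ} (hα : ∀ i ≤ 4, α i = α' i)
    (hβ : ∀ i ≤ 6, β i = β' i) : hatGens α β = hatGens α' β' := by
  have ha (k : ℕ) (hk : k ≤ 4) : ahat α k = ahat α' k := by
    change translate 4 α (-(α 1) / (4 * α 0)) k = translate 4 α' (-(α' 1) / (4 * α' 0)) k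
    rw [translate_congr hα _ hk, hα 0 (by norm_num), hα 1 (by norm_num)]
  have hb (k : ℕ) (hk : k ≤ 6) : bhat α β k = bhat α' β' k := by
    change translate 6 β (-(α 1) / (4 * α 0)) k = translate 6 β' (-(α' 1) / (4 * α' 0)) k
    rw [translate_congr hβ _ hk, hα 0 (by norm_num), hα 1 (by norm_num)]
  simp only [hatGens, ha 0 (by norm_num), ha 2 (by norm_num), ha 3 (by norm_num),
    ha 4 (by norm_num), hb 0 (by norm_num), hb 1 (by norm_num), hb 2 (by norm_num),
    hb 3 (by norm_num), hb 4 (by norm_num), hb 5 (by norm_num), hb 6 (by norm_num)]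

theorem cdhatGens_congr {α α' β β' : ℕ → ℂ} (hα : ∀ i ≤ 4, α i = α' i)
    (hβ : ∀ i ≤ 6, β i = β' i) : cdhatGens α β = cdhatGens α' β' := by
  have hc (k : ℕ) (hk : k ≤ 4) : chat α β k = chat α' β' k := by
    change translate 4 α (-(β 1) / (6 * β 0)) k = translate 4 α' (-(β' 1) / (6 * β' 0)) k
    rw [translate_congr hα _ hk, hβ 0 (by norm_num), hβ 1 (by norm_num)]
  have hd (k : ℕ) (hk : k ≤ 6) : dhat β k = dhat β' k := by
    change translate 6 β (-(β 1) / (6 * β 0)) k = translate 6 β' (-(β' 1) / (6 * β' 0)) k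
    rw [translate_congr hβ _ hk, hβ 0 (by norm_num), hβ 1 (by norm_num)]
  simp only [cdhatGens, hc 0 (by norm_num), hc 1 (by norm_num), hc 2 (by norm_num),
    hc 3 (by norm_num), hc 4 (by norm_num), hd 0 (by norm_num), hd 2 (by norm_num),
    hd 3 (by norm_num), hd 4 (by norm_num), hd 5 (by norm_num), hd 6 (by norm_num)]

theorem svα_svPoint (α β : ℕ → ℂ) : ∀ i ≤ 4, svα (svPoint α β) i = α i := fun i hi => by
  simp [svα, svPoint, Nat.lt_succ_of_le hi]

theorem svβ_svPoint (α β : ℕ → ℂ) : ∀ i ≤ 6, svβ (svPoint α β) i = β i := fun i hi => by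
  simp [svβ, svPoint, Nat.lt_succ_of_le hi]

theorem hatGens_svPoint (α β : ℕ → ℂ) :
    hatGens (svα (svPoint α β)) (svβ (svPoint α β)) = hatGens α β :=
  hatGens_congr (svα_svPoint α β) (svβ_svPoint α β)

theorem cdhatGens_svPoint (α β : ℕ → ℂ) :
    cdhatGens (svα (svPoint α β)) (svβ (svPoint α β)) = cdhatGens α β :=
  cdhatGens_congr (svα_svPoint α β) (svβ_svPoint α β)

theorem isCleared_svα (d : MvPolynomial SV ℂ) (i : ℕ) : IsCleared d (fun v => svα v i) := by
  unfold svα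
  split
  · exact .coord _
  · exact .const 0

theorem isCleared_svβ (d : MvPolynomial SV ℂ) (i : ℕ) : IsCleared d (fun v => svβ v i) := by
  unfold svβ
  split
  · exact .coord _
  · exact .const 0

theorem isCleared_shift_α :
    IsCleared (MvPolynomial.X (Sum.inl 0) : MvPolynomial SV ℂ)
      (fun v => -(svα v 1) / (4 * svα v 0)) := by
  have := ((isCleared_svα (MvPolynomial.X (Sum.inl 0)) 1).mul (.const (-1))).div_denom
    (c := 4) (by norm_num)
  simpa [svα] using this

theorem isCleared_shift_β :
    IsCleared (MvPolynomial.X (Sum.inr 0) : MvPolynomial SV ℂ)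
      (fun v => -(svβ v 1) / (6 * svβ v 0)) := by
  have := ((isCleared_svβ (MvPolynomial.X (Sum.inr 0)) 1).mul (.const (-1))).div_denom
    (c := 6) (by norm_num)
  simpa [svβ] using this

theorem isCleared_hatGens (i : Fin 11) :
    IsCleared (MvPolynomial.X (Sum.inl 0) : MvPolynomial SV ℂ)
      (fun v => hatGens (svα v) (svβ v) i) := by
  have ha (k : ℕ) : IsCleared (MvPolynomial.X (Sum.inl 0) : MvPolynomial SV ℂ)
      (fun v => ahat (svα v) k) :=
    .sum _ fun j _ => ((isCleared_svα _ j).mul (.const _)).mul (isCleared_shift_α.pow _)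
  have hb (k : ℕ) : IsCleared (MvPolynomial.X (Sum.inl 0) : MvPolynomial SV ℂ)
      (fun v => bhat (svα v) (svβ v) k) :=
    .sum _ fun j _ => ((isCleared_svβ _ j).mul (.const _)).mul (isCleared_shift_α.pow _)
  fin_cases i
  exacts [ha 0, ha 2, ha 3, ha 4, hb 0, hb 1, hb 2, hb 3, hb 4, hb 5, hb 6]

theorem isCleared_cdhatGens (i : Fin 11) :
    IsCleared (MvPolynomial.X (Sum.inr 0) : MvPolynomial SV ℂ)
      (fun v => cdhatGens (svα v) (svβ v) i) := by
  have hc (k : ℕ) : IsCleared (MvPolynomial.X (Sum.inr 0) : MvPolynomial SV ℂ)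
      (fun v => chat (svα v) (svβ v) k) :=
    .sum _ fun j _ => ((isCleared_svα _ j).mul (.const _)).mul (isCleared_shift_β.pow _)
  have hd (k : ℕ) : IsCleared (MvPolynomial.X (Sum.inr 0) : MvPolynomial SV ℂ)
      (fun v => dhat (svβ v) k) :=
    .sum _ fun j _ => ((isCleared_svβ _ j).mul (.const _)).mul (isCleared_shift_β.pow _)
  fin_cases i
  exacts [hc 0, hc 1, hc 2, hc 3, hc 4, hd 0, hd 2, hd 3, hd 4, hd 5, hd 6]

/-! ### Sections of the two normalisations -/

/-- The quartic coefficients with vanishing `α 1` read off from eleven values. -/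
def abα (x : Fin 11 → ℂ) : ℕ → ℂ
  | 0 => x 0
  | 2 => x 1
  | 3 => x 2
  | 4 => x 3
  | _ => 0

/-- The sextic coefficients read off from the last seven of eleven values. -/
def abβ (x : Fin 11 → ℂ) : ℕ → ℂ
  | 0 => x 4
  | 1 => x 5
  | 2 => x 6
  | 3 => x 7
  | 4 => x 8
  | 5 => x 9
  | 6 => x 10
  | _ => 0

/-- The quartic coefficients read off from the first five of eleven values. -/
def cdα (x : Fin 11 → ℂ) : ℕ → ℂ
  | 0 => x 0
  | 1 => x 1
  | 2 => x 2
  | 3 => x 3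
  | 4 => x 4
  | _ => 0

/-- The sextic coefficients with vanishing `β 1` read off from eleven values. -/
def cdβ (x : Fin 11 → ℂ) : ℕ → ℂ
  | 0 => x 5
  | 2 => x 6
  | 3 => x 7
  | 4 => x 8
  | 5 => x 9
  | 6 => x 10
  | _ => 0

theorem hatGens_of_α_one {α : ℕ → ℂ} (h : α 1 = 0) (β : ℕ → ℂ) :
    hatGens α β = ![α 0, α 2, α 3, α 4, β 0, β 1, β 2, β 3, β 4, β 5, β 6] := by
  simp [hatGens, ahat, bhat, Finset.sum_range_succ, h]

theorem cdhatGens_of_β_one (α : ℕ → ℂ) {β : ℕ → ℂ} (h : β 1 = 0) :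
    cdhatGens α β = ![α 0, α 1, α 2, α 3, α 4, β 0, β 2, β 3, β 4, β 5, β 6] := by
  simp [cdhatGens, chat, dhat, Finset.sum_range_succ, h]

theorem hatGens_section (x : Fin 11 → ℂ) : hatGens (abα x) (abβ x) = x := by
  rw [hatGens_of_α_one rfl]
  funext i
  fin_cases i <;> rfl

theorem cdhatGens_section (x : Fin 11 → ℂ) : cdhatGens (cdα x) (cdβ x) = x := by
  rw [cdhatGens_of_β_one _ rfl]
  funext i
  fin_cases i <;> rfl

theorem hatGens_injective (Q Q' : MvPolynomial (Fin 11) ℂ)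
    (h : ∀ α β : ℕ → ℂ, α 0 ≠ 0 →
      MvPolynomial.eval (hatGens α β) Q = MvPolynomial.eval (hatGens α β) Q') : Q = Q' := by
  refine eq_of_eval_eq_of_ne (d := MvPolynomial.X 0) (MvPolynomial.X_ne_zero _) fun v hv => ?_
  have := h (abα v) (abβ v) (by simpa [abα] using hv)
  rwa [hatGens_section] at this

theorem cdhatGens_injective (Q Q' : MvPolynomial (Fin 11) ℂ)
    (h : ∀ α β : ℕ → ℂ, β 0 ≠ 0 →
      MvPolynomial.eval (cdhatGens α β) Q = MvPolynomial.eval (cdhatGens α β) Q') : Q = Q' := by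
  refine eq_of_eval_eq_of_ne (d := MvPolynomial.X 5) (MvPolynomial.X_ne_zero _) fun v hv => ?_
  have := h (cdα v) (cdβ v) (by simpa [cdβ] using hv)
  rwa [cdhatGens_section] at this

theorem hatGens_SW (τ : ℂ) (z : Fin 8 → ℂ) :
    hatGens (fun i => aSW i τ z) (fun j => bSW j τ z) = fun i => abGens i τ z := by
  rw [hatGens_of_α_one rfl]
  funext i
  fin_cases i <;> rfl

theorem GoodTau.b0_ne_zero {τ : ℂ} (h : GoodTau τ) (z : Fin 8 → ℂ) : bSW 0 τ z ≠ 0 :=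
  div_ne_zero h.2.2.1 (by norm_num)

theorem dSW_one {τ : ℂ} (h : GoodTau τ) (z : Fin 8 → ℂ) : dSW 1 τ z = 0 := by
  have := h.b0_ne_zero z
  simp only [dSW, uShift, Finset.sum_range_succ, Finset.range_zero, Finset.sum_empty]
  norm_num [Nat.choose]
  field_simp
  ring

theorem cdhatGens_SW {τ : ℂ} (h : GoodTau τ) (z : Fin 8 → ℂ) :
    cdhatGens (fun i => cSW i τ z) (fun j => dSW j τ z) = fun i => cdGens i τ z := by
  rw [cdhatGens_of_β_one _ (dSW_one h z)]
  funext i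
  fin_cases i <;> rfl

theorem cdGens_eq_cdhatGens (τ : ℂ) (z : Fin 8 → ℂ) :
    (fun i => cdGens i τ z) = cdhatGens (fun i => aSW i τ z) (fun j => bSW j τ z) := by
  funext i
  fin_cases i <;> rfl

theorem translate_translate (n : ℕ) (α : ℕ → ℂ) (s r : ℂ) {i : ℕ} (hi : i ≤ n) :
    translate n (translate n α s) r i = translate n α (s + r) i := by
  have swap : translate n (translate n α s) r i = ∑ k ∈ Finset.range (i + 1),
      ∑ j ∈ Finset.Ico k (i + 1), α k * (Nat.choose (n - k) (n - j) : ℂ) * s ^ (j - k) *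
        (Nat.choose (n - j) (n - i) : ℂ) * r ^ (i - j) := by
    simp only [translate, Finset.sum_mul, Finset.range_eq_Ico]
    exact Finset.sum_sigma' _ _ _ |>.trans <| (Finset.sum_bij'
      (fun x _ => ⟨x.2, x.1⟩) (fun x _ => ⟨x.2, x.1⟩)
      (by simp; omega) (by simp; omega) (by simp) (by simp) (by simp)).trans
      (Finset.sum_sigma' _ _ _).symm
  rw [swap]
  refine Finset.sum_congr rfl fun k hk => ?_
  have hk' : k ≤ i := Nat.lt_succ_iff.1 (Finset.mem_range.1 hk)
  rw [add_pow, Finset.mul_sum, Finset.sum_Ico_eq_sum_range, Nat.succ_sub hk']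
  refine Finset.sum_congr rfl fun m hm => ?_
  have hm' : m ≤ i - k := Nat.lt_succ_iff.1 (Finset.mem_range.1 hm)
  have e := Nat.choose_mul (n := n - k) (k := n - (k + m)) (s := n - i) (by omega)
  have e2 : n - k - (n - i) = i - k := by omega
  have e3 : n - (k + m) - (n - i) = i - k - m := by omega
  rw [e2, e3, Nat.choose_symm hm'] at e
  have e' : (Nat.choose (n - k) (n - (k + m)) : ℂ) * Nat.choose (n - (k + m)) (n - i) =
      Nat.choose (n - k) (n - i) * Nat.choose (i - k) m := by exact_mod_cast e
  rw [Nat.add_sub_cancel_left, Nat.sub_add_eq i k m]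
  linear_combination α k * s ^ m * r ^ (i - k - m) * e'

/-- Normalising by the quartic first does not change the normalisation by the sextic. -/
theorem cdhatGens_hatGens {α β : ℕ → ℂ} (hα : α 0 ≠ 0) (hβ : β 0 ≠ 0) :
    cdhatGens (abα (hatGens α β)) (abβ (hatGens α β)) = cdhatGens α β := by
  obtain ⟨s, hs⟩ : ∃ s, s = -(α 1) / (4 * α 0) := ⟨_, rfl⟩
  obtain ⟨t, ht⟩ : ∃ t, t = -(β 1) / (6 * β 0) := ⟨_, rfl⟩
  have h4 : ∀ i ≤ 4, abα (hatGens α β) i = translate 4 α s i := by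
    intro i hi
    interval_cases i
    · rw [hs]; rfl
    · rw [hs]
      simp only [translate, Finset.sum_range_succ]
      norm_num [abα]
      field_simp
      ring
    · rw [hs]; rfl
    · rw [hs]; rfl
    · rw [hs]; rfl
  have h6 : ∀ i ≤ 6, abβ (hatGens α β) i = translate 6 β s i := by
    intro i hi
    interval_cases i <;> rw [hs] <;> rfl
  rw [cdhatGens_congr h4 h6]
  have hst : -(translate 6 β s 1) / (6 * translate 6 β s 0) = t - s := by
    rw [ht]
    simp only [translate, Finset.sum_range_succ]
    norm_num
    field_simp
    ring
  have hc (k : ℕ) (hk : k ≤ 4) :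
      chat (translate 4 α s) (translate 6 β s) k = chat α β k := by
    change translate 4 (translate 4 α s) (-(translate 6 β s 1) / (6 * translate 6 β s 0)) k =
      translate 4 α (-(β 1) / (6 * β 0)) k
    rw [hst, translate_translate 4 α s _ hk, ← ht, add_sub_cancel]
  have hd (k : ℕ) (hk : k ≤ 6) : dhat (translate 6 β s) k = dhat β k := by
    change translate 6 (translate 6 β s) (-(translate 6 β s 1) / (6 * translate 6 β s 0)) k =
      translate 6 β (-(β 1) / (6 * β 0)) k
    rw [hst, translate_translate 6 β s _ hk, ← ht, add_sub_cancel]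
  simp only [cdhatGens, hc 0 (by norm_num), hc 1 (by norm_num), hc 2 (by norm_num),
    hc 3 (by norm_num), hc 4 (by norm_num), hd 0 (by norm_num), hd 2 (by norm_num),
    hd 3 (by norm_num), hd 4 (by norm_num), hd 5 (by norm_num), hd 6 (by norm_num)]

/-- Algebraic independence of the `a_i, b_j` implies that the two substitutions agree on the
intersection of the two rings and that the common image is polynomial. -/
theorem substitutions_agree_of_independent
    (hind : ∀ P : MvPolynomial (Fin 11) ℂ,
      (∀ τ, GoodTau τ → ∀ z, MvPolynomial.eval (fun i => abGens i τ z) P = 0) → P = 0)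
    (Q Q' : MvPolynomial (Fin 11) ℂ)
    (h : ∀ τ : ℂ, GoodTau τ → ∀ z, MvPolynomial.eval (fun i => abGens i τ z) Q =
      MvPolynomial.eval (fun i => cdGens i τ z) Q') :
    (∀ α β : ℕ → ℂ, α 0 ≠ 0 → β 0 ≠ 0 →
      MvPolynomial.eval (hatGens α β) Q = MvPolynomial.eval (cdhatGens α β) Q') ∧
    ∃ Φ : MvPolynomial SV ℂ, ∀ α β : ℕ → ℂ, α 0 ≠ 0 → β 0 ≠ 0 →
      evalSV Φ α β = MvPolynomial.eval (hatGens α β) Q := by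
  obtain ⟨N, P, hP⟩ := IsCleared.eval_gens isCleared_hatGens Q
  obtain ⟨M, P', hP'⟩ := IsCleared.eval_gens isCleared_cdhatGens Q'
  have hP1 (α β : ℕ → ℂ) (hα : α 0 ≠ 0) :
      α 0 ^ N * MvPolynomial.eval (hatGens α β) Q = MvPolynomial.eval (svPoint α β) P := by
    have := hP (svPoint α β) (by simpa [svPoint] using hα)
    simp only [hatGens_svPoint] at this
    simpa [svPoint] using this
  have hP2 (α β : ℕ → ℂ) (hβ : β 0 ≠ 0) :
      β 0 ^ M * MvPolynomial.eval (cdhatGens α β) Q' = MvPolynomial.eval (svPoint α β) P' := by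
    have := hP' (svPoint α β) (by simpa [svPoint] using hβ)
    simp only [cdhatGens_svPoint] at this
    simpa [svPoint] using this
  let sub : SV → MvPolynomial (Fin 11) ℂ :=
    Sum.elim ![MvPolynomial.X 0, 0, MvPolynomial.X 1, MvPolynomial.X 2, MvPolynomial.X 3]
      ![MvPolynomial.X 4, MvPolynomial.X 5, MvPolynomial.X 6, MvPolynomial.X 7, MvPolynomial.X 8,
        MvPolynomial.X 9, MvPolynomial.X 10]
  have hsub (x : Fin 11 → ℂ) : MvPolynomial.eval x (MvPolynomial.aeval sub P') =
      MvPolynomial.eval (svPoint (abα x) (abβ x)) P' := by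
    rw [MvPolynomial.aeval_eq_bind₁]
    refine (MvPolynomial.eval₂Hom_bind₁ (RingHom.id ℂ) x sub P').trans ?_
    refine congrArg (fun w => MvPolynomial.eval w P') (funext fun i => ?_)
    rcases i with i | i <;> fin_cases i <;> simp [sub, svPoint, abα, abβ]
  have key : (MvPolynomial.X 4) ^ M * Q = MvPolynomial.aeval sub P' := by
    rw [← sub_eq_zero]
    refine hind _ fun τ hτ z => ?_
    have hb := hP2 (abα fun i => abGens i τ z) (abβ fun i => abGens i τ z) (hτ.b0_ne_zero z)
    have hcd : cdhatGens (abα fun i => abGens i τ z) (abβ fun i => abGens i τ z) =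
        fun i => cdGens i τ z := by
      rw [cdGens_eq_cdhatGens]
      funext i
      fin_cases i <;> rfl
    rw [hcd, ← h τ hτ z] at hb
    rw [map_sub, map_mul, map_pow, MvPolynomial.eval_X, hsub, ← hb]
    exact sub_self _
  have key' (x : Fin 11 → ℂ) (hx : x 4 ≠ 0) :
      MvPolynomial.eval x Q = MvPolynomial.eval (cdhatGens (abα x) (abβ x)) Q' := by
    have h1 := congrArg (MvPolynomial.eval x) key
    rw [hsub, ← hP2 (abα x) (abβ x) hx, map_mul, map_pow, MvPolynomial.eval_X] at h1
    exact mul_left_cancel₀ (pow_ne_zero M hx) h1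
  have agree (α β : ℕ → ℂ) (hα : α 0 ≠ 0) (hβ : β 0 ≠ 0) :
      MvPolynomial.eval (hatGens α β) Q = MvPolynomial.eval (cdhatGens α β) Q' := by
    have hx : hatGens α β 4 ≠ 0 := by simpa [hatGens, bhat] using hβ
    rw [key' _ hx, cdhatGens_hatGens hα hβ]
  refine ⟨agree, ?_⟩
  have hpoly : (MvPolynomial.X (Sum.inr 0)) ^ M * P = (MvPolynomial.X (Sum.inl 0)) ^ N * P' := by
    refine eq_of_eval_eq_of_ne (d := MvPolynomial.X (Sum.inl 0) * MvPolynomial.X (Sum.inr 0))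
      (mul_ne_zero (MvPolynomial.X_ne_zero _) (MvPolynomial.X_ne_zero _)) fun v hv => ?_
    obtain ⟨h1, h2⟩ : v (Sum.inl 0) ≠ 0 ∧ v (Sum.inr 0) ≠ 0 := by simpa using hv
    have hv' : svPoint (svα v) (svβ v) = v := by
      funext i
      rcases i with i | i <;> simp [svPoint, svα, svβ]
    have e1 := hP1 (svα v) (svβ v) (by simpa [svα] using h1)
    have e2 := hP2 (svα v) (svβ v) (by simpa [svβ] using h2)
    rw [agree (svα v) (svβ v) (by simpa [svα] using h1) (by simpa [svβ] using h2)] at e1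
    rw [hv'] at e1 e2
    simp only [map_mul, map_pow, MvPolynomial.eval_X, ← e1, ← e2]
    simp [svα, svβ]
    ring
  have hprime : Prime (MvPolynomial.X (Sum.inl 0) : MvPolynomial SV ℂ) := MvPolynomial.X_prime
  have hdvd : (MvPolynomial.X (Sum.inl 0) : MvPolynomial SV ℂ) ^ N ∣ P := by
    refine hprime.pow_dvd_of_dvd_mul_left N (a := (MvPolynomial.X (Sum.inr 0)) ^ M) (fun hd => ?_)
      (Dvd.intro _ hpoly.symm)
    have := hprime.dvd_of_dvd_pow hd
    simp at this
  obtain ⟨Φ, hΦ⟩ := hdvd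
  refine ⟨Φ, fun α β hα hβ => ?_⟩
  have h1 := hP1 α β hα
  rw [hΦ, map_mul, map_pow, MvPolynomial.eval_X] at h1
  exact (mul_left_cancel₀ (pow_ne_zero N hα) h1).symm

/-! ### Operations on power series -/

section Series

variable {k l : Type*} [CommRing k] [CommRing l]

/-- The series of the coefficients whose degree is a multiple of `m`. -/
def sect (m : ℕ) (F : PowerSeries k) : PowerSeries k :=
  PowerSeries.mk fun n => PowerSeries.coeff (m * n) F

/-- The substitution `X ↦ X ^ b`. -/
def dilate (b : ℕ) (F : PowerSeries k) : PowerSeries k :=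
  PowerSeries.mk fun n => if b ∣ n then PowerSeries.coeff (n / b) F else 0

/-- The series `∑ r, d r * X ^ g r`, for `g` with `r ≤ g r`. -/
def sparse (g : ℕ → ℕ) (d : ℕ → k) : PowerSeries k :=
  PowerSeries.mk fun n => ∑ r ∈ Finset.range (n + 1), if g r = n then d r else 0

theorem map_sect (φ : k →+* l) (m : ℕ) (F : PowerSeries k) :
    PowerSeries.map φ (sect m F) = sect m (PowerSeries.map φ F) := by
  ext n; simp [sect]

theorem map_dilate (φ : k →+* l) (b : ℕ) (F : PowerSeries k) :
    PowerSeries.map φ (dilate b F) = dilate b (PowerSeries.map φ F) := by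
  ext n
  simp only [dilate, PowerSeries.coeff_map, PowerSeries.coeff_mk]
  split <;> simp

theorem map_sparse (φ : k →+* l) (g : ℕ → ℕ) (d : ℕ → k) :
    PowerSeries.map φ (sparse g d) = sparse g (fun r => φ (d r)) := by
  ext n
  simp only [sparse, PowerSeries.coeff_map, PowerSeries.coeff_mk, map_sum]
  refine Finset.sum_congr rfl fun r _ => ?_
  split <;> simp

theorem map_rescale (φ : k →+* l) (a : k) (F : PowerSeries k) :
    PowerSeries.map φ (PowerSeries.rescale a F) =
      PowerSeries.rescale (φ a) (PowerSeries.map φ F) := by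
  ext n; simp [PowerSeries.coeff_rescale]

end Series

/-! ### Evaluation of convergent power series -/

/-- The power series `F` converges (absolutely) at `y`, with value `v`. -/
def HasEv (y : ℂ) (F : PowerSeries ℂ) (v : ℂ) : Prop :=
  HasSum (fun n => PowerSeries.coeff n F * y ^ n) v

namespace HasEv

variable {y v w : ℂ} {F G : PowerSeries ℂ}

theorem add (hF : HasEv y F v) (hG : HasEv y G w) : HasEv y (F + G) (v + w) := by
  simpa [HasEv, add_mul] using HasSum.add hF hG

theorem sub (hF : HasEv y F v) (hG : HasEv y G w) : HasEv y (F - G) (v - w) := by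
  simpa [HasEv, sub_mul] using HasSum.sub hF hG

theorem mul (hF : HasEv y F v) (hG : HasEv y G w) : HasEv y (F * G) (v * w) := by
  have hF' := (summable_norm_iff.2 hF.summable)
  have hG' := (summable_norm_iff.2 hG.summable)
  have hs := summable_norm_sum_mul_antidiagonal_of_summable_norm hF' hG'
  have ht := tsum_mul_tsum_eq_tsum_sum_antidiagonal_of_summable_norm hF' hG'
  rw [hF.tsum_eq, hG.tsum_eq] at ht
  have key : (fun n => PowerSeries.coeff n (F * G) * y ^ n) = fun n =>
      ∑ kl ∈ Finset.HasAntidiagonal.antidiagonal n, PowerSeries.coeff kl.1 F * y ^ kl.1 *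
        (PowerSeries.coeff kl.2 G * y ^ kl.2) := by
    funext n
    rw [PowerSeries.coeff_mul, Finset.sum_mul]
    refine Finset.sum_congr rfl fun kl hkl => ?_
    rw [← Finset.HasAntidiagonal.mem_antidiagonal.1 hkl, pow_add]
    ring
  rw [HasEv, key, ht]
  exact (summable_norm_iff.1 hs).hasSum

theorem C (c : ℂ) : HasEv y (PowerSeries.C c) c := by
  have := hasSum_single (f := fun n => PowerSeries.coeff n (PowerSeries.C c) * y ^ n) 0
    (fun n hn => by simp [PowerSeries.coeff_C, hn])
  simpa [HasEv] using this

theorem one : HasEv y 1 1 := by simpa using HasEv.C (y := y) 1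

theorem X : HasEv y PowerSeries.X y := by
  have := hasSum_single (f := fun n => PowerSeries.coeff n (PowerSeries.X : PowerSeries ℂ) * y ^ n)
    1 (fun n hn => by simp [PowerSeries.coeff_X, hn])
  simpa [HasEv] using this

theorem natCast (n : ℕ) : HasEv y (n : PowerSeries ℂ) n := by
  simpa using HasEv.C (y := y) (n : ℂ)

theorem pow (hF : HasEv y F v) (n : ℕ) : HasEv y (F ^ n) (v ^ n) := by
  induction n with
  | zero => simpa using one
  | succ n ih => simpa only [pow_succ] using ih.mul hF

theorem prod {ι : Type*} (s : Finset ι) {F : ι → PowerSeries ℂ} {v : ι → ℂ}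
    (h : ∀ i, HasEv y (F i) (v i)) : HasEv y (∏ i ∈ s, F i) (∏ i ∈ s, v i) := by
  classical
  induction s using Finset.induction_on with
  | empty => simpa using one
  | insert a s ha ih => simpa only [Finset.prod_insert ha] using (h a).mul ih

theorem sum {ι : Type*} (s : Finset ι) {F : ι → PowerSeries ℂ} {v : ι → ℂ}
    (h : ∀ i, HasEv y (F i) (v i)) : HasEv y (∑ i ∈ s, F i) (∑ i ∈ s, v i) := by
  classical
  induction s using Finset.induction_on with
  | empty => simpa using HasEv.C (y := y) 0
  | insert a s ha ih => simpa only [Finset.sum_insert ha] using (h a).add ih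

theorem det {n : ℕ} {M : Matrix (Fin n) (Fin n) (PowerSeries ℂ)} {m : Matrix (Fin n) (Fin n) ℂ}
    (h : ∀ i j, HasEv y (M i j) (m i j)) : HasEv y M.det m.det := by
  rw [Matrix.det_apply', Matrix.det_apply']
  refine sum _ fun σ => ?_
  refine HasEv.mul ?_ (prod _ fun i => h _ _)
  simpa using HasEv.C (y := y) (((Equiv.Perm.sign σ : ℤ) : ℂ))

theorem rescale {a : ℂ} (h : HasEv (a * y) F v) : HasEv y (PowerSeries.rescale a F) v := by
  refine HasSum.congr_fun h fun n => ?_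
  rw [PowerSeries.coeff_rescale, mul_pow]
  ring

theorem dilate {b : ℕ} (hb : b ≠ 0) (h : HasEv (y ^ b) F v) : HasEv y (dilate b F) v := by
  have hinj : Function.Injective fun n : ℕ => b * n := fun m n h => by simpa [hb] using h
  refine (hinj.hasSum_iff fun n hn => ?_).1 ?_
  · have : ¬ b ∣ n := fun ⟨c, hc⟩ => hn ⟨c, hc.symm⟩
    simp [E8Jacobi.dilate, this]
  · refine HasSum.congr_fun h fun n => ?_
    simp [E8Jacobi.dilate, Nat.mul_div_cancel_left n (Nat.pos_of_ne_zero hb), pow_mul]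

theorem sparse {g : ℕ → ℕ} (hg : StrictMono g) {d : ℕ → ℂ}
    (h : HasSum (fun r => d r * y ^ g r) v) : HasEv y (sparse g d) v := by
  refine (hg.injective.hasSum_iff fun n hn => ?_).1 ?_
  · have : ∀ r, g r ≠ n := fun r hr => hn ⟨r, hr⟩
    simp [E8Jacobi.sparse, this]
  · refine HasSum.congr_fun h fun r => ?_
    have hr : r ∈ Finset.range (g r + 1) := Finset.mem_range.2 (Nat.lt_succ_of_le (hg.id_le r))
    simp [E8Jacobi.sparse, hg.injective.eq_iff]
    intro h; exact absurd (hg.id_le r) (by simpa using h)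

/-- Averaging over `m`-th roots of unity extracts the coefficients of degree divisible by `m`. -/
theorem sect {m : ℕ} (hm : m ≠ 0) {ζ : ℂ} (hζ : IsPrimitiveRoot ζ m) {v : ℕ → ℂ}
    (h : ∀ k < m, HasEv (ζ ^ k * y) F (v k)) :
    HasEv (y ^ m) (sect m F) ((m : ℂ)⁻¹ * ∑ k ∈ Finset.range m, v k) := by
  have hm' : (m : ℂ) ≠ 0 := Nat.cast_ne_zero.2 hm
  have hsum : HasSum (fun n => ∑ k ∈ Finset.range m,
      PowerSeries.coeff n F * (ζ ^ k * y) ^ n) (∑ k ∈ Finset.range m, v k) :=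
    hasSum_sum fun k hk => h k (Finset.mem_range.1 hk)
  have hinj : Function.Injective fun n : ℕ => m * n := fun a b h => by simpa [hm] using h
  have hroot (n : ℕ) : ∑ k ∈ Finset.range m, (ζ ^ n) ^ k = if m ∣ n then (m : ℂ) else 0 := by
    split_ifs with hd
    · simp [(hζ.pow_eq_one_iff_dvd n).2 hd]
    · have h1 : ζ ^ n ≠ 1 := fun h => hd ((hζ.pow_eq_one_iff_dvd n).1 h)
      have h2 := geom_sum_mul (ζ ^ n) m
      rw [← pow_mul, mul_comm n m, pow_mul, hζ.pow_eq_one, one_pow, sub_self] at h2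
      exact (mul_eq_zero.1 h2).resolve_right (sub_ne_zero.2 h1)
  have hterm (n : ℕ) : ∑ k ∈ Finset.range m, PowerSeries.coeff n F * (ζ ^ k * y) ^ n =
      PowerSeries.coeff n F * y ^ n * if m ∣ n then (m : ℂ) else 0 := by
    rw [← hroot n, Finset.mul_sum]
    refine Finset.sum_congr rfl fun k _ => ?_
    rw [mul_pow, ← pow_mul, ← pow_mul, mul_comm k n]
    ring
  simp only [hterm] at hsum
  have h3 := ((hinj.hasSum_iff fun n hn => ?_).2 hsum).mul_left ((m : ℂ)⁻¹)
  · refine HasSum.congr_fun h3 fun n => ?_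
    simp [E8Jacobi.sect, pow_mul]
    field_simp
  · have : ¬ m ∣ n := fun ⟨c, hc⟩ => hn ⟨c, hc.symm⟩
    simp [this]

end HasEv

/-- A nonzero convergent power series does not vanish near the origin, except at the origin. -/
theorem ne_zero_of_hasEv_near_zero {F : PowerSeries ℂ} (hF : F ≠ 0)
    (h : ∀ y, y ≠ 0 → ‖y‖ < 1 → ∃ v, HasEv y F v) :
    ∃ r > 0, ∀ y v, y ≠ 0 → ‖y‖ < r → HasEv y F v → v ≠ 0 := by
  let f : ℂ → ℂ := fun y => ∑' n, PowerSeries.coeff n F * y ^ n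
  let p := FormalMultilinearSeries.ofScalars ℂ (fun n => PowerSeries.coeff n F)
  have hp : HasFPowerSeriesAt f p 0 := by
    rw [hasFPowerSeriesAt_iff]
    filter_upwards [Metric.ball_mem_nhds (0 : ℂ) one_pos] with y hy
    have hs : Summable fun n => PowerSeries.coeff n F * y ^ n := by
      by_cases hy0 : y = 0
      · exact (hasSum_single 0 fun n hn => by simp [hy0, hn]).summable
      · obtain ⟨v, hv⟩ := h y hy0 (by simpa using hy)
        exact hv.summable
    rw [zero_add]
    refine HasSum.congr_fun hs.hasSum fun n => ?_
    simp [p, FormalMultilinearSeries.coeff_ofScalars, mul_comm]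
  have hp0 : p ≠ 0 := fun h0 => hF <| by
    ext n
    have := congrArg (fun s => FormalMultilinearSeries.coeff s n) h0
    simp only [p, FormalMultilinearSeries.coeff_ofScalars] at this
    rw [this]
    simp [FormalMultilinearSeries.coeff]
  have := hp.locally_ne_zero hp0
  rw [eventually_nhdsWithin_iff, Metric.eventually_nhds_iff] at this
  obtain ⟨r, hr, hfr⟩ := this
  refine ⟨r, hr, fun y v hy hyr hv => ?_⟩
  have := hfr (by simpa using hyr) hy
  rwa [show f y = v from hv.tsum_eq] at this

/-! ### One-variable theta functions with characteristics -/

/-- The `n`-th term of the theta function with characteristics `e`, `δ`. -/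
def thTerm (e δ u τ : ℂ) (n : ℤ) : ℂ :=
  Complex.exp (2 * πC * I * e * n) * Complex.exp (2 * πC * I * u * ((n : ℂ) - δ)) *
    Complex.exp (πC * I * τ * ((n : ℂ) - δ) ^ 2)

/-- The theta function with characteristics `e`, `δ`. -/
def thChar (e δ u τ : ℂ) : ℂ :=
  Complex.exp (πC * I * τ * δ ^ 2 - 2 * πC * I * δ * u) * jacobiTheta₂ (u + e - τ * δ) τ

/-- The derivative of `thChar` with respect to the elliptic variable. -/
def thCharD (e δ u τ : ℂ) : ℂ :=
  Complex.exp (πC * I * τ * δ ^ 2 - 2 * πC * I * δ * u) *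
    (jacobiTheta₂' (u + e - τ * δ) τ - 2 * πC * I * δ * jacobiTheta₂ (u + e - τ * δ) τ)

theorem thTerm_eq (e δ u τ : ℂ) (n : ℤ) : thTerm e δ u τ n =
    Complex.exp (πC * I * τ * δ ^ 2 - 2 * πC * I * δ * u) *
      jacobiTheta₂_term n (u + e - τ * δ) τ := by
  rw [thTerm, jacobiTheta₂_term, ← Complex.exp_add, ← Complex.exp_add, ← Complex.exp_add]
  congr 1
  simp only [πC]
  ring

theorem hasSum_thTerm (e δ u : ℂ) {τ : ℂ} (hτ : 0 < τ.im) :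
    HasSum (thTerm e δ u τ) (thChar e δ u τ) := by
  refine HasSum.congr_fun ((hasSum_jacobiTheta₂_term (u + e - τ * δ) hτ).mul_left _) fun n => ?_
  exact thTerm_eq e δ u τ n

theorem hasSum_thTermD (e δ u : ℂ) {τ : ℂ} (hτ : 0 < τ.im) :
    HasSum (fun n : ℤ => 2 * πC * I * ((n : ℂ) - δ) * thTerm e δ u τ n) (thCharD e δ u τ) := by
  refine HasSum.congr_fun (((hasSum_jacobiTheta₂'_term (u + e - τ * δ) hτ).sub
    ((hasSum_jacobiTheta₂_term (u + e - τ * δ) hτ).mul_left (2 * πC * I * δ))).mul_left _)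
    fun n => ?_
  rw [thTerm_eq, jacobiTheta₂'_term]
  simp only [πC]
  ring

theorem hasDerivAt_thChar (e δ u : ℂ) {τ : ℂ} (hτ : 0 < τ.im) :
    HasDerivAt (fun u => thChar e δ u τ) (thCharD e δ u τ) u := by
  have h1 : HasDerivAt (fun u => jacobiTheta₂ (u + e - τ * δ) τ)
      (jacobiTheta₂' (u + e - τ * δ) τ) u := by
    have h2 : HasDerivAt (fun u : ℂ => u + e - τ * δ) 1 u :=
      ((hasDerivAt_id u).add_const e).sub_const _
    have h3 := (hasDerivAt_jacobiTheta₂_fst (u + e - τ * δ) hτ).comp u h2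
    rw [mul_one] at h3
    exact h3
  have h3 : HasDerivAt (fun u => Complex.exp (πC * I * τ * δ ^ 2 - 2 * πC * I * δ * u))
      (Complex.exp (πC * I * τ * δ ^ 2 - 2 * πC * I * δ * u) * (-(2 * πC * I * δ))) u := by
    refine HasDerivAt.cexp ?_
    simpa using ((hasDerivAt_id u).const_mul (2 * πC * I * δ)).const_sub (πC * I * τ * δ ^ 2)
  refine (h3.mul h1).congr_deriv ?_
  rw [thCharD]
  ring

/-! ### Products of sums -/

theorem hasSum_mul_prod {ι κ : Type*} {f : ι → ℂ} {g : κ → ℂ} {a b : ℂ} (hf : HasSum f a)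
    (hg : HasSum g b) : HasSum (fun x : ι × κ => f x.1 * g x.2) (a * b) :=
  hf.mul hg (summable_mul_of_summable_norm hf.summable.norm hg.summable.norm)

theorem hasSum_prod_pi {N : ℕ} {f : Fin N → ℤ → ℂ} {v : Fin N → ℂ}
    (h : ∀ j, HasSum (f j) (v j)) :
    HasSum (fun n : Fin N → ℤ => ∏ j, f j (n j)) (∏ j, v j) := by
  induction N with
  | zero =>
    have : (fun n : Fin 0 → ℤ => ∏ j, f j (n j)) = fun _ => 1 := by funext n; simp
    rw [this]
    simp [hasSum_unique]
  | succ N ih =>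
    have h1 := ih (f := fun j => f j.succ) (v := fun j => v j.succ) fun j => h j.succ
    have h2 := hasSum_mul_prod (h 0) h1
    rw [Fin.prod_univ_succ]
    rw [← (Fin.consEquiv fun _ : Fin (N + 1) => ℤ).hasSum_iff]
    refine HasSum.congr_fun h2 fun n => ?_
    simp [Fin.prod_univ_succ, Fin.consEquiv]

/-! ### The theta function of the lattice as a sum of products -/

/-- The integral vectors with even coordinate sum. -/
abbrev EvenVec := {n : Fin 8 → ℤ // Even (∑ i, n i)}

/-- Half-integral or integral lattice vectors are shifts of even integral vectors. -/
def latticeOfEven : EvenVec ⊕ EvenVec → E8Lattice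
  | Sum.inl n => ⟨fun i => n.1 i, Or.inl fun i => ⟨n.1 i, rfl⟩, by
      obtain ⟨m, hm⟩ := n.2
      refine ⟨m, ?_⟩
      rw [← Int.cast_sum, hm]; push_cast; ring⟩
  | Sum.inr n => ⟨fun i => n.1 i - 1 / 2, Or.inr fun i => ⟨n.1 i - 1, by push_cast; ring⟩, by
      obtain ⟨m, hm⟩ := n.2
      refine ⟨m - 2, ?_⟩
      rw [Finset.sum_sub_distrib, ← Int.cast_sum, hm]; norm_num; ring⟩

theorem latticeOfEven_bijective : Function.Bijective latticeOfEven := by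
  have half (a b : ℤ) : (a : ℝ) ≠ b - 1 / 2 := fun h => by
    have h2 : (2 * a : ℝ) = 2 * b - 1 := by linarith
    have h3 : 2 * a = 2 * b - 1 := by exact_mod_cast h2
    omega
  constructor
  · rintro (m | m) (n | n) h <;> have h := fun i => congrFun (congrArg Subtype.val h) i
    · congr 1; ext i; simpa [latticeOfEven] using h i
    · exact absurd (h 0) (half _ _)
    · exact absurd (h 0).symm (half _ _)
    · congr 1; ext i; simpa [latticeOfEven] using h i
  · rintro ⟨w, hw | hw, m, hm⟩
    · have hw' := hw
      choose n hn using hw'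
      refine ⟨Sum.inl ⟨n, m, ?_⟩, ?_⟩
      · have : ((∑ i, n i : ℤ) : ℝ) = 2 * m := by rw [← hm]; push_cast; simp [hn]
        have : ∑ i, n i = 2 * m := by exact_mod_cast this
        omega
      · ext i; simp [latticeOfEven, hn]
    · have hw' := hw
      choose n hn using hw'
      refine ⟨Sum.inr ⟨fun i => n i + 1, m + 2, ?_⟩, ?_⟩
      · have : ((∑ i, n i : ℤ) : ℝ) + 4 = 2 * m := by
          rw [← hm]; simp only [hn]; rw [Finset.sum_add_distrib]; push_cast; norm_num
        have : ∑ i, n i + 4 = 2 * m := by exact_mod_cast this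
        rw [Finset.sum_add_distrib]
        simp
        omega
      · ext i; simp [latticeOfEven, hn]; ring

/-- The summand of the lattice theta function at an integral vector shifted by `-δ`. -/
theorem prod_thTerm (δ τ : ℂ) (z : Fin 8 → ℂ) (n : Fin 8 → ℤ) :
    ∏ j, thTerm 0 δ (z j) τ (n j) =
      Complex.exp (πC * I * τ * (∑ i, ((n i : ℂ) - δ) * ((n i : ℂ) - δ)) +
        2 * πC * I * ∑ i, z i * ((n i : ℂ) - δ)) := by
  simp only [thTerm, ← Complex.exp_add]
  rw [← Complex.exp_sum]
  congr 1
  rw [Finset.mul_sum, Finset.mul_sum, ← Finset.sum_add_distrib]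
  refine Finset.sum_congr rfl fun i _ => ?_
  ring

theorem prod_thTerm_half (δ τ : ℂ) (z : Fin 8 → ℂ) (n : Fin 8 → ℤ) :
    ∏ j, thTerm (1 / 2) δ (z j) τ (n j) = (-1) ^ (∑ i, n i) * ∏ j, thTerm 0 δ (z j) τ (n j) := by
  have h (m : ℤ) : Complex.exp (2 * πC * I * (1 / 2) * m) = (-1) ^ m := by
    rw [← Complex.exp_pi_mul_I, ← Complex.exp_int_mul]
    congr 1
    simp only [πC]; ring
  have h' (u : ℂ) (m : ℤ) : thTerm (1 / 2) δ u τ m = (-1) ^ m * thTerm 0 δ u τ m := by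
    simp only [thTerm, h]; simp; ring
  simp only [h', Finset.prod_mul_distrib]
  congr 1
  simp only [Fin.sum_univ_eight, Fin.prod_univ_eight]
  simp only [zpow_add₀ (neg_ne_zero.2 (one_ne_zero (α := ℂ)))]

theorem hasSum_even (δ : ℂ) {τ : ℂ} (hτ : 0 < τ.im) (z : Fin 8 → ℂ) :
    HasSum (fun n : EvenVec => ∏ j, thTerm 0 δ (z j) τ (n.1 j))
      (1 / 2 * (∏ j, thChar 0 δ (z j) τ + ∏ j, thChar (1 / 2) δ (z j) τ)) := by
  have h0 := hasSum_prod_pi fun j => hasSum_thTerm 0 δ (z j) hτ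
  have h1 := hasSum_prod_pi fun j => hasSum_thTerm (1 / 2) δ (z j) hτ
  have h2 := (h0.add h1).mul_left (1 / 2)
  refine HasSum.congr_fun ((Function.Injective.hasSum_iff (Subtype.val_injective)
    (fun n hn => ?_)).2 h2) fun n => ?_
  rotate_left
  · have hn : Even (∑ i, n.1 i) := n.2
    simp only [Function.comp_apply, prod_thTerm_half, hn.neg_one_zpow]
    ring
  have hn' : ¬ Even (∑ i, n i) := fun h => hn ⟨⟨n, h⟩, rfl⟩
  have hodd := Int.not_even_iff_odd.1 hn'
  simp only [prod_thTerm_half, hodd.neg_one_zpow]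
  ring

theorem hasSum_Theta {τ : ℂ} (hτ : 0 < τ.im) (z : Fin 8 → ℂ) :
    HasSum (fun w : E8Lattice => Complex.exp (πC * I * τ * dotC (cv w.1) (cv w.1) +
        2 * πC * I * dotC z (cv w.1)))
      (1 / 2 * (∏ j, thChar 0 0 (z j) τ + ∏ j, thChar (1 / 2) 0 (z j) τ) +
       1 / 2 * (∏ j, thChar 0 (1 / 2) (z j) τ + ∏ j, thChar (1 / 2) (1 / 2) (z j) τ)) := by
  rw [← (Equiv.ofBijective _ latticeOfEven_bijective).hasSum_iff]
  refine HasSum.sum (HasSum.congr_fun (hasSum_even 0 hτ z) fun n => ?_)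
    (HasSum.congr_fun (hasSum_even (1 / 2) hτ z) fun n => ?_) <;>
  · rw [prod_thTerm]
    simp [dotC, cv, latticeOfEven]

/-! ### Formal one-variable theta series -/

section Formal

variable {k l : Type*} [CommRing k] [CommRing l]

/-- The exponents `0, 1, 3, 6, …`. -/
def tri (r : ℕ) : ℕ := r * (r + 1) / 2

/-- The series `∑ x ^ (2 n) X ^ (n ^ 2)` over the integers `n`, where `y` stands for `x⁻¹`
(for `d = false`), or its derivative (for `d = true`). -/
def evenSer (d : Bool) (x y : k) : PowerSeries k :=
  sparse (fun r => r ^ 2) fun r => if d then 2 * r * (x ^ (2 * r) - y ^ (2 * r))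
    else if r = 0 then 1 else x ^ (2 * r) + y ^ (2 * r)

/-- The series `∑ ε ^ n x ^ (2 n - 1) X ^ (n (n - 1) / 2)` over the integers `n`, where `y` stands
for `x⁻¹` and `ε = ±1` (for `d = false`), or its derivative (for `d = true`). -/
def oddSer (ε : k) (d : Bool) (x y : k) : PowerSeries k :=
  sparse tri fun r => if d then
      ε ^ r * (2 * r + 1) * (ε * x ^ (2 * r + 1) - y ^ (2 * r + 1))
    else ε ^ r * (ε * x ^ (2 * r + 1) + y ^ (2 * r + 1))

/-- Twice the formal theta series of the lattice at `(X, b z)` (for `s = 0`), or its derivative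
in the direction of a coordinate. -/
def thetaHat (x y : Fin 8 → k) (s : Fin 9) (b : ℕ) : PowerSeries k :=
  (if s = 0 then 1 else (b : PowerSeries k)) *
    (2 * sect 2 (∏ j : Fin 8, evenSer (s = j.succ) (x j ^ b) (y j ^ b)) +
      PowerSeries.X * (∏ j : Fin 8, oddSer 1 (s = j.succ) (x j ^ b) (y j ^ b) +
        ∏ j : Fin 8, oddSer (-1) (s = j.succ) (x j ^ b) (y j ^ b)))

theorem map_evenSer (φ : k →+* l) (d : Bool) (x y : k) :
    PowerSeries.map φ (evenSer d x y) = evenSer d (φ x) (φ y) := by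
  rw [evenSer, map_sparse, evenSer]
  congr 1
  funext r
  split_ifs <;> simp [map_ofNat φ]

theorem map_oddSer (φ : k →+* l) (ε : k) (d : Bool) (x y : k) :
    PowerSeries.map φ (oddSer ε d x y) = oddSer (φ ε) d (φ x) (φ y) := by
  rw [oddSer, map_sparse, oddSer]
  congr 1
  funext r
  split_ifs <;> simp [map_ofNat φ]

theorem map_thetaHat (φ : k →+* l) (x y : Fin 8 → k) (s : Fin 9) (b : ℕ) :
    PowerSeries.map φ (thetaHat x y s b) =
      thetaHat (fun j => φ (x j)) (fun j => φ (y j)) s b := by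
  have h : PowerSeries.map φ (if s = 0 then 1 else (b : PowerSeries k)) =
      if s = 0 then 1 else (b : PowerSeries l) := by split_ifs <;> simp
  simp only [thetaHat, map_mul, map_add, map_sect, map_prod, map_evenSer, map_oddSer, h,
    PowerSeries.map_X, map_pow, map_one, map_neg, map_ofNat]

end Formal

theorem tri_strictMono : StrictMono tri := strictMono_nat_of_lt_succ fun r => by
  have h : (r + 1) * (r + 1 + 1) = r * (r + 1) + 2 * (r + 1) := by ring
  rw [tri, tri, h, Nat.add_mul_div_left _ _ two_pos]
  omega

theorem two_mul_tri (r : ℕ) : 2 * tri r = r * (r + 1) :=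
  Nat.mul_div_cancel' (Nat.even_mul_succ_self r).two_dvd

theorem sq_strictMono : StrictMono fun r : ℕ => r ^ 2 :=
  fun _ _ h => Nat.pow_lt_pow_left h two_ne_zero

/-- A theta function or its derivative, the latter divided by `π i`. -/
def thSlot (d : Bool) (e δ u τ : ℂ) : ℂ :=
  if d then (πC * I)⁻¹ * thCharD e δ u τ else thChar e δ u τ

theorem πC_ne_zero : πC ≠ 0 := by simp [πC, Real.pi_ne_zero]

theorem hasSum_thSlot (d : Bool) (e δ u : ℂ) {τ : ℂ} (hτ : 0 < τ.im) :
    HasSum (fun n : ℤ => (if d then 2 * ((n : ℂ) - δ) else 1) * thTerm e δ u τ n)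
      (thSlot d e δ u τ) := by
  cases d
  · simpa [thSlot] using hasSum_thTerm e δ u hτ
  · refine HasSum.congr_fun ((hasSum_thTermD e δ u hτ).mul_left (πC * I)⁻¹) fun n => ?_
    have := πC_ne_zero
    simp only [if_true]
    field_simp

theorem exp_half_mul (n : ℤ) : Complex.exp (2 * πC * I * (1 / 2) * n) = (-1) ^ n := by
  rw [← Complex.exp_pi_mul_I, ← Complex.exp_int_mul]
  congr 1
  simp only [πC]; ring

/-- The theta functions with integral characteristic are given by the formal series. -/
theorem hasEv_evenSer (d : Bool) (u : ℂ) {τ e ε : ℂ} (hτ : 0 < τ.im)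
    (he : e = 0 ∧ ε = 1 ∨ e = 1 / 2 ∧ ε = -1) :
    HasEv (ε * Complex.exp (πC * I * τ)) (evenSer d (Complex.exp (πC * I * u))
      (Complex.exp (-(πC * I * u)))) (thSlot d e 0 u τ) := by
  refine HasEv.sparse sq_strictMono ?_
  have h := hasSum_thSlot d e 0 u hτ
  have h2 := h.nat_add_neg.sub (hasSum_ite_eq (0 : ℕ)
    ((if d then 2 * (((0 : ℤ) : ℂ) - 0) else 1) * thTerm e 0 u τ 0))
  rw [add_sub_cancel_right] at h2
  refine HasSum.congr_fun h2 fun r => ?_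
  have hε (r : ℕ) : Complex.exp (2 * πC * I * e * r) = ε ^ r ^ 2 ∧
      Complex.exp (-(2 * πC * I * e * r)) = ε ^ r ^ 2 := by
    rcases he with ⟨rfl, rfl⟩ | ⟨rfl, rfl⟩
    · simp
    · have h1 : ((-1 : ℂ)) ^ r ^ 2 = (-1) ^ r := by
        rcases Nat.even_or_odd r with hr | hr
        · rw [hr.neg_one_pow, (hr.pow_of_ne_zero two_ne_zero).neg_one_pow]
        · rw [hr.neg_one_pow, (hr.pow).neg_one_pow]
      have h2 := exp_half_mul r
      have h3 := exp_half_mul (-r)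
      rw [h1]
      refine ⟨by simpa using h2, ?_⟩
      simpa [zpow_neg, ← inv_pow] using h3
  have e1 : thTerm e 0 u τ r = Complex.exp (πC * I * u) ^ (2 * r) *
      (ε * Complex.exp (πC * I * τ)) ^ r ^ 2 := by
    rw [thTerm, mul_pow, ← Complex.exp_nat_mul, ← Complex.exp_nat_mul, Int.cast_natCast,
      (hε r).1]
    have a1 : 2 * πC * I * u * ((r : ℂ) - 0) = ((2 * r : ℕ) : ℂ) * (πC * I * u) := by
      push_cast; ring
    have a2 : πC * I * τ * ((r : ℂ) - 0) ^ 2 = ((r ^ 2 : ℕ) : ℂ) * (πC * I * τ) := by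
      push_cast; ring
    rw [a1, a2]; ring
  have e2 : thTerm e 0 u τ (-r) = Complex.exp (-(πC * I * u)) ^ (2 * r) *
      (ε * Complex.exp (πC * I * τ)) ^ r ^ 2 := by
    rw [thTerm, mul_pow, ← Complex.exp_nat_mul, ← Complex.exp_nat_mul, Int.cast_neg,
      Int.cast_natCast, mul_neg, (hε r).2]
    have a1 : 2 * πC * I * u * (-(r : ℂ) - 0) = ((2 * r : ℕ) : ℂ) * (-(πC * I * u)) := by
      push_cast; ring
    have a2 : πC * I * τ * (-(r : ℂ) - 0) ^ 2 = ((r ^ 2 : ℕ) : ℂ) * (πC * I * τ) := by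
      push_cast; ring
    rw [a1, a2]; ring
  rw [e1, e2]
  rcases Nat.eq_zero_or_pos r with rfl | hr
  · cases d <;> simp [thTerm]
  · have hr' : r ≠ 0 := hr.ne'
    cases d
    · simp [hr']; ring
    · simp [hr']; ring

/-- The theta functions with half-integral characteristic are given by the formal series. -/
theorem hasEv_oddSer (d : Bool) (u : ℂ) {τ e ε : ℂ} (hτ : 0 < τ.im)
    (he : e = 0 ∧ ε = 1 ∨ e = 1 / 2 ∧ ε = -1) :
    HasEv (qExp τ) (oddSer ε d (Complex.exp (πC * I * u))
      (Complex.exp (-(πC * I * u))))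
      (Complex.exp (-(πC * I * τ / 4)) * thSlot d e (1 / 2) u τ) := by
  refine HasEv.sparse tri_strictMono ?_
  have h := (hasSum_thSlot d e (1 / 2) u hτ)
  rw [← (Equiv.addRight (1 : ℤ)).hasSum_iff] at h
  refine HasSum.congr_fun (h.nat_add_neg_add_one.mul_left _) fun r => ?_
  have hε (r : ℕ) : Complex.exp (2 * πC * I * e * r) = ε ^ r ∧
      Complex.exp (-(2 * πC * I * e * r)) = ε ^ r := by
    rcases he with ⟨rfl, rfl⟩ | ⟨rfl, rfl⟩
    · simp
    · have h2 := exp_half_mul r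
      have h3 := exp_half_mul (-r)
      refine ⟨by simpa using h2, ?_⟩
      simpa [zpow_neg, ← inv_pow] using h3
  have hq : qExp τ ^ tri r = Complex.exp ((r * (r + 1) : ℂ) * (πC * I * τ)) := by
    rw [qExp, ← Complex.exp_nat_mul]
    congr 1
    have := congrArg (Nat.cast : ℕ → ℂ) (two_mul_tri r)
    push_cast at this
    linear_combination (πC * I * τ) * this
  have e1 : Complex.exp (-(πC * I * τ / 4)) * thTerm e (1 / 2) u τ (r + 1) =
      ε ^ r * ε * Complex.exp (πC * I * u) ^ (2 * r + 1) * qExp τ ^ tri r := by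
    have hc := (hε (r + 1)).1
    push_cast at hc
    rw [thTerm, hq, ← Complex.exp_nat_mul]
    push_cast
    rw [hc, pow_succ]
    have a1 : 2 * πC * I * u * ((r : ℂ) + 1 - 1 / 2) = (2 * r + 1) * (πC * I * u) := by ring
    have a2 : Complex.exp ((r * (r + 1) : ℂ) * (πC * I * τ)) = Complex.exp (-(πC * I * τ / 4)) *
        Complex.exp (πC * I * τ * ((r : ℂ) + 1 - 1 / 2) ^ 2) := by
      rw [← Complex.exp_add]; congr 1; ring
    rw [a1, a2]; ring
  have e2 : Complex.exp (-(πC * I * τ / 4)) * thTerm e (1 / 2) u τ (-r) =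
      ε ^ r * Complex.exp (-(πC * I * u)) ^ (2 * r + 1) * qExp τ ^ tri r := by
    have hc := (hε r).2
    rw [thTerm, hq, ← Complex.exp_nat_mul]
    push_cast
    rw [mul_neg, hc]
    have a1 : 2 * πC * I * u * (-(r : ℂ) - 1 / 2) = (2 * r + 1) * (-(πC * I * u)) := by ring
    have a2 : Complex.exp ((r * (r + 1) : ℂ) * (πC * I * τ)) = Complex.exp (-(πC * I * τ / 4)) *
        Complex.exp (πC * I * τ * (-(r : ℂ) - 1 / 2) ^ 2) := by
      rw [← Complex.exp_add]; congr 1; ring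
    rw [a1, a2]; ring
  have b2 : (-((r : ℤ) + 1) + 1 : ℤ) = -r := by ring
  simp only [Function.comp_apply, Equiv.coe_addRight, b2]
  cases d
  · simp only [Bool.false_eq_true, if_false]
    linear_combination -e1 - e2
  · simp only [if_true]
    push_cast
    linear_combination -(2 * r + 1) * e1 + (2 * r + 1) * e2

/-! ### The lattice theta function and its derivatives -/

/-- Twice the value of the theta function at `(τ, b z)` (for `s = 0`), or of its derivative in the
direction of a coordinate, divided by `π i`. -/
def thetaSlot (z : Fin 8 → ℂ) (s : Fin 9) (b : ℕ) (τ : ℂ) : ℂ :=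
  (if s = 0 then 1 else (b : ℂ)) *
    ((∏ j : Fin 8, thSlot (s = j.succ) 0 0 (b * z j) τ +
        ∏ j : Fin 8, thSlot (s = j.succ) (1 / 2) 0 (b * z j) τ) +
      (∏ j : Fin 8, thSlot (s = j.succ) 0 (1 / 2) (b * z j) τ +
        ∏ j : Fin 8, thSlot (s = j.succ) (1 / 2) (1 / 2) (b * z j) τ))

theorem thetaSlot_zero (z : Fin 8 → ℂ) (b : ℕ) {τ : ℂ} (hτ : 0 < τ.im) :
    thetaSlot z 0 b τ = 2 * Theta τ fun i => b * z i := by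
  rw [Theta, (hasSum_Theta hτ _).tsum_eq]
  have h (j : Fin 8) : ¬ (0 : Fin 9) = j.succ := (Fin.succ_ne_zero j).symm
  simp only [thetaSlot, thSlot, h, if_true, decide_false, Bool.false_eq_true, if_false]
  ring

theorem hasDerivAt_prod_update {f g : ℂ → ℂ} (hf : ∀ u, HasDerivAt f (g u) u) (b : ℂ)
    (z : Fin 8 → ℂ) (j : Fin 8) :
    HasDerivAt (fun u => ∏ i, f (b * Function.update z j u i))
      (b * ∏ i : Fin 8, if j.succ = i.succ then g (b * z i) else f (b * z i)) (z j) := by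
  have h1 (u : ℂ) : ∏ i, f (b * Function.update z j u i) =
      f (b * u) * ∏ i ∈ Finset.univ.erase j, f (b * z i) := by
    rw [← Finset.mul_prod_erase _ _ (Finset.mem_univ j), Function.update_self]
    congr 1
    refine Finset.prod_congr rfl fun i hi => ?_
    rw [Function.update_of_ne (Finset.ne_of_mem_erase hi)]
  have h2 : (∏ i : Fin 8, if j.succ = i.succ then g (b * z i) else f (b * z i)) =
      g (b * z j) * ∏ i ∈ Finset.univ.erase j, f (b * z i) := by
    rw [← Finset.mul_prod_erase _ _ (Finset.mem_univ j), if_pos rfl]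
    congr 1
    refine Finset.prod_congr rfl fun i hi => if_neg fun h => ?_
    exact Finset.ne_of_mem_erase hi (Fin.succ_injective _ h).symm
  simp only [h1, h2]
  have h3 : HasDerivAt (fun u => f (b * u)) (g (b * z j) * b) (z j) := by
    have h4 : HasDerivAt (fun u : ℂ => b * u) b (z j) := by
      simpa using (hasDerivAt_id (z j)).const_mul b
    exact (hf (b * z j)).comp (z j) h4
  refine (h3.mul_const _).congr_deriv ?_
  ring

theorem hasDerivAt_Theta (z : Fin 8 → ℂ) (j : Fin 8) (b : ℕ) {τ : ℂ} (hτ : 0 < τ.im) :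
    HasDerivAt (fun u => Theta τ fun i => b * Function.update z j u i)
      (πC * I / 2 * thetaSlot z j.succ b τ) (z j) := by
  have h (e δ : ℂ) := hasDerivAt_prod_update (fun u => hasDerivAt_thChar e δ u hτ) b z j
  have hT : (fun u => Theta τ fun i => b * Function.update z j u i) = fun u =>
      1 / 2 * (∏ i, thChar 0 0 (b * Function.update z j u i) τ +
        ∏ i, thChar (1 / 2) 0 (b * Function.update z j u i) τ) +
       1 / 2 * (∏ i, thChar 0 (1 / 2) (b * Function.update z j u i) τ +
        ∏ i, thChar (1 / 2) (1 / 2) (b * Function.update z j u i) τ) := by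
    funext u
    rw [Theta, (hasSum_Theta hτ _).tsum_eq]
  rw [hT]
  refine ((((h 0 0).add (h (1 / 2) 0)).const_mul (1 / 2)).add
    (((h 0 (1 / 2)).add (h (1 / 2) (1 / 2))).const_mul (1 / 2))).congr_deriv ?_
  have hs (e δ : ℂ) : (∏ i : Fin 8, if j.succ = i.succ then thCharD e δ (b * z i) τ
      else thChar e δ (b * z i) τ) =
      πC * I * ∏ i : Fin 8, thSlot (j.succ = i.succ) e δ (b * z i) τ := by
    rw [← Finset.mul_prod_erase _ _ (Finset.mem_univ j),
      ← Finset.mul_prod_erase _ _ (Finset.mem_univ j), if_pos rfl, ← mul_assoc]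
    congr 1
    · simp only [thSlot, decide_true, if_true]
      rw [mul_inv_cancel_left₀ (mul_ne_zero πC_ne_zero I_ne_zero)]
    · refine Finset.prod_congr rfl fun i hi => ?_
      have : ¬ j = i := fun h => Finset.ne_of_mem_erase hi h.symm
      simp [thSlot, this]
  rw [hs, hs, hs, hs, thetaSlot, if_neg (Fin.succ_ne_zero j)]
  ring

/-- The formal theta series converges to the theta function. -/
theorem hasEv_thetaHat (z : Fin 8 → ℂ) (s : Fin 9) (b : ℕ) {τ : ℂ} (hτ : 0 < τ.im) :
    HasEv (qExp τ) (thetaHat (fun j => Complex.exp (πC * I * z j))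
      (fun j => Complex.exp (-(πC * I * z j))) s b) (thetaSlot z s b τ) := by
  have hx (j : Fin 8) : Complex.exp (πC * I * z j) ^ b = Complex.exp (πC * I * (b * z j)) := by
    rw [← Complex.exp_nat_mul]; congr 1; ring
  have hy (j : Fin 8) : Complex.exp (-(πC * I * z j)) ^ b =
      Complex.exp (-(πC * I * (b * z j))) := by
    rw [← Complex.exp_nat_mul]; congr 1; ring
  simp only [thetaHat, hx, hy]
  rw [thetaSlot]
  refine HasEv.mul ?_ (HasEv.add ?_ ?_)
  · split_ifs
    exacts [HasEv.one, HasEv.natCast b]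
  · have h := HasEv.sect two_ne_zero (ζ := -1) (y := Complex.exp (πC * I * τ))
      (IsPrimitiveRoot.neg_one 0 (by norm_num))
      (F := ∏ j : Fin 8, evenSer (s = j.succ) (Complex.exp (πC * I * (b * z j)))
        (Complex.exp (-(πC * I * (b * z j)))))
      (v := fun i => if i = 0 then ∏ j : Fin 8, thSlot (s = j.succ) 0 0 (b * z j) τ else
        ∏ j : Fin 8, thSlot (s = j.succ) (1 / 2) 0 (b * z j) τ) (fun i hi => by
          interval_cases i
          · exact HasEv.prod _ fun j => by
              simpa using hasEv_evenSer _ (b * z j) hτ (Or.inl ⟨rfl, rfl⟩)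
          · exact HasEv.prod _ fun j => by
              simpa using hasEv_evenSer _ (b * z j) hτ (Or.inr ⟨rfl, rfl⟩))
    have hq : Complex.exp (πC * I * τ) ^ 2 = qExp τ := by
      rw [qExp, ← Complex.exp_nat_mul]; congr 1; push_cast; ring
    rw [hq] at h
    convert (HasEv.natCast 2).mul h using 1
    · simp
    · rw [Finset.sum_range_succ, Finset.sum_range_one, if_pos rfl, if_neg one_ne_zero]
      push_cast
      ring
  · have hpow : ∀ F : Fin 8 → ℂ, ∏ j, Complex.exp (-(πC * I * τ / 4)) * F j =
        (qExp τ)⁻¹ * ∏ j, F j := by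
      intro F
      rw [Finset.prod_mul_distrib]
      congr 1
      rw [Finset.prod_const, Finset.card_univ, Fintype.card_fin, ← Complex.exp_nat_mul, qExp,
        ← Complex.exp_neg]
      congr 1; push_cast; ring
    have h1 := HasEv.prod Finset.univ
      fun j : Fin 8 => hasEv_oddSer (s = j.succ) (b * z j) hτ (Or.inl ⟨rfl, rfl⟩)
    have h2 := HasEv.prod Finset.univ
      fun j : Fin 8 => hasEv_oddSer (s = j.succ) (b * z j) hτ (Or.inr ⟨rfl, rfl⟩)
    rw [hpow] at h1 h2
    have hq : qExp τ ≠ 0 := Complex.exp_ne_zero _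
    convert HasEv.X.mul (h1.add h2) using 1
    field_simp

/-! ### The nine forms as combinations of theta functions -/

/-- The form `A_m` as a combination of values `Φ b τ'` standing for `Theta τ' (b z)`. -/
def amVal (m : ℕ) (τ : ℂ) (Φ : ℕ → ℂ → ℂ) : ℂ :=
  ((m : ℂ) ^ 3 / ((m : ℂ) ^ 3 + 1)) * (Φ m (m * τ) +
    ((m : ℂ) ^ 4)⁻¹ * ∑ k ∈ Finset.range m, Φ 1 ((τ + (k : ℂ)) / (m : ℂ)))

/-- The nine forms as combinations of values `Φ b τ'` standing for `Theta τ' (b z)`. -/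
def formVal (τ : ℂ) (Φ : ℕ → ℂ → ℂ) : Fin 9 → ℂ :=
  ![Φ 1 τ, amVal 2 τ Φ, amVal 3 τ Φ, Φ 2 τ, amVal 5 τ Φ,
    (32/5) * (ee1 τ * Φ 2 (2*τ)
      + (1/2^4) * ee3 τ * Φ 1 (τ/2) + (1/2^4) * ee2 τ * Φ 1 ((τ+1)/2)),
    (81/80) * (h0 τ ^ 2 * Φ 3 (3*τ)
      - (1/3^5) * ∑ k ∈ Finset.range 3, h0 ((τ + (k:ℂ))/3) ^ 2 * Φ 1 ((τ + (k:ℂ))/3)),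
    (16/15) * (th4 0 (2*τ) ^ 4 * Φ 4 (4*τ)
      - (1/2^4) * th4 0 (2*τ) ^ 4 * Φ 2 (τ + 1/2)
      - (1/(2^2 * 4^4)) * ∑ k ∈ Finset.range 4, th2 0 ((τ + (k:ℂ))/2) ^ 4 * Φ 1 ((τ + (k:ℂ))/4)),
    (9/10) * (h0 τ ^ 2 * Φ 6 (6*τ)
      + (1/2^4) * ∑ k ∈ Finset.range 2, h0 (τ + (k:ℂ)) ^ 2 * Φ 3 ((3*τ + 3*(k:ℂ))/2)
      - (1/(3 * 3^4)) * ∑ k ∈ Finset.range 3, h0 ((τ + (k:ℂ))/3) ^ 2 * Φ 2 ((2*τ + 2*(k:ℂ))/3)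
      - (1/(3 * 6^4)) * ∑ k ∈ Finset.range 6, h0 ((τ + (k:ℂ))/3) ^ 2 * Φ 1 ((τ + (k:ℂ))/6))]

/-- The indices of the nine forms. -/
def formIdx : Fin 9 → ℕ := ![1, 2, 3, 4, 5, 2, 3, 4, 6]

theorem nineForms_eq_formVal (i : Fin 9) (τ : ℂ) (z : Fin 8 → ℂ) :
    nineForms i τ z = formVal τ (fun b τ' => Theta τ' fun j => b * z j) i := by
  fin_cases i <;>
    simp [nineForms, formVal, A1, A2, A3, A4, A5, AM, amVal, B2, B3, B4, B6]

/-- Linear combinations of the values `Φ b τ'` with `b τ = A τ' + C` and `A b = m`. -/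
inductive ThetaComb (τ : ℂ) (m : ℕ) : ((ℕ → ℂ → ℂ) → ℂ) → Prop
  | term (b : ℕ) (τ' : ℂ) (hτ' : 0 < τ'.im) (A : ℕ) (C : ℤ) (h : b * τ = A * τ' + C)
      (hm : A * b = m) : ThetaComb τ m fun Φ => Φ b τ'
  | add {L L' : (ℕ → ℂ → ℂ) → ℂ} : ThetaComb τ m L → ThetaComb τ m L' →
      ThetaComb τ m fun Φ => L Φ + L' Φ
  | mul (c : ℂ) {L : (ℕ → ℂ → ℂ) → ℂ} : ThetaComb τ m L → ThetaComb τ m fun Φ => c * L Φ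

namespace ThetaComb

variable {τ : ℂ} {m : ℕ} {L L' : (ℕ → ℂ → ℂ) → ℂ}

theorem sub (h : ThetaComb τ m L) (h' : ThetaComb τ m L') :
    ThetaComb τ m fun Φ => L Φ - L' Φ := by
  simpa [sub_eq_add_neg] using h.add (h'.mul (-1))

theorem sum (N : ℕ) {L : ℕ → (ℕ → ℂ → ℂ) → ℂ} (h : ∀ k, ThetaComb τ m (L (k + 1)))
    (h0 : ThetaComb τ m (L 0)) : ThetaComb τ m fun Φ => ∑ k ∈ Finset.range (N + 1), L k Φ := by
  induction N with
  | zero => simpa using h0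
  | succ N ih =>
    simp only [Finset.sum_range_succ _ (N + 1)]
    exact ih.add (h N)

theorem sum_range (N : ℕ) (hN : N ≠ 0) {L : ℕ → (ℕ → ℂ → ℂ) → ℂ} (h : ∀ k, ThetaComb τ m (L k)) :
    ThetaComb τ m fun Φ => ∑ k ∈ Finset.range N, L k Φ := by
  obtain ⟨n, rfl⟩ := Nat.exists_eq_succ_of_ne_zero hN
  exact sum n (fun k => h _) (h 0)

theorem hasDerivAt (hL : ThetaComb τ m L) {Φ : ℂ → ℕ → ℂ → ℂ} {Φ' : ℕ → ℂ → ℂ} {u : ℂ}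
    (h : ∀ b τ', 0 < τ'.im → HasDerivAt (fun u => Φ u b τ') (Φ' b τ') u) :
    HasDerivAt (fun u => L (Φ u)) (L Φ') u := by
  induction hL with
  | term b τ' hτ' A C _ _ => exact h b τ' hτ'
  | add _ _ ih ih' => exact ih.add ih'
  | mul c _ ih => exact ih.const_mul c

theorem contDiff (hL : ThetaComb τ m L) {E : Type*} [NormedAddCommGroup E] [NormedSpace ℂ E]
    {Φ : E → ℕ → ℂ → ℂ} (h : ∀ b τ', 0 < τ'.im → ContDiff ℂ 1 fun x => Φ x b τ') :
    ContDiff ℂ 1 fun x => L (Φ x) := by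
  induction hL with
  | term b τ' hτ' A C _ _ => exact h b τ' hτ'
  | add _ _ ih ih' => exact ih.add ih'
  | mul c _ ih => exact contDiff_const.mul ih

theorem scale (hL : ThetaComb τ m L) {Φ Ψ : ℕ → ℂ → ℂ} {t : ℂ}
    (h : ∀ (b : ℕ) (τ' : ℂ), 0 < τ'.im → ∀ (A : ℕ) (C : ℤ), b * τ = A * τ' + C →
      Ψ b τ' = t ^ (A * b) * Φ b τ') : L Ψ = t ^ m * L Φ := by
  induction hL with
  | term b τ' hτ' A C h1 h2 => simp only [h b τ' hτ' A C h1, h2]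
  | add _ _ ih ih' => simp only [ih, ih', mul_add]
  | mul c _ ih => simp only [ih, mul_left_comm c]

theorem const_mul_arg (hL : ThetaComb τ m L) (c : ℂ) {Φ Ψ : ℕ → ℂ → ℂ}
    (h : ∀ b τ', 0 < τ'.im → Ψ b τ' = c * Φ b τ') : L Ψ = c * L Φ := by
  induction hL with
  | term b τ' hτ' A C h1 h2 => exact h b τ' hτ'
  | add _ _ ih ih' => simp only [ih, ih', mul_add]
  | mul c' _ ih => simp only [ih, mul_left_comm c']

theorem amVal (m : ℕ) (hm : m ≠ 0) (hτ : 0 < τ.im) : ThetaComb τ m (amVal m τ) := by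
  have hm' : (0 : ℝ) < m := Nat.cast_pos.2 (Nat.pos_of_ne_zero hm)
  have hmC : (m : ℂ) ≠ 0 := Nat.cast_ne_zero.2 hm
  refine mul _ (add (term m _ ?_ 1 0 ?_ ?_) (mul _ (sum_range m hm fun k =>
    term 1 _ ?_ m (-k) ?_ ?_)))
  · simp [hm', hτ]
  · simp
  · simp
  · rw [Complex.div_natCast_im]
    simp; positivity
  · field_simp
    push_cast
    ring
  · simp

theorem formVal (hτ : 0 < τ.im) (i : Fin 9) :
    ThetaComb τ (formIdx i) fun Φ => formVal τ Φ i := by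
  fin_cases i
  · exact term 1 τ hτ 1 0 (by simp) rfl
  · exact amVal 2 two_ne_zero hτ
  · exact amVal 3 three_ne_zero hτ
  · exact term 2 τ hτ 2 0 (by simp) rfl
  · exact amVal 5 (by norm_num) hτ
  · refine mul _ (add (add (mul _ (term 2 _ ?_ 1 0 ?_ rfl)) (mul _ (term 1 _ ?_ 2 0 ?_ rfl)))
      (mul _ (term 1 _ ?_ 2 (-1) ?_ rfl))) <;> simp [hτ]
    · ring
    · ring
  · refine mul _ (sub (mul _ (term 3 _ ?_ 1 0 ?_ rfl)) (mul _ (sum_range 3 three_ne_zero fun k =>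
      mul _ (term 1 _ ?_ 3 (-k) ?_ rfl)))) <;> simp [hτ]
    ring
  · refine mul _ (sub (sub (mul _ (term 4 _ ?_ 1 0 ?_ rfl)) (mul _ (term 2 _ ?_ 2 (-1) ?_ rfl)))
      (mul _ (sum_range 4 four_ne_zero fun k =>
        mul _ (term 1 _ ?_ 4 (-k) ?_ rfl)))) <;> simp [hτ]
    · ring
    · ring
  · refine mul _ (sub (sub (add (mul _ (term 6 _ ?_ 1 0 ?_ rfl))
      (mul _ (sum_range 2 two_ne_zero fun k => mul _ (term 3 _ ?_ 2 (-(3 * k)) ?_ rfl))))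
      (mul _ (sum_range 3 three_ne_zero fun k => mul _ (term 2 _ ?_ 3 (-(2 * k)) ?_ rfl))))
      (mul _ (sum_range 6 (by norm_num) fun k => mul _ (term 1 _ ?_ 6 (-k) ?_ rfl)))) <;>
      simp [hτ]
    · ring
    · ring
    · ring

end ThetaComb

/-! ### The formal expansions of the nine forms -/

section Formal

variable {k l : Type*} [CommRing k] [CommRing l]

/-- `∑ X ^ (n ^ 2)`. -/
def th3Ser : PowerSeries k := evenSer false 1 1

/-- `∑ X ^ (n ^ 2 - n)`. -/
def psiSer : PowerSeries k := dilate 2 (oddSer 1 false 1 1)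

/-- The expansion of `h0`. -/
def h0Ser : PowerSeries k :=
  th3Ser * dilate 3 th3Ser + PowerSeries.X * (psiSer * dilate 3 psiSer)

/-- The expansion of `(m ^ 3 + 1) A_m`, given the expansions of the theta functions. -/
def amSer (m : ℕ) (F : ℕ → PowerSeries k) : PowerSeries k :=
  ((m ^ 3 : ℕ) : PowerSeries k) * dilate m (F m) + sect m (F 1)

/-- The expansions of multiples of the nine forms, given the expansions of the theta functions. -/
def formSer (F : ℕ → PowerSeries k) : Fin 9 → PowerSeries k :=
  ![F 1, amSer 2 F, amSer 3 F, F 2, amSer 5 F,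
    16 * (sect 2 (th3Ser ^ 4) * dilate 2 (F 2)) -
      sect 2 ((PowerSeries.X * psiSer ^ 4 + th3Ser ^ 4) * F 1),
    81 * (h0Ser ^ 2 * dilate 3 (F 3)) - sect 3 (h0Ser ^ 2 * F 1),
    256 * (PowerSeries.rescale (-1) (th3Ser ^ 4) * dilate 4 (F 4)) -
      16 * PowerSeries.rescale (-1) (th3Ser ^ 4 * F 2) -
      sect 4 (PowerSeries.X * psiSer ^ 4 * F 1),
    648 * (h0Ser ^ 2 * dilate 6 (F 6)) + 81 * sect 2 (dilate 2 (h0Ser ^ 2) * dilate 3 (F 3)) -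
      8 * sect 3 (h0Ser ^ 2 * dilate 2 (F 2)) - sect 6 (dilate 2 (h0Ser ^ 2) * F 1)]

/-- The scalars relating the forms to the formal expansions. -/
def formScale : Fin 9 → ℂ := ![1, 9, 28, 1, 126, 15, 80, 240, 720]

theorem map_th3Ser (φ : k →+* l) : PowerSeries.map φ th3Ser = th3Ser := by
  simp [th3Ser, map_evenSer]

theorem map_psiSer (φ : k →+* l) : PowerSeries.map φ psiSer = psiSer := by
  simp [psiSer, map_oddSer, map_dilate]

theorem map_h0Ser (φ : k →+* l) : PowerSeries.map φ h0Ser = h0Ser := by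
  simp [h0Ser, map_th3Ser, map_psiSer, map_dilate]

theorem map_formSer (φ : k →+* l) (F : ℕ → PowerSeries k) (i : Fin 9) :
    PowerSeries.map φ (formSer F i) = formSer (fun b => PowerSeries.map φ (F b)) i := by
  fin_cases i <;>
    simp [formSer, amSer, map_th3Ser, map_psiSer, map_h0Ser, map_dilate, map_sect, map_rescale,
      map_ofNat (PowerSeries.map φ)]

end Formal

namespace HasEv

variable {τ : ℂ} {F : PowerSeries ℂ} {v : ℂ}

theorem of_eq {y w : ℂ} {G : PowerSeries ℂ} (h : HasEv y F v) (hF : F = G) (hv : v = w) :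
    HasEv y G w := hF ▸ hv ▸ h

theorem ofNat {y : ℂ} (n : ℕ) [n.AtLeastTwo] :
    HasEv y (OfNat.ofNat n : PowerSeries ℂ) (OfNat.ofNat n) := by
  exact_mod_cast HasEv.natCast (y := y) (OfNat.ofNat n)

theorem dilate_qExp (b : ℕ) (hb : b ≠ 0) (h : HasEv (qExp (b * τ)) F v) :
    HasEv (qExp τ) (E8Jacobi.dilate b F) v := by
  refine HasEv.dilate hb ?_
  rwa [qExp, ← Complex.exp_nat_mul, show (b : ℂ) * (2 * πC * I * τ) = 2 * πC * I * (b * τ) by ring]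

theorem sect_qExp (m : ℕ) (hm : m ≠ 0) {v : ℕ → ℂ}
    (h : ∀ k : ℕ, HasEv (qExp ((τ + k) / m)) F (v k)) :
    HasEv (qExp τ) (E8Jacobi.sect m F) ((m : ℂ)⁻¹ * ∑ k ∈ Finset.range m, v k) := by
  have hm' : (m : ℂ) ≠ 0 := Nat.cast_ne_zero.2 hm
  have h1 := HasEv.sect hm (Complex.isPrimitiveRoot_exp m hm) (F := F) (v := v)
    (y := qExp (τ / m)) fun k _ => ?_
  · rwa [qExp, ← Complex.exp_nat_mul,
      show (m : ℂ) * (2 * πC * I * (τ / m)) = 2 * πC * I * τ by field_simp] at h1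
  · convert h k using 1
    rw [qExp, qExp, ← Complex.exp_nat_mul, ← Complex.exp_add]
    congr 1
    simp only [πC]
    field_simp
    ring

theorem th3Ser (hτ : 0 < τ.im) : HasEv (qExp τ) th3Ser (th3 0 (2 * τ)) := by
  have h := hasEv_evenSer false 0 (τ := 2 * τ) (by simpa using hτ) (Or.inl ⟨rfl, rfl⟩)
  have h2 : th3 0 (2 * τ) = thSlot false 0 0 0 (2 * τ) := by
    rw [← (hasSum_thSlot false 0 0 0 (by simpa using hτ)).tsum_eq]
    simp [th3, thTerm]
  rw [h2, E8Jacobi.th3Ser, qExp]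
  convert h using 1
  · rw [one_mul]; congr 1; ring
  · simp

theorem th3Ser_neg (hτ : 0 < τ.im) :
    HasEv (qExp τ) (PowerSeries.rescale (-1) E8Jacobi.th3Ser) (th4 0 (2 * τ)) := by
  have h := hasEv_evenSer false 0 (τ := 2 * τ) (by simpa using hτ) (Or.inr ⟨rfl, rfl⟩)
  have h2 : th4 0 (2 * τ) = thSlot false (1 / 2) 0 0 (2 * τ) := by
    rw [← (hasSum_thSlot false (1 / 2) 0 0 (by simpa using hτ)).tsum_eq]
    simp only [th4, thTerm, exp_half_mul]
    simp
  rw [h2, E8Jacobi.th3Ser]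
  refine HasEv.rescale ?_
  rw [qExp]
  convert h using 1
  · congr 2; ring
  · simp

theorem psiSer (hτ : 0 < τ.im) :
    HasEv (qExp τ) psiSer (Complex.exp (-(πC * I * τ / 2)) * th2 0 (2 * τ)) := by
  have h := hasEv_oddSer false 0 (τ := 2 * τ) (by simpa using hτ) (Or.inl ⟨rfl, rfl⟩)
  have h2 : th2 0 (2 * τ) = thSlot false 0 (1 / 2) 0 (2 * τ) := by
    rw [← (hasSum_thSlot false 0 (1 / 2) 0 (by simpa using hτ)).tsum_eq]
    simp [th2, thTerm]
  rw [h2, E8Jacobi.psiSer]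
  refine HasEv.dilate_qExp 2 two_ne_zero ?_
  rw [Nat.cast_ofNat]
  refine of_eq h (by simp) ?_
  congr 2
  ring

theorem th2_pow_four (hτ : 0 < τ.im) :
    HasEv (qExp τ) (PowerSeries.X * E8Jacobi.psiSer ^ 4) (th2 0 (2 * τ) ^ 4) := by
  convert HasEv.X.mul ((HasEv.psiSer hτ).pow 4) using 1
  rw [mul_pow, ← Complex.exp_nat_mul, qExp, ← mul_assoc, ← Complex.exp_add]
  simp only [Nat.cast_ofNat]
  rw [show 2 * πC * I * τ + 4 * -(πC * I * τ / 2) = 0 by ring, Complex.exp_zero, one_mul]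

theorem _root_.E8Jacobi.th3_add_one (τ : ℂ) : th3 0 (τ + 1) = th4 0 τ := by
  refine tsum_congr fun n => ?_
  have h : Complex.exp (πC * I * (n : ℂ) ^ 2) = (-1) ^ n := by
    have h1 : πC * I * (n : ℂ) ^ 2 = ((n ^ 2 : ℤ) : ℂ) * (Real.pi * I) := by
      simp only [πC]; push_cast; ring
    rw [h1, Complex.exp_int_mul, Complex.exp_pi_mul_I]
    rcases Int.even_or_odd n with hn | hn
    · rw [hn.neg_one_zpow, Even.neg_one_zpow (hn.pow_of_ne_zero two_ne_zero)]
    · rw [hn.neg_one_zpow, Odd.neg_one_zpow hn.pow]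
  rw [show πC * I * (τ + 1) * (n : ℂ) ^ 2 = πC * I * n ^ 2 + πC * I * τ * n ^ 2 by ring,
    Complex.exp_add, h]
  simp

theorem _root_.E8Jacobi.th2_add_one_pow_four (τ : ℂ) : th2 0 (τ + 1) ^ 4 = -th2 0 τ ^ 4 := by
  have h : th2 0 (τ + 1) = Complex.exp (πC * I / 4) * th2 0 τ := by
    rw [th2, th2, ← tsum_mul_left]
    refine tsum_congr fun n => ?_
    have h1 : πC * I * (τ + 1) * ((n : ℂ) - 1 / 2) ^ 2 =
        (n * (n - 1) / 2 : ℤ) * (2 * Real.pi * I) + πC * I / 4 +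
          πC * I * τ * ((n : ℂ) - 1 / 2) ^ 2 := by
      obtain ⟨c, hc⟩ : (2 : ℤ) ∣ n * (n - 1) := (Int.even_mul_pred_self n).two_dvd
      have hc' : (n : ℂ) * (n - 1) = 2 * c := by exact_mod_cast congrArg (Int.cast (R := ℂ)) hc
      rw [hc, Int.mul_ediv_cancel_left _ two_ne_zero, πC]
      linear_combination Real.pi * I * hc'
    rw [h1, Complex.exp_add, Complex.exp_add, Complex.exp_int_mul_two_pi_mul_I]
    ring
  rw [h, mul_pow, ← Complex.exp_nat_mul, πC, show ((4 : ℕ) : ℂ) * (Real.pi * I / 4) = Real.pi * I by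
    push_cast; ring, Complex.exp_pi_mul_I, neg_one_mul]

theorem h0Ser (hτ : 0 < τ.im) : HasEv (qExp τ) h0Ser (h0 τ) := by
  have h3 : 0 < (((3 : ℕ) : ℂ) * τ).im := by simpa using hτ
  have h1 := (HasEv.th3Ser hτ).mul (HasEv.dilate_qExp 3 three_ne_zero (HasEv.th3Ser h3))
  have h2 := HasEv.X.mul
    ((HasEv.psiSer hτ).mul (HasEv.dilate_qExp 3 three_ne_zero (HasEv.psiSer h3)))
  refine of_eq (h1.add h2) rfl ?_
  rw [E8Jacobi.h0, Nat.cast_ofNat, show 2 * (3 * τ) = 6 * τ by ring]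
  congr 1
  rw [mul_mul_mul_comm, ← Complex.exp_add, ← mul_assoc, qExp, ← Complex.exp_add,
    show 2 * πC * I * τ + (-(πC * I * τ / 2) + -(πC * I * (3 * τ) / 2)) = 0 by ring,
    Complex.exp_zero, one_mul]

variable {Fs : ℕ → PowerSeries ℂ} {Φ : ℕ → ℂ → ℂ}

theorem amSer (m : ℕ) (hm : m ≠ 0) (hτ : 0 < τ.im)
    (h : ∀ b τ', 0 < τ'.im → HasEv (qExp τ') (Fs b) (Φ b τ')) :
    HasEv (qExp τ) (amSer m Fs) (((m : ℂ) ^ 3 + 1) * amVal m τ Φ) := by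
  have hm' : (0 : ℝ) < m := Nat.cast_pos.2 (Nat.pos_of_ne_zero hm)
  have h1 : ((m : ℂ) ^ 3 + 1) ≠ 0 := by exact_mod_cast Nat.succ_ne_zero (m ^ 3)
  have h2 : (m : ℂ) ≠ 0 := Nat.cast_ne_zero.2 hm
  refine of_eq (((HasEv.natCast (m ^ 3)).mul (HasEv.dilate_qExp m hm
    (h m (m * τ) (by simp [hm', hτ])))).add
    (HasEv.sect_qExp m hm fun k => h 1 ((τ + k) / m) ?_)) rfl ?_
  · rw [Complex.div_natCast_im]
    simp; positivity
  · rw [E8Jacobi.amVal]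
    push_cast
    field_simp

theorem _root_.E8Jacobi.add_div_im_pos (hτ : 0 < τ.im) (m : ℕ) (hm : m ≠ 0) (k : ℕ) :
    0 < ((τ + k) / (m : ℂ)).im := by
  have hm' : (0 : ℝ) < m := Nat.cast_pos.2 (Nat.pos_of_ne_zero hm)
  rw [Complex.div_natCast_im]
  simp; positivity

theorem _root_.E8Jacobi.natCast_mul_im_pos (m : ℕ) (hm : m ≠ 0) {τ : ℂ} (hτ : 0 < τ.im) :
    0 < ((m : ℂ) * τ).im := by
  have hm' : (0 : ℝ) < m := Nat.cast_pos.2 (Nat.pos_of_ne_zero hm)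
  simp [hm', hτ]

theorem formSer_b4 (hτ : 0 < τ.im)
    (h : ∀ b τ', 0 < τ'.im → HasEv (qExp τ') (Fs b) (Φ b τ')) :
    HasEv (qExp τ) (E8Jacobi.formSer Fs 7) (formScale 7 * formVal τ Φ 7) := by
  have hq : -1 * qExp τ = qExp (τ + 1 / 2) := by
    rw [qExp, qExp, mul_add, Complex.exp_add, πC,
      show 2 * (Real.pi : ℂ) * I * (1 / 2) = Real.pi * I by ring, Complex.exp_pi_mul_I]
    ring
  have hτ2 : 0 < (τ + 1 / 2).im := by simpa using hτ
  have e : 2 * (τ + 1 / 2) = 2 * τ + 1 := by ring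
  have e4 (k : ℕ) : 2 * ((τ + k) / ((4 : ℕ) : ℂ)) = (τ + k) / 2 := by push_cast; ring
  refine of_eq ((((HasEv.ofNat 256).mul (((HasEv.th3Ser_neg hτ).pow 4).mul
    (HasEv.dilate_qExp 4 four_ne_zero (h 4 _ (natCast_mul_im_pos 4 four_ne_zero hτ))))).sub
    ((HasEv.ofNat 16).mul (HasEv.rescale (a := -1) (y := qExp τ) (F := E8Jacobi.th3Ser ^ 4 * Fs 2)
      (by rw [hq]; exact ((HasEv.th3Ser hτ2).pow 4).mul (h 2 _ hτ2))))).sub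
    (HasEv.sect_qExp 4 four_ne_zero fun k =>
      (HasEv.th2_pow_four (add_div_im_pos hτ 4 four_ne_zero k)).mul (h 1 _ (add_div_im_pos hτ 4 four_ne_zero k)))) (by simp [E8Jacobi.formSer]) ?_
  simp only [formScale, formVal, e, e4, th3_add_one]
  simp
  ring

theorem formSer_b6 (hτ : 0 < τ.im)
    (h : ∀ b τ', 0 < τ'.im → HasEv (qExp τ') (Fs b) (Φ b τ')) :
    HasEv (qExp τ) (E8Jacobi.formSer Fs 8) (formScale 8 * formVal τ Φ 8) := by
  refine of_eq (((((HasEv.ofNat 648).mul (((HasEv.h0Ser hτ).pow 2).mul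
    (HasEv.dilate_qExp 6 (by norm_num) (h 6 _ (natCast_mul_im_pos 6 (by norm_num) hτ))))).add ((HasEv.ofNat 81).mul
      (HasEv.sect_qExp 2 two_ne_zero fun k =>
        (HasEv.dilate_qExp 2 two_ne_zero
          ((HasEv.h0Ser (natCast_mul_im_pos 2 two_ne_zero
            (add_div_im_pos hτ 2 two_ne_zero k))).pow 2)).mul
        (HasEv.dilate_qExp 3 three_ne_zero (h 3 _ (natCast_mul_im_pos 3 three_ne_zero
          (add_div_im_pos hτ 2 two_ne_zero k))))))).sub
    ((HasEv.ofNat 8).mul (HasEv.sect_qExp 3 three_ne_zero fun k =>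
      ((HasEv.h0Ser (add_div_im_pos hτ 3 three_ne_zero k)).pow 2).mul
        (HasEv.dilate_qExp 2 two_ne_zero (h 2 _ (natCast_mul_im_pos 2 two_ne_zero
          (add_div_im_pos hτ 3 three_ne_zero k))))))).sub
    (HasEv.sect_qExp 6 (by norm_num) fun k =>
      (HasEv.dilate_qExp 2 two_ne_zero
          ((HasEv.h0Ser (natCast_mul_im_pos 2 two_ne_zero
            (add_div_im_pos hτ 6 (by norm_num) k))).pow 2)).mul
        (h 1 _ (add_div_im_pos hτ 6 (by norm_num) k)))) rfl ?_
  simp only [formScale, formVal]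
  have e1 (k : ℕ) : ((2 : ℕ) : ℂ) * ((τ + k) / ((2 : ℕ) : ℂ)) = τ + k := by push_cast; ring
  have e2 (k : ℕ) : ((3 : ℕ) : ℂ) * ((τ + k) / ((2 : ℕ) : ℂ)) = (3 * τ + 3 * k) / 2 := by
    push_cast; ring
  have e3 (k : ℕ) : ((2 : ℕ) : ℂ) * ((τ + k) / ((3 : ℕ) : ℂ)) = (2 * τ + 2 * k) / 3 := by
    push_cast; ring
  have e4 (k : ℕ) : ((2 : ℕ) : ℂ) * ((τ + k) / ((6 : ℕ) : ℂ)) = (τ + k) / 3 := by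
    push_cast; ring
  simp only [e1, e2, e3, e4]
  simp
  ring

theorem formSer (hτ : 0 < τ.im)
    (h : ∀ b τ', 0 < τ'.im → HasEv (qExp τ') (Fs b) (Φ b τ')) (i : Fin 9) :
    HasEv (qExp τ) (formSer Fs i) (formScale i * formVal τ Φ i) := by
  fin_cases i
  · simpa [E8Jacobi.formSer, formScale, formVal] using h 1 τ hτ
  · have := HasEv.amSer 2 two_ne_zero hτ h
    norm_num at this
    simpa [E8Jacobi.formSer, formScale, formVal] using this
  · have := HasEv.amSer 3 three_ne_zero hτ h
    norm_num at this
    simpa [E8Jacobi.formSer, formScale, formVal] using this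
  · simpa [E8Jacobi.formSer, formScale, formVal] using h 2 τ hτ
  · have := HasEv.amSer 5 (by norm_num) hτ h
    norm_num at this
    simpa [E8Jacobi.formSer, formScale, formVal] using this
  · have hs (k : ℕ) := HasEv.th3Ser (add_div_im_pos hτ 2 two_ne_zero k)
    have ht (k : ℕ) := HasEv.th2_pow_four (add_div_im_pos hτ 2 two_ne_zero k)
    have e (k : ℕ) : 2 * ((τ + k) / ((2 : ℕ) : ℂ)) = τ + k := by push_cast; ring
    refine of_eq (((HasEv.ofNat 16).mul ((HasEv.sect_qExp 2 two_ne_zero fun k => (hs k).pow 4).mul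
      (HasEv.dilate_qExp 2 two_ne_zero (h 2 _ (natCast_mul_im_pos 2 two_ne_zero hτ))))).sub
      (HasEv.sect_qExp 2 two_ne_zero fun k => ((ht k).add ((hs k).pow 4)).mul
        (h 1 _ (add_div_im_pos hτ 2 two_ne_zero k)))) rfl ?_
    rw [show ((fun i => i) ⟨5, by norm_num⟩ : Fin 9) = 5 from rfl]
    simp only [formScale, formVal, e, ee1, ee2, ee3]
    simp [Finset.sum_range_succ, th3_add_one, th2_add_one_pow_four]
    ring
  · refine of_eq (((HasEv.ofNat 81).mul (((HasEv.h0Ser hτ).pow 2).mul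
      (HasEv.dilate_qExp 3 three_ne_zero (h 3 _ (natCast_mul_im_pos 3 three_ne_zero hτ))))).sub
      (HasEv.sect_qExp 3 three_ne_zero fun k =>
        ((HasEv.h0Ser (add_div_im_pos hτ 3 three_ne_zero k)).pow 2).mul
          (h 1 _ (add_div_im_pos hτ 3 three_ne_zero k)))) rfl ?_
    simp only [formScale, formVal]
    simp
    ring
  · exact formSer_b4 hτ h
  · exact formSer_b6 hτ h

end HasEv

/-! ### Truncated power series modulo 37 as lists -/

/-- The list `l` consists of the first coefficients of `F`. -/
def Rep (l : List ℕ) (F : PowerSeries (ZMod 37)) : Prop :=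
  ∀ i < l.length, PowerSeries.coeff i F = (l.getD i 0 : ℕ)

/-- The list of the first `n` values of `f`. -/
def tabL (n : ℕ) (f : ℕ → ℕ) : List ℕ := (List.range n).map f

/-- The sum of truncated power series. -/
def addL (a b : List ℕ) : List ℕ := List.zipWith (fun x y => (x + y) % 37) a b

/-- The difference of truncated power series. -/
def subL (a b : List ℕ) : List ℕ := List.zipWith (fun x y => (x + 36 * y) % 37) a b

/-- A multiple of a truncated power series. -/
def smulL (c : ℕ) (a : List ℕ) : List ℕ := a.map fun x => c * x % 37

/-- The product of truncated power series. -/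
def mulL : List ℕ → List ℕ → List ℕ
  | [], _ => []
  | 0 :: as, b => 0 :: mulL as b
  | a :: as, b => addL (smulL a b) (0 :: mulL as b)

/-- The power series `1`, truncated. -/
def oneL (n : ℕ) : List ℕ := 1 :: List.replicate n 0

/-- The product of a list of truncated power series. -/
def prodL (n : ℕ) : List (List ℕ) → List ℕ
  | [] => oneL n
  | a :: as => mulL a (prodL n as)

/-- The truncation of `sect m`. -/
def sectL (m : ℕ) (l : List ℕ) : List ℕ :=
  tabL ((l.length + m - 1) / m) fun i => l.getD (m * i) 0

/-- The truncation of `dilate m`. -/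
def dilateL (b : ℕ) (l : List ℕ) : List ℕ :=
  tabL (b * l.length) fun i => if i % b = 0 then l.getD (i / b) 0 else 0

/-- The truncation of `rescale (-1)`. -/
def negL (l : List ℕ) : List ℕ :=
  tabL l.length fun i => 36 ^ i * l.getD i 0 % 37

/-- The truncation of a sparse series, from a list of one plus the indices of the nonzero terms. -/
def sparseL (idx : List ℕ) (d : ℕ → ℕ) : List ℕ :=
  idx.map fun r => if r = 0 then 0 else d (r - 1) % 37

theorem length_tabL (n : ℕ) (f : ℕ → ℕ) : (tabL n f).length = n := by simp [tabL]

theorem getD_tabL {n i : ℕ} (f : ℕ → ℕ) (h : i < n) : (tabL n f).getD i 0 = f i := by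
  simp [tabL, h]

theorem getD_replicate_zero (n i : ℕ) : (List.replicate n 0).getD i 0 = 0 := by simp

namespace Rep

variable {a b l : List ℕ} {F G : PowerSeries (ZMod 37)}

theorem tab {n : ℕ} {f : ℕ → ℕ} (h : ∀ i < n, PowerSeries.coeff i F = (f i : ℕ)) :
    Rep (tabL n f) F := by
  intro i hi
  rw [length_tabL] at hi
  rw [getD_tabL f hi, h i hi]

theorem add (ha : Rep a F) (hb : Rep b G) : Rep (addL a b) (F + G) := by
  intro i hi
  simp only [addL, List.length_zipWith, lt_min_iff] at hi
  have h1 := ha i hi.1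
  have h2 := hb i hi.2
  simp only [List.getD_eq_getElem _ _ hi.1, List.getD_eq_getElem _ _ hi.2] at h1 h2
  rw [addL, List.getD_eq_getElem _ _ (by simpa using hi), List.getElem_zipWith, map_add, h1, h2,
    ZMod.natCast_mod, Nat.cast_add]

theorem sub (ha : Rep a F) (hb : Rep b G) : Rep (subL a b) (F - G) := by
  intro i hi
  simp only [subL, List.length_zipWith, lt_min_iff] at hi
  have h1 := ha i hi.1
  have h2 := hb i hi.2
  have h3 : ((36 : ℕ) : ZMod 37) = -1 := by decide
  simp only [List.getD_eq_getElem _ _ hi.1, List.getD_eq_getElem _ _ hi.2] at h1 h2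
  rw [subL, List.getD_eq_getElem _ _ (by simpa using hi), List.getElem_zipWith, map_sub, h1, h2,
    ZMod.natCast_mod, Nat.cast_add, Nat.cast_mul, h3]
  ring

theorem smul (c : ℕ) (ha : Rep a F) : Rep (smulL c a) (c * F) := by
  intro i hi
  simp only [smulL, List.length_map] at hi
  have h1 := ha i hi
  simp only [List.getD_eq_getElem _ _ hi] at h1
  rw [smulL, List.getD_eq_getElem _ _ (by simpa using hi), List.getElem_map,
    ZMod.natCast_mod, Nat.cast_mul, ← h1, ← map_natCast (PowerSeries.C), PowerSeries.coeff_C_mul]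

theorem ofNat_mul (c : ℕ) [c.AtLeastTwo] (ha : Rep a F) :
    Rep (smulL c a) ((OfNat.ofNat c : PowerSeries (ZMod 37)) * F) := smul c ha

theorem X_mul (ha : Rep a F) : Rep (0 :: a) (PowerSeries.X * F) := by
  intro i hi
  cases i with
  | zero => simp
  | succ i =>
    rw [PowerSeries.coeff_succ_X_mul, List.getD_cons_succ]
    exact ha i (by simpa using hi)

theorem mul (ha : Rep a F) (hb : Rep b G) : Rep (mulL a b) (F * G) := by
  induction a generalizing F with
  | nil => intro i hi; simp [mulL] at hi
  | cons c as ih =>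
    have h1 := PowerSeries.eq_X_mul_shift_add_const F
    have h2 : Rep as (PowerSeries.mk fun p => PowerSeries.coeff (p + 1) F) := by
      intro i hi
      rw [PowerSeries.coeff_mk, ha (i + 1) (by simpa using hi), List.getD_cons_succ]
    have h3 : PowerSeries.constantCoeff F = (c : ZMod 37) := by
      simpa using ha 0 (by simp)
    have h4 : F * G = (c : PowerSeries (ZMod 37)) * G +
        PowerSeries.X * ((PowerSeries.mk fun p => PowerSeries.coeff (p + 1) F) * G) := by
      rw [← mul_assoc, ← add_mul, add_comm, ← map_natCast PowerSeries.C, ← h3, ← h1]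
    rw [h4]
    rcases c with _ | c
    · simpa [mulL] using X_mul (ih h2)
    · simpa only [mulL] using (smul (c + 1) hb).add (X_mul (ih h2))

theorem one (n : ℕ) : Rep (oneL n) 1 := by
  intro i hi
  cases i with
  | zero => simp [oneL]
  | succ i =>
    rw [PowerSeries.coeff_one, oneL, List.getD_cons_succ]
    simp

theorem prod (n : ℕ) {ls : List (List ℕ)} {Fs : List (PowerSeries (ZMod 37))}
    (h : List.Forall₂ Rep ls Fs) : Rep (prodL n ls) Fs.prod := by
  induction h with
  | nil => exact one n
  | cons h1 _ ih => rw [List.prod_cons]; exact h1.mul ih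

theorem pow (n m : ℕ) (h : Rep l F) : Rep (prodL n (List.replicate m l)) (F ^ m) := by
  induction m with
  | zero => simpa [prodL] using one n
  | succ m ih => rw [pow_succ', List.replicate_succ]; exact h.mul ih

theorem sect (m : ℕ) (hm : 0 < m) (h : Rep l F) : Rep (sectL m l) (sect m F) := by
  refine tab fun i hi => ?_
  rw [E8Jacobi.sect, PowerSeries.coeff_mk]
  refine h _ ?_
  have h1 := (Nat.le_div_iff_mul_le hm).1 (Nat.succ_le_of_lt hi)
  rw [Nat.succ_mul, mul_comm] at h1
  omega

theorem dilate (b : ℕ) (h : Rep l F) : Rep (dilateL b l) (dilate b F) := by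
  refine tab fun i hi => ?_
  rw [E8Jacobi.dilate, PowerSeries.coeff_mk]
  simp only [Nat.dvd_iff_mod_eq_zero]
  split_ifs
  · exact h _ (Nat.div_lt_of_lt_mul hi)
  · simp

theorem rescale (h : Rep l F) : Rep (negL l) (PowerSeries.rescale (-1) F) := by
  refine tab fun i hi => ?_
  have h3 : ((36 : ℕ) : ZMod 37) = -1 := by decide
  rw [PowerSeries.coeff_rescale, h i hi, ZMod.natCast_mod, Nat.cast_mul, Nat.cast_pow, h3]

theorem sparse {g : ℕ → ℕ} {idx : List ℕ} {d : ℕ → ℕ} {d' : ℕ → ZMod 37}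
    (hg : ∀ i < idx.length, ∀ r < i + 1, g r = i ↔ idx.getD i 0 = r + 1)
    (hidx : ∀ i < idx.length, idx.getD i 0 ≤ i + 1)
    (hd : ∀ r, d' r = d r) : Rep (sparseL idx d) (sparse g d') := by
  intro i hi
  simp only [sparseL, List.length_map] at hi
  rw [E8Jacobi.sparse, PowerSeries.coeff_mk, sparseL, List.getD_eq_getElem _ _ (by simpa using hi),
    List.getElem_map]
  have h1 := hidx i hi
  have h2 := hg i hi
  rw [List.getD_eq_getElem _ _ hi] at h1 h2
  rcases h : idx[i] with _ | r
  · rw [Finset.sum_eq_zero]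
    · simp
    · intro r hr
      rw [if_neg]
      rw [h2 r (Finset.mem_range.1 hr), h]
      simp
  · rw [h] at h1
    rw [Finset.sum_eq_single r]
    · rw [if_pos ((h2 r (by omega)).2 h), if_neg (by simp), ZMod.natCast_mod]
      simp [hd]
    · intro s hs hsr
      rw [if_neg]
      rw [h2 s (Finset.mem_range.1 hs), h]
      omega
    · intro hr
      simp at hr
      omega

end Rep

/-! ### The Jacobian matrix modulo 37 -/

/-- One plus the square roots of the squares below 50. -/
def sqIdx : List ℕ :=
  [1, 2, 0, 0, 3, 0, 0, 0, 0, 4, 0, 0, 0, 0, 0, 0, 5, 0, 0, 0, 0, 0, 0, 0, 0, 6, 0, 0, 0, 0, 0,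
   0, 0, 0, 0, 0, 7, 0, 0, 0, 0, 0, 0, 0, 0, 0, 0, 0, 0, 8]

/-- One plus the indices of the triangular numbers below 25. -/
def triIdx : List ℕ :=
  [1, 2, 0, 3, 0, 0, 4, 0, 0, 0, 5, 0, 0, 0, 0, 6, 0, 0, 0, 0, 0, 7, 0, 0, 0]

/-- The truncation of `evenSer`. -/
def evenL (n : ℕ) (d : Bool) (x y : ℕ) : List ℕ :=
  sparseL (sqIdx.take n) fun r => if d then 2 * r * (x ^ (2 * r) + 36 * y ^ (2 * r))
    else if r = 0 then 1 else x ^ (2 * r) + y ^ (2 * r)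

/-- The truncation of `oddSer`. -/
def oddL (n : ℕ) (ε : ℕ) (d : Bool) (x y : ℕ) : List ℕ :=
  sparseL (triIdx.take n) fun r => if d then
      ε ^ r * (2 * r + 1) * (ε * x ^ (2 * r + 1) + 36 * y ^ (2 * r + 1))
    else ε ^ r * (ε * x ^ (2 * r + 1) + y ^ (2 * r + 1))

/-- The exponents of the evaluation point. -/
def evExp : Fin 8 → ℕ := ![0, 1, 2, 3, 4, 5, 6, 8]

/-- The precision to which the theta series are needed. -/
def thetaPrec : ℕ → ℕ
  | 1 => 25
  | 2 => 8
  | 3 => 3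
  | 4 => 2
  | _ => 1

/-- The truncation of `thetaHat`. -/
def thetaL (s : Fin 9) (b : ℕ) : List ℕ :=
  let n := thetaPrec b
  smulL (if s = 0 then 1 else b)
    (addL (smulL 2 (sectL 2 (prodL (2 * n) (List.ofFn fun j : Fin 8 =>
        evenL (2 * n) (s = j.succ) ((2 ^ evExp j) ^ b % 37) ((19 ^ evExp j) ^ b % 37)))))
      (0 :: addL
        (prodL n (List.ofFn fun j : Fin 8 =>
          oddL n 1 (s = j.succ) ((2 ^ evExp j) ^ b % 37) ((19 ^ evExp j) ^ b % 37)))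
        (prodL n (List.ofFn fun j : Fin 8 =>
          oddL n 36 (s = j.succ) ((2 ^ evExp j) ^ b % 37) ((19 ^ evExp j) ^ b % 37)))))

/-- The truncation of `th3Ser`. -/
def th3L : List ℕ := evenL 25 false 1 1

/-- The truncation of `psiSer`. -/
def psiL : List ℕ := dilateL 2 (oddL 13 1 false 1 1)

/-- The truncation of `h0Ser`. -/
def h0L : List ℕ :=
  addL (mulL th3L (dilateL 3 th3L)) (0 :: mulL psiL (dilateL 3 psiL))

/-- The truncation of `amSer`. -/
def amL (m : ℕ) (F : ℕ → List ℕ) : List ℕ :=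
  addL (smulL (m ^ 3) (dilateL m (F m))) (sectL m (F 1))

/-- The truncation of `formSer`, from truncations of `th3Ser ^ 4`, `X * psiSer ^ 4` and
`h0Ser ^ 2`. -/
def formL (A B H : List ℕ) (F : ℕ → List ℕ) : Fin 9 → List ℕ :=
  ![F 1, amL 2 F, amL 3 F, F 2, amL 5 F,
    subL (smulL 16 (mulL (sectL 2 A) (dilateL 2 (F 2)))) (sectL 2 (mulL (addL B A) (F 1))),
    subL (smulL 81 (mulL H (dilateL 3 (F 3)))) (sectL 3 (mulL H (F 1))),
    subL (subL (smulL 256 (mulL (negL A) (dilateL 4 (F 4)))) (smulL 16 (negL (mulL A (F 2)))))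
      (sectL 4 (mulL B (F 1))),
    subL (subL (addL (smulL 648 (mulL H (dilateL 6 (F 6))))
        (smulL 81 (sectL 2 (mulL (dilateL 2 H) (dilateL 3 (F 3))))))
      (smulL 8 (sectL 3 (mulL H (dilateL 2 (F 2)))))) (sectL 6 (mulL (dilateL 2 H) (F 1)))]

/-- Coefficients of a left inverse, up to `X ^ 4`, of the Jacobian matrix. -/
def leftInv : Fin 9 → Fin 9 → List ℕ :=
  ![![[0, 0, 0, 0, 19], [], [], [], [], [], [], [], []],
    ![[14, 23, 10, 8, 1], [23, 22, 9, 28], [3, 7, 2, 16], [7, 31, 4, 15], [0, 7, 29, 2],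
      [32, 17, 9], [21, 30], [24, 30, 23], [0, 20]],
    ![[22, 10, 34, 33, 31], [15, 8, 35, 10], [10, 7, 31, 23], [11, 17, 14, 32], [0, 11, 36, 34],
      [8, 27, 18], [33, 22], [6, 26, 30], [0, 5]],
    ![[4, 13, 21, 33, 11], [33, 11, 3, 24], [22, 23, 19, 19], [2, 30, 6, 10], [0, 2, 7, 28],
      [25, 6, 34], [6, 19], [28, 35, 22], [0, 11]],
    ![[23, 26, 14, 2, 1], [14, 9, 30, 34], [34, 10, 35, 28], [30, 6, 14, 7], [0, 30, 13, 23],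
      [5, 32, 25], [16, 24], [13, 7, 8], [0, 17]],
    ![[35, 34, 35, 0, 29], [2, 2, 2, 2], [26, 32, 5, 25], [36, 22, 25, 4], [0, 36, 18, 1],
      [6, 19, 7], [34, 34], [23, 1, 29], [0, 13]],
    ![[20, 7, 9, 33, 12], [17, 10, 28, 11], [36, 2, 12, 30], [10, 2, 10, 13], [0, 10, 17, 4],
      [14, 9, 29], [30, 19], [29, 27, 15], [0, 18]],
    ![[19, 32, 1, 27, 5], [18, 7, 35, 4], [12, 17, 16, 34], [28, 13, 12, 10], [0, 28, 17, 4],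
      [17, 8, 16], [10, 35], [22, 9, 23], [0, 6]],
    ![[6, 4, 28, 26, 5], [31, 15, 28, 1], [33, 11, 1, 29], [3, 8, 8, 26], [0, 3, 21, 18],
      [19, 12, 33], [9, 5], [5, 34, 30], [0, 35]]]

/-- The truncation of the Jacobian matrix. -/
def jacL (i s : Fin 9) : List ℕ :=
  smulL (if s = 0 then formIdx i else 1)
    (formL (prodL 25 (List.replicate 4 th3L)) (0 :: prodL 25 (List.replicate 4 psiL))
      (prodL 25 (List.replicate 2 h0L)) (thetaL s) i)

/-- The product of the left inverse and the Jacobian matrix. -/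
def leftInvMulJac (i j : Fin 9) : List ℕ :=
  (List.ofFn fun k : Fin 9 => mulL (leftInv i k ++ List.replicate 5 0) (jacL k j)).foldr addL
    (List.replicate 5 0)

theorem leftInvMulJac_eq : ∀ j i : Fin 9,
    leftInvMulJac i j = if i = j then [0, 0, 0, 0, 1] else [0, 0, 0, 0, 0] := by
  decide +kernel

namespace Rep

theorem even {n : ℕ} (d : Bool) {x y : ℕ} {x' y' : ZMod 37} (hx : x' = x) (hy : y' = y) :
    Rep (evenL n d x y) (evenSer d x' y') := by
  have h3 : (36 : ZMod 37) = -1 := by decide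
  have hidx : ∀ i < sqIdx.length, (∀ r < i + 1, r ^ 2 = i ↔ sqIdx.getD i 0 = r + 1) ∧
      sqIdx.getD i 0 ≤ i + 1 := by decide +kernel
  refine sparse (fun i hi => ?_) (fun i hi => ?_) fun r => ?_
  · have hi' := (List.length_take ▸ hi)
    rw [lt_min_iff] at hi'
    rw [List.getD_eq_getElem _ _ hi, List.getElem_take, ← List.getD_eq_getElem _ 0]
    exact (hidx i hi'.2).1
  · have hi' := (List.length_take ▸ hi)
    rw [lt_min_iff] at hi'
    rw [List.getD_eq_getElem _ _ hi, List.getElem_take, ← List.getD_eq_getElem _ 0]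
    exact (hidx i hi'.2).2
  · subst hx hy
    split_ifs <;> push_cast <;> (try rw [h3]) <;> ring

theorem odd {n : ℕ} (d : Bool) {e x y : ℕ} {e' x' y' : ZMod 37} (he : e' = e) (hx : x' = x)
    (hy : y' = y) : Rep (oddL n e d x y) (oddSer e' d x' y') := by
  have h3 : (36 : ZMod 37) = -1 := by decide
  have hidx : ∀ i < triIdx.length, (∀ r < i + 1, tri r = i ↔ triIdx.getD i 0 = r + 1) ∧
      triIdx.getD i 0 ≤ i + 1 := by decide +kernel
  refine sparse (fun i hi => ?_) (fun i hi => ?_) fun r => ?_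
  · have hi' := (List.length_take ▸ hi)
    rw [lt_min_iff] at hi'
    rw [List.getD_eq_getElem _ _ hi, List.getElem_take, ← List.getD_eq_getElem _ 0]
    exact (hidx i hi'.2).1
  · have hi' := (List.length_take ▸ hi)
    rw [lt_min_iff] at hi'
    rw [List.getD_eq_getElem _ _ hi, List.getElem_take, ← List.getD_eq_getElem _ 0]
    exact (hidx i hi'.2).2
  · subst he hx hy
    split_ifs <;> push_cast <;> (try rw [h3]) <;> ring

theorem prod_ofFn (n : ℕ) {m : ℕ} {f : Fin m → List ℕ} {F : Fin m → PowerSeries (ZMod 37)}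
    (h : ∀ i, Rep (f i) (F i)) : Rep (prodL n (List.ofFn f)) (∏ i, F i) := by
  rw [← List.prod_ofFn]
  refine prod n ?_
  rw [List.forall₂_iff_get]
  refine ⟨by simp, fun i h1 h2 => ?_⟩
  simpa using h _

theorem sum_ofFn (n : ℕ) {m : ℕ} {f : Fin m → List ℕ} {F : Fin m → PowerSeries (ZMod 37)}
    (h : ∀ i, Rep (f i) (F i)) :
    Rep ((List.ofFn f).foldr addL (List.replicate n 0)) (∑ i, F i) := by
  induction m with
  | zero => intro i _; simp
  | succ m ih =>
    rw [List.ofFn_succ, List.foldr_cons, Fin.sum_univ_succ]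
    exact (h 0).add (ih fun i => h i.succ)

theorem theta (s : Fin 9) (b : ℕ) :
    Rep (thetaL s b) (thetaHat (fun j => 2 ^ evExp j) (fun j => 19 ^ evExp j) s b) := by
  have hx (a e : ℕ) : ((a : ZMod 37) ^ e) ^ b = (((a ^ e) ^ b % 37 : ℕ) : ZMod 37) := by
    rw [ZMod.natCast_mod]; push_cast; rfl
  have hc : (if s = 0 then 1 else (b : PowerSeries (ZMod 37))) =
      ((if s = 0 then 1 else b : ℕ) : PowerSeries (ZMod 37)) := by split_ifs <;> simp
  rw [thetaHat, hc]
  refine smul _ (add (ofNat_mul 2 (sect 2 two_pos (prod_ofFn _ fun j => even _ ?_ ?_)))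
    (X_mul (add (prod_ofFn _ fun j => odd _ ?_ ?_ ?_) (prod_ofFn _ fun j => odd _ ?_ ?_ ?_))))
  · exact hx 2 _
  · exact hx 19 _
  · simp
  · exact hx 2 _
  · exact hx 19 _
  · decide
  · exact hx 2 _
  · exact hx 19 _

theorem th3 : Rep th3L th3Ser := even _ (by simp) (by simp)

theorem psi : Rep psiL psiSer := dilate 2 (odd _ (by simp) (by simp) (by simp))

theorem h0 : Rep h0L h0Ser :=
  add (mul th3 (dilate 3 th3)) (X_mul (mul psi (dilate 3 psi)))

variable {Fl : ℕ → List ℕ} {F : ℕ → PowerSeries (ZMod 37)}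

theorem am (m : ℕ) (hm : 0 < m) (h : ∀ b, Rep (Fl b) (F b)) : Rep (amL m Fl) (amSer m F) :=
  add (smul _ (dilate m (h m))) (sect m hm (h 1))

theorem form (h : ∀ b, Rep (Fl b) (F b)) {A B H : List ℕ} (hA : Rep A (th3Ser ^ 4))
    (hB : Rep B (PowerSeries.X * psiSer ^ 4)) (hH : Rep H (h0Ser ^ 2)) (i : Fin 9) :
    Rep (formL A B H Fl i) (formSer F i) := by
  fin_cases i
  · exact h 1
  · exact am 2 two_pos h
  · exact am 3 three_pos h
  · exact h 2
  · exact am 5 (by norm_num) h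
  · exact sub (ofNat_mul 16 (mul (sect 2 two_pos hA) (dilate 2 (h 2))))
      (sect 2 two_pos (mul (add hB hA) (h 1)))
  · exact sub (ofNat_mul 81 (mul hH (dilate 3 (h 3)))) (sect 3 three_pos (mul hH (h 1)))
  · exact sub (sub (ofNat_mul 256 (mul (rescale hA) (dilate 4 (h 4))))
      (ofNat_mul 16 (rescale (mul hA (h 2))))) (sect 4 four_pos (mul hB (h 1)))
  · exact sub (sub (add (ofNat_mul 648 (mul hH (dilate 6 (h 6))))
      (ofNat_mul 81 (sect 2 two_pos (mul (dilate 2 hH) (dilate 3 (h 3))))))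
      (ofNat_mul 8 (sect 3 three_pos (mul hH (dilate 2 (h 2))))))
      (sect 6 (by norm_num) (mul (dilate 2 hH) (h 1)))

end Rep

/-- The formal Jacobian matrix of the nine forms: derivatives in the direction of the index and of
the eight coordinates. -/
def jacSer {k : Type*} [CommRing k] (x y : Fin 8 → k) : Matrix (Fin 9) (Fin 9) (PowerSeries k) :=
  fun i s => ((if s = 0 then formIdx i else 1 : ℕ) : PowerSeries k) * formSer (thetaHat x y s) i

theorem Rep.jac (i s : Fin 9) :
    Rep (jacL i s) (jacSer (fun j => 2 ^ evExp j) (fun j => 19 ^ evExp j) i s) :=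
  Rep.smul _ (Rep.form (Rep.theta s) (Rep.pow _ _ Rep.th3) (Rep.X_mul (Rep.pow _ _ Rep.psi))
    (Rep.pow _ _ Rep.h0) i)

theorem map_jacSer {k l : Type*} [CommRing k] [CommRing l] (φ : k →+* l) (x y : Fin 8 → k) :
    (PowerSeries.map φ).mapMatrix (jacSer x y) = jacSer (fun j => φ (x j)) (fun j => φ (y j)) := by
  ext1 i s
  simp only [jacSer, RingHom.mapMatrix_apply, Matrix.map_apply, map_mul, map_natCast, map_formSer,
    map_thetaHat]

theorem det_jacSer_mod_ne_zero :
    (jacSer (fun j => 2 ^ evExp j) (fun j => 19 ^ evExp j) :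
      Matrix (Fin 9) (Fin 9) (PowerSeries (ZMod 37))).det ≠ 0 := by
  set M := (jacSer (fun j => 2 ^ evExp j) (fun j => 19 ^ evExp j) :
    Matrix (Fin 9) (Fin 9) (PowerSeries (ZMod 37)))
  let T : Matrix (Fin 9) (Fin 9) (PowerSeries (ZMod 37)) := fun i k =>
    PowerSeries.mk fun n => ((leftInv i k).getD n 0 : ℕ)
  have hT (i k : Fin 9) : Rep (leftInv i k ++ List.replicate 5 0) (T i k) := by
    intro n hn
    rw [PowerSeries.coeff_mk]
    rcases lt_or_ge n (leftInv i k).length with h | h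
    · rw [List.getD_append _ _ _ _ h]
    · rw [List.getD_append_right _ _ _ _ h, List.getD_eq_default _ _ h, getD_replicate_zero]
  have hTM (i j : Fin 9) : Rep (leftInvMulJac i j) ((T * M) i j) := by
    rw [Matrix.mul_apply]
    exact Rep.sum_ofFn _ fun k => (hT i k).mul (Rep.jac k j)
  let W : Matrix (Fin 9) (Fin 9) (PowerSeries (ZMod 37)) := fun i j =>
    PowerSeries.mk fun n => PowerSeries.coeff (n + 4) ((T * M) i j)
  have hW : T * M = (PowerSeries.X ^ 4 : PowerSeries (ZMod 37)) • W := by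
    ext1 i j
    ext n
    rw [Matrix.smul_apply, smul_eq_mul, PowerSeries.coeff_X_pow_mul']
    split_ifs with h
    · simp [W, Nat.sub_add_cancel h]
    · have h1 := hTM i j n
      rw [leftInvMulJac_eq] at h1
      push Not at h
      split_ifs at h1 <;> interval_cases n <;> simpa using h1
  have hW0 : (PowerSeries.constantCoeff (R := ZMod 37)).mapMatrix W = 1 := by
    ext i j
    have h1 := hTM i j 4
    rw [leftInvMulJac_eq] at h1
    rw [RingHom.mapMatrix_apply, Matrix.map_apply, ← PowerSeries.coeff_zero_eq_constantCoeff_apply,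
      PowerSeries.coeff_mk, Matrix.one_apply]
    split_ifs at h1 ⊢ <;> simpa using h1
  have hWdet : W.det ≠ 0 := by
    intro h
    have := RingHom.map_det (PowerSeries.constantCoeff (R := ZMod 37)) W
    rw [hW0, h, map_zero, Matrix.det_one] at this
    exact absurd this (by decide)
  intro h
  have h2 := congrArg Matrix.det hW
  have : Fact (Nat.Prime 37) := ⟨by norm_num⟩
  rw [Matrix.det_mul, h, mul_zero, Matrix.det_smul] at h2
  exact mul_ne_zero (pow_ne_zero _ (pow_ne_zero _ PowerSeries.X_ne_zero)) hWdet h2.symm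

/-- The determinant of the Jacobian matrix does not vanish at the evaluation point. -/
theorem det_jacSer_ne_zero :
    (jacSer (fun j => 2 ^ evExp j) (fun j => (2 ^ evExp j)⁻¹) :
      Matrix (Fin 9) (Fin 9) (PowerSeries ℂ)).det ≠ 0 := by
  let R := Localization.Away (2 : ℤ)
  have hu : IsUnit ((Int.castRingHom (ZMod 37)) 2) := by
    rw [isUnit_iff_exists_inv]; exact ⟨19, by decide⟩
  have hu' : IsUnit ((Int.castRingHom ℂ) 2) := by simp
  let φ : R →+* ZMod 37 := IsLocalization.Away.lift (2 : ℤ) hu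
  let ψ : R →+* ℂ := IsLocalization.Away.lift (2 : ℤ) hu'
  have hφ : φ 2 = 2 := map_ofNat φ 2
  have hψ : ψ 2 = 2 := map_ofNat ψ 2
  let w : R := IsLocalization.Away.invSelf (2 : ℤ)
  have hw : 2 * w = 1 := by
    have := IsLocalization.Away.mul_invSelf (S := R) (2 : ℤ)
    simpa using this
  have hφw : φ w = 19 := by
    have h1 : (2 : ZMod 37) * φ w = 1 := by rw [← hφ, ← map_mul, hw, map_one]
    have h2 : (19 : ZMod 37) * 2 = 1 := by decide
    calc φ w = 19 * 2 * φ w := by rw [h2, one_mul]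
      _ = 19 := by rw [mul_assoc, h1, mul_one]
  have hψw : ψ w = 2⁻¹ := by
    have h1 : (2 : ℂ) * ψ w = 1 := by rw [← hψ, ← map_mul, hw, map_one]
    exact eq_inv_of_mul_eq_one_right h1
  have hψinj : Function.Injective ψ := by
    refine (IsLocalization.lift_injective_iff _).2 fun x y => ?_
    have h1 : Function.Injective (algebraMap ℤ R) :=
      IsLocalization.injective R (powers_le_nonZeroDivisors_of_noZeroDivisors two_ne_zero)
    rw [h1.eq_iff, eq_intCast, eq_intCast, Int.cast_inj]
  have hR : (jacSer (fun j => 2 ^ evExp j) (fun j => w ^ evExp j) :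
      Matrix (Fin 9) (Fin 9) (PowerSeries R)).det ≠ 0 := by
    intro h
    have h1 := RingHom.map_det (PowerSeries.map φ)
      (jacSer (fun j => 2 ^ evExp j) (fun j => w ^ evExp j))
    rw [h, map_jacSer, map_zero] at h1
    refine det_jacSer_mod_ne_zero ?_
    simpa [hφ, hφw] using h1.symm
  intro h
  have h1 := RingHom.map_det (PowerSeries.map ψ)
    (jacSer (fun j => 2 ^ evExp j) (fun j => w ^ evExp j))
  rw [map_jacSer] at h1
  simp only [map_pow, hψ, hψw, inv_pow] at h1
  rw [h] at h1
  exact hR ((injective_iff_map_eq_zero _).1 (PowerSeries.map_injective ψ hψinj) _ h1)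

/-! ### Quasi-periodicity and the index grading -/

/-- Translation of the lattice by `2 k` times the first coordinate vector. -/
def latticeShift (k : ℤ) : E8Lattice ≃ E8Lattice where
  toFun w := ⟨fun i => w.1 i + if i = 0 then 2 * k else 0, by
    obtain ⟨w, h1, m, hm⟩ := w
    refine ⟨?_, m + k, ?_⟩
    · refine h1.imp (fun h i => ?_) fun h i => ?_
      all_goals
        obtain ⟨n, hn⟩ := h i
        refine ⟨n + if i = 0 then 2 * k else 0, ?_⟩
        simp only [hn]
        split_ifs <;> push_cast <;> ring
    · simp [Finset.sum_add_distrib, hm]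
      ring⟩
  invFun w := ⟨fun i => w.1 i + if i = 0 then 2 * (-k) else 0, by
    obtain ⟨w, h1, m, hm⟩ := w
    refine ⟨?_, m - k, ?_⟩
    · refine h1.imp (fun h i => ?_) fun h i => ?_
      all_goals
        obtain ⟨n, hn⟩ := h i
        refine ⟨n + if i = 0 then 2 * (-k) else 0, ?_⟩
        simp only [hn]
        split_ifs <;> push_cast <;> ring
    · simp [Finset.sum_add_distrib, hm]
      ring⟩
  left_inv w := by
    ext i; simp only; split_ifs <;> push_cast <;> ring
  right_inv w := by
    ext i; simp only; split_ifs <;> push_cast <;> ring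

theorem exists_two_mul_lattice (w : E8Lattice) (i : Fin 8) : ∃ m : ℤ, 2 * (w.1 i : ℂ) = m := by
  rcases w.2.1 with h | h
  · obtain ⟨n, hn⟩ := h i
    exact ⟨2 * n, by rw [hn]; push_cast; ring⟩
  · obtain ⟨n, hn⟩ := h i
    exact ⟨2 * n + 1, by rw [hn]; push_cast; ring⟩

/-- The translation of `z` by `2 N τ` in the first coordinate. -/
def shiftPoint (τ : ℂ) (N : ℕ) (z : Fin 8 → ℂ) : Fin 8 → ℂ :=
  fun i => z i + if i = 0 then τ * (2 * N) else 0

/-- The automorphy factor of index one of the translation `shiftPoint`. -/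
def shiftFactor (τ : ℂ) (N : ℕ) (u : ℂ) : ℂ :=
  Complex.exp (-(4 * πC * I * (N ^ 2 * τ + N * u)))

theorem exp_two_pi_int (m : ℤ) : Complex.exp (2 * πC * I * m) = 1 := by
  rw [Complex.exp_eq_one_iff]
  exact ⟨m, by rw [πC]; ring⟩

theorem Theta_shiftPoint (z : Fin 8 → ℂ) (N b A : ℕ) (C : ℤ) {τ τ' : ℂ}
    (h : b * τ = A * τ' + C) :
    Theta τ' (fun i => b * shiftPoint τ N z i) =
      shiftFactor τ N (z 0) ^ (A * b) * Theta τ' fun i => b * z i := by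
  rw [Theta, Theta, ← tsum_mul_left, ← (latticeShift (N * A)).tsum_eq fun w : E8Lattice =>
    shiftFactor τ N (z 0) ^ (A * b) * Complex.exp (πC * I * τ' * dotC (cv w.1) (cv w.1) +
      2 * πC * I * dotC (fun i => b * z i) (cv w.1))]
  refine tsum_congr fun w => ?_
  obtain ⟨m, hm⟩ := exists_two_mul_lattice w 0
  rw [shiftFactor, ← Complex.exp_nat_mul, ← Complex.exp_add, ← mul_one (Complex.exp (_ + (_ + _))),
    ← exp_two_pi_int (C * N * m + 2 * N ^ 2 * A * C), ← Complex.exp_add]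
  congr 1
  have h0 (i : Fin 8) : (cv (latticeShift (N * A) w).1) i =
      cv w.1 i + if i = 0 then 2 * (N * A) else 0 := by
    simp only [latticeShift, cv, Equiv.coe_fn_mk]
    split_ifs <;> push_cast <;> ring
  have hm' : 2 * cv w.1 0 = m := hm
  simp only [dotC, shiftPoint, h0, Fin.sum_univ_eight, if_true, Fin.reduceEq, if_false]
  push_cast
  linear_combination (4 * πC * I * N * cv w.1 0 + 4 * πC * I * A * N ^ 2) * h +
    2 * πC * I * N * C * hm'

theorem nineForms_shiftPoint {τ : ℂ} (hτ : 0 < τ.im) (N : ℕ) (z : Fin 8 → ℂ) (i : Fin 9) :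
    nineForms i τ (shiftPoint τ N z) =
      shiftFactor τ N (z 0) ^ formIdx i * nineForms i τ z := by
  rw [nineForms_eq_formVal, nineForms_eq_formVal]
  exact (ThetaComb.formVal hτ i).scale fun b τ' _ A C h => Theta_shiftPoint z N b A C h

theorem infinite_range_shiftFactor {τ : ℂ} (hτ : 0 < τ.im) (u : ℂ) :
    (Set.range fun N => shiftFactor τ N u).Infinite := by
  intro hfin
  obtain ⟨B, hB⟩ := (hfin.image fun x : ℂ => ‖x‖).bddAbove
  have hn (N : ℕ) : ‖shiftFactor τ N u‖ = Real.exp (4 * Real.pi * N * (N * τ.im + u.im)) := by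
    rw [shiftFactor, Complex.norm_exp]
    congr 1
    have : (-(4 * πC * I * (N ^ 2 * τ + N * u))) =
        ((4 * Real.pi * N : ℝ) : ℂ) * (-(I * (((N : ℝ) : ℂ) * τ + u))) := by
      rw [πC]; push_cast; ring
    rw [this, Complex.re_ofReal_mul]
    simp
  have h1 : Filter.Tendsto (fun N : ℕ => Real.exp (4 * Real.pi * N * (N * τ.im + u.im)))
      Filter.atTop Filter.atTop := by
    refine Real.tendsto_exp_atTop.comp (Filter.Tendsto.atTop_mul_atTop₀ ?_ ?_)
    · exact tendsto_natCast_atTop_atTop.const_mul_atTop (by positivity)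
    · exact Filter.tendsto_atTop_add_const_right _ _
        (tendsto_natCast_atTop_atTop.atTop_mul_const hτ)
  obtain ⟨N, hN⟩ := (h1.eventually_gt_atTop B).exists
  refine absurd (hB ⟨_, ⟨N, rfl⟩, rfl⟩) ?_
  simp only [hn, not_le]
  exact hN

/-! ### The generators as polynomials in the nine forms -/

/-- The generator `a_2` as a function of `E4`, `E6`, `Δ` and the nine forms. -/
def swA2 (e _g d : ℂ) (x : Fin 9 → ℂ) : ℂ :=
  6 / (e * d) * (-(e) * x 1 + x 0 ^ 2)

/-- The generator `a_3` as a function of `E4`, `E6`, `Δ` and the nine forms. -/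
def swA3 (e g d : ℂ) (x : Fin 9 → ℂ) : ℂ :=
  1 / (9 * e ^ 2 * d ^ 2) *
    (-7 * e ^ 2 * g * x 2 - 20 * e ^ 3 * x 6
      - 9 * e * g * x 0 * x 1 + 30 * e ^ 2 * x 0 * x 5
      + 6 * g * x 0 ^ 3)

/-- The generator `a_4` as a function of `E4`, `E6`, `Δ` and the nine forms. -/
def swA4 (e g d : ℂ) (x : Fin 9 → ℂ) : ℂ :=
  1 / (288 * e ^ 3 * d ^ 3) *
    (576 * e ^ 3 * d * x 3 + 32256 * e ^ 2 * d * x 0 * x 2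
      - 9 * e ^ 5 * x 1 ^ 2 - 30 * e ^ 3 * g * x 1 * x 5
      - 25 * e ^ 4 * x 5 ^ 2
      + (60 * e ^ 4 - 12 * e * g ^ 2) * x 0 ^ 2 * x 1
      + 80 * e ^ 2 * g * x 0 ^ 2 * x 5
      + (-70 * e ^ 3 + 6 * g ^ 2) * x 0 ^ 4)

/-- The generator `b_1` as a function of `E4`, `E6`, `Δ` and the nine forms. -/
def swB1 (e _g _d : ℂ) (x : Fin 9 → ℂ) : ℂ :=
  -4 / e * x 0

/-- The generator `b_2` as a function of `E4`, `E6`, `Δ` and the nine forms. -/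
def swB2 (e g d : ℂ) (x : Fin 9 → ℂ) : ℂ :=
  5 / (6 * e ^ 2 * d) * (e ^ 2 * x 5 - g * x 0 ^ 2)

/-- The generator `b_3` as a function of `E4`, `E6`, `Δ` and the nine forms. -/
def swB3 (e g d : ℂ) (x : Fin 9 → ℂ) : ℂ :=
  1 / (108 * e ^ 3 * d ^ 2) *
    (-7 * e ^ 5 * x 2 - 20 * e ^ 3 * g * x 6
      - 9 * e ^ 4 * x 0 * x 1 + 30 * e ^ 2 * g * x 0 * x 5
      + (16 * e ^ 3 - 10 * g ^ 2) * x 0 ^ 3)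

/-- The generator `b_4` as a function of `E4`, `E6`, `Δ` and the nine forms. -/
def swB4 (e g d : ℂ) (x : Fin 9 → ℂ) : ℂ :=
  1 / (1728 * e ^ 4 * d ^ 3) *
    (-8640 * e ^ 4 * d * x 7 + 138240 * e ^ 3 * d * x 0 * x 6
      + 9 * e ^ 5 * g * x 1 ^ 2 + 30 * e ^ 6 * x 1 * x 5
      + 25 * e ^ 4 * g * x 5 ^ 2
      - 48 * e ^ 4 * g * x 0 ^ 2 * x 1
      + (-140 * e ^ 5 + 60 * e ^ 2 * g ^ 2) * x 0 ^ 2 * x 5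
      + (74 * e ^ 3 * g - 10 * g ^ 3) * x 0 ^ 4)

/-- The generator `b_5` as a function of `E4`, `E6`, `Δ` and the nine forms. -/
def swB5 (e g d : ℂ) (x : Fin 9 → ℂ) : ℂ :=
  1 / (72 * e ^ 5 * d ^ 3) *
    (-36288 * e ^ 4 * d * x 4 - 294 * e ^ 6 * x 1 * x 2
      - 770 * e ^ 4 * g * x 5 * x 2 - 840 * e ^ 4 * g * x 1 * x 6
      - 2200 * e ^ 5 * x 5 * x 6 + 168 * e ^ 5 * x 0 ^ 2 * x 2
      + 480 * e ^ 3 * g * x 0 ^ 2 * x 6 - 621 * e ^ 5 * x 0 * x 1 ^ 2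
      + 3525 * e ^ 4 * x 0 * x 5 ^ 2 + 1224 * e ^ 4 * x 0 ^ 3 * x 1
      - 240 * e ^ 2 * g * x 0 ^ 3 * x 5
      + (-456 * e ^ 3 + 24 * g ^ 2) * x 0 ^ 5)

/-- The generator `b_6` as a function of `E4`, `E6`, `Δ` and the nine forms. -/
def swB6 (e g d : ℂ) (x : Fin 9 → ℂ) : ℂ :=
  1 / (4478976 * e ^ 6 * d ^ 5) *
    (-19906560 * e ^ 6 * d ^ 2 * x 8
      - 188116992 * e ^ 4 * g * d ^ 2 * x 0 * x 4
      - 5184 * e ^ 7 * g * d * x 1 * x 3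
      - 8640 * e ^ 8 * d * x 5 * x 3
      - 103680 * e ^ 8 * d * x 1 * x 7
      - 172800 * e ^ 6 * g * d * x 5 * x 7
      + 12672 * e ^ 6 * g * d * x 0 ^ 2 * x 3
      + 17280 * (5 * e ^ 7 + 9 * e ^ 4 * g ^ 2) * d * x 0 ^ 2 * x 7
      + 112896 * e ^ 7 * g * d * x 2 ^ 2
      + 645120 * e ^ 8 * d * x 2 * x 6
      + 921600 * e ^ 6 * g * d * x 6 ^ 2
      - 1717632 * e ^ 6 * g * d * x 0 * x 1 * x 2
      - 362880 * (4 * e ^ 7 + 11 * e ^ 4 * g ^ 2) * d * x 0 * x 5 * x 2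
      + 483840 * (4 * e ^ 7 - 9 * e ^ 4 * g ^ 2) * d * x 0 * x 1 * x 6
      - 11404800 * e ^ 5 * g * d * x 0 * x 5 * x 6
      + 1161216 * e ^ 5 * g * d * x 0 ^ 3 * x 2
      - 92160 * (37 * e ^ 6 - 9 * e ^ 3 * g ^ 2) * d * x 0 ^ 3 * x 6
      + (135 * e ^ 9 * g + 54 * e ^ 6 * g ^ 3) * x 1 ^ 3
      + (405 * e ^ 10 + 540 * e ^ 7 * g ^ 2) * x 1 ^ 2 * x 5
      + 1575 * e ^ 8 * g * x 1 * x 5 ^ 2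
      + (375 * e ^ 9 + 500 * e ^ 6 * g ^ 2) * x 5 ^ 3
      + (-3159 * e ^ 8 * g + 1701 * e ^ 5 * g ^ 3) * x 0 ^ 2 * x 1 ^ 2
      + (-3060 * e ^ 9 - 1800 * e ^ 6 * g ^ 2) * x 0 ^ 2 * x 1 * x 5
      + (6975 * e ^ 7 * g - 11025 * e ^ 4 * g ^ 3) * x 0 ^ 2 * x 5 ^ 2
      + (6768 * e ^ 7 * g - 3024 * e ^ 4 * g ^ 3) * x 0 ^ 4 * x 1
      + (4260 * e ^ 8 + 1800 * e ^ 5 * g ^ 2 + 180 * e ^ 2 * g ^ 4) * x 0 ^ 4 * x 5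
      + (-3692 * e ^ 6 * g + 504 * e ^ 3 * g ^ 3 - 12 * g ^ 5) * x 0 ^ 6)

/-- The generators `a_0, a_2, …, b_6` as functions of the values of `E4`, `E6`, `Δ` and of the nine
forms `A_1, …, A_5, B_2, B_3, B_4, B_6`. -/
def swVal (e g d : ℂ) (x : Fin 9 → ℂ) : Fin 11 → ℂ :=
  ![e / 12, swA2 e g d x, swA3 e g d x, swA4 e g d x, g / 216, swB1 e g d x, swB2 e g d x,
    swB3 e g d x, swB4 e g d x, swB5 e g d x, swB6 e g d x]

theorem abGens_eq_swVal (i : Fin 11) (τ : ℂ) (z : Fin 8 → ℂ) :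
    abGens i τ z = swVal (E4 τ) (E6 τ) (Dl τ) (fun j => nineForms j τ z) i := by
  fin_cases i <;> rfl

/-- The indices of the generators. -/
def genIdx : Fin 11 → ℕ := ![0, 2, 3, 4, 0, 1, 2, 3, 4, 5, 6]

theorem swVal_scale (e g d t : ℂ) (x : Fin 9 → ℂ) (i : Fin 11) :
    swVal e g d (fun j => t ^ formIdx j * x j) i = t ^ genIdx i * swVal e g d x i := by
  fin_cases i <;>
    simp [swVal, formIdx, genIdx, swA2, swA3, swA4, swB1, swB2, swB3, swB4, swB5, swB6] <;> ring

theorem differentiable_swVal (e g d : ℂ) (i : Fin 11) :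
    Differentiable ℂ fun x => swVal e g d x i := by
  fin_cases i <;>
    simp [swVal, swA2, swA3, swA4, swB1, swB2, swB3, swB4, swB5, swB6] <;> fun_prop

theorem exists_eq_of_affine {F : ℂ → ℂ} {c : ℂ} (hc : c ≠ 0) (hF : ∀ x, F x = F 0 + c * x)
    (y : ℂ) : ∃ x, F x = y := by
  refine ⟨(y - F 0) / c, ?_⟩
  rw [hF]
  field_simp
  ring

theorem exists_eq_of_affine₂ {F G : ℂ → ℂ → ℂ} {a b c d : ℂ} (hdet : a * d - b * c ≠ 0)
    (hF : ∀ u v, F u v = F 0 0 + (a * u + b * v)) (hG : ∀ u v, G u v = G 0 0 + (c * u + d * v))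
    (y y' : ℂ) : ∃ u v, F u v = y ∧ G u v = y' := by
  refine ⟨((y - F 0 0) * d - b * (y' - G 0 0)) / (a * d - b * c),
    (a * (y' - G 0 0) - (y - F 0 0) * c) / (a * d - b * c), ?_, ?_⟩
  · rw [hF, mul_div_assoc', mul_div_assoc', ← add_div, ← eq_sub_iff_add_eq', div_eq_iff hdet]
    ring
  · rw [hG, mul_div_assoc', mul_div_assoc', ← add_div, ← eq_sub_iff_add_eq', div_eq_iff hdet]
    ring

theorem exists_swVal_eq {e g d : ℂ} (he : e ≠ 0) (hd : d ≠ 0) (hegd : e ^ 3 - g ^ 2 = 1728 * d)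
    (y : Fin 11 → ℂ) (h0 : y 0 = e / 12) (h4 : y 4 = g / 216) : ∃ x, swVal e g d x = y := by
  obtain ⟨x0, hx0⟩ := exists_eq_of_affine (F := fun u => swB1 e g d ![u, 0, 0, 0, 0, 0, 0, 0, 0])
    (c := -4 / e) (by simp [he]) (fun u => by simp [swB1]) (y 5)
  obtain ⟨x1, hx1⟩ := exists_eq_of_affine (F := fun u => swA2 e g d ![x0, u, 0, 0, 0, 0, 0, 0, 0])
    (c := 6 / (e * d) * -e) (by simp [he, hd]) (fun u => by simp [swA2]; ring) (y 1)
  obtain ⟨x5, hx5⟩ := exists_eq_of_affine (F := fun u => swB2 e g d ![x0, x1, 0, 0, 0, u, 0, 0, 0])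
    (c := 5 / (6 * e ^ 2 * d) * e ^ 2) (by simp [he, hd]) (fun u => by simp [swB2]; ring) (y 6)
  obtain ⟨x2, x6, hx2, hx6⟩ : ∃ u v, swA3 e g d ![x0, x1, u, 0, 0, x5, v, 0, 0] = y 2 ∧
      swB3 e g d ![x0, x1, u, 0, 0, x5, v, 0, 0] = y 7 := by
    refine exists_eq_of_affine₂ (a := 1 / (9 * e ^ 2 * d ^ 2) * (-7 * e ^ 2 * g))
      (b := 1 / (9 * e ^ 2 * d ^ 2) * (-20 * e ^ 3))
      (c := 1 / (108 * e ^ 3 * d ^ 2) * (-7 * e ^ 5))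
      (d := 1 / (108 * e ^ 3 * d ^ 2) * (-20 * e ^ 3 * g)) ?_
      (fun u v => by simp [swA3]; ring) (fun u v => by simp [swB3]; ring) _ _
    have h : 1 / (9 * e ^ 2 * d ^ 2) * (-7 * e ^ 2 * g) *
        (1 / (108 * e ^ 3 * d ^ 2) * (-20 * e ^ 3 * g)) -
        1 / (9 * e ^ 2 * d ^ 2) * (-20 * e ^ 3) * (1 / (108 * e ^ 3 * d ^ 2) * (-7 * e ^ 5)) =
        1 / (9 * e ^ 2 * d ^ 2) * (1 / (108 * e ^ 3 * d ^ 2)) * (-140 * e ^ 5 * (1728 * d)) := by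
      rw [← hegd]; ring
    rw [h]
    simp [he, hd]
  obtain ⟨x3, hx3⟩ := exists_eq_of_affine
    (F := fun u => swA4 e g d ![x0, x1, x2, u, 0, x5, x6, 0, 0])
    (c := 1 / (288 * e ^ 3 * d ^ 3) * (576 * e ^ 3 * d)) (by simp [he, hd])
    (fun u => by simp [swA4]; ring) (y 3)
  obtain ⟨x7, hx7⟩ := exists_eq_of_affine
    (F := fun u => swB4 e g d ![x0, x1, x2, x3, 0, x5, x6, u, 0])
    (c := 1 / (1728 * e ^ 4 * d ^ 3) * (-8640 * e ^ 4 * d)) (by simp [he, hd])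
    (fun u => by simp [swB4]; ring) (y 8)
  obtain ⟨x4, hx4⟩ := exists_eq_of_affine
    (F := fun u => swB5 e g d ![x0, x1, x2, x3, u, x5, x6, x7, 0])
    (c := 1 / (72 * e ^ 5 * d ^ 3) * (-36288 * e ^ 4 * d)) (by simp [he, hd])
    (fun u => by simp [swB5]; ring) (y 9)
  obtain ⟨x8, hx8⟩ := exists_eq_of_affine
    (F := fun u => swB6 e g d ![x0, x1, x2, x3, x4, x5, x6, x7, u])
    (c := 1 / (4478976 * e ^ 6 * d ^ 5) * (-19906560 * e ^ 6 * d ^ 2)) (by simp [he, hd])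
    (fun u => by simp [swB6]; ring) (y 10)
  refine ⟨![x0, x1, x2, x3, x4, x5, x6, x7, x8], ?_⟩
  ext i
  fin_cases i
  · exact h0.symm
  · simp [← hx1, swVal, swA2]
  · simp [← hx2, swVal, swA3]
  · simp [← hx3, swVal, swA4]
  · exact h4.symm
  · simp [← hx0, swVal, swB1]
  · simp [← hx5, swVal, swB2]
  · simp [← hx6, swVal, swB3]
  · simp [← hx7, swVal, swB4]
  · simp [← hx4, swVal, swB5]
  · simp [← hx8, swVal, swB6]

/-! ### The nine forms fill an open set -/

theorem contDiff_thChar (e δ : ℂ) {τ : ℂ} (hτ : 0 < τ.im) : ContDiff ℂ 1 fun u => thChar e δ u τ :=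
  Differentiable.contDiff fun u => (hasDerivAt_thChar e δ u hτ).differentiableAt

theorem contDiff_Theta {τ : ℂ} (hτ : 0 < τ.im) : ContDiff ℂ 1 fun z : Fin 8 → ℂ => Theta τ z := by
  have h (z : Fin 8 → ℂ) := (hasSum_Theta hτ z).tsum_eq
  simp only [Theta, h]
  have h1 (e δ : ℂ) : ContDiff ℂ 1 fun z : Fin 8 → ℂ => ∏ j, thChar e δ (z j) τ :=
    contDiff_prod fun j _ => (contDiff_thChar e δ hτ).comp (contDiff_apply ℂ ℂ j)
  exact (contDiff_const.mul ((h1 _ _).add (h1 _ _))).add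
    (contDiff_const.mul ((h1 _ _).add (h1 _ _)))

/-- The values of the nine forms, scaled according to their indices. -/
def scaledForms (τ : ℂ) (v : Fin 9 → ℂ) : Fin 9 → ℂ :=
  fun i => v 0 ^ formIdx i * nineForms i τ fun j => v j.succ

theorem contDiff_scaledForms {τ : ℂ} (hτ : 0 < τ.im) : ContDiff ℂ 1 (scaledForms τ) := by
  refine contDiff_pi.2 fun i => ((contDiff_apply ℂ ℂ 0).pow _).mul ?_
  simp only [nineForms_eq_formVal]
  refine (ThetaComb.formVal hτ i).contDiff fun b τ' hτ' => (contDiff_Theta hτ').comp ?_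
  exact contDiff_pi.2 fun j => contDiff_const.mul (contDiff_apply ℂ ℂ j.succ)

/-- The scaling factors between formal and analytic derivatives. -/
def slotScale (s : Fin 9) : ℂ := if s = 0 then 1 / 2 else πC * I / 2

/-- The Jacobian matrix of `scaledForms`. -/
def formJac (τ : ℂ) (z : Fin 8 → ℂ) : Matrix (Fin 9) (Fin 9) ℂ := fun i s =>
  ((if s = 0 then formIdx i else 1 : ℕ) : ℂ) * (slotScale s * formVal τ (thetaSlot z s) i)

theorem hasDerivAt_scaledForms {τ : ℂ} (hτ : 0 < τ.im) (z : Fin 8 → ℂ) (i s : Fin 9) :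
    HasDerivAt (fun u => scaledForms τ
        (Function.update (Fin.cons 1 z : Fin 9 → ℂ) s u) i) (formJac τ z i s)
      ((Fin.cons 1 z : Fin 9 → ℂ) s) := by
  have hc := ThetaComb.formVal hτ i
  cases s using Fin.cases with
  | zero =>
    have h1 : nineForms i τ z = slotScale 0 * formVal τ (thetaSlot z 0) i := by
      rw [nineForms_eq_formVal]
      refine hc.const_mul_arg _ fun b τ' hτ' => ?_
      rw [thetaSlot_zero z b hτ', slotScale, if_pos rfl]
      ring
    have h2 : HasDerivAt (fun u : ℂ => u ^ formIdx i * nineForms i τ z)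
        (formIdx i * 1 ^ (formIdx i - 1) * nineForms i τ z) 1 :=
      (hasDerivAt_pow (formIdx i) (1 : ℂ)).mul_const _
    simpa [scaledForms, formJac, h1] using h2
  | succ j =>
    have h1 : HasDerivAt (fun u => nineForms i τ (Function.update z j u))
        (slotScale j.succ * formVal τ (thetaSlot z j.succ) i) (z j) := by
      simp only [nineForms_eq_formVal]
      rw [← hc.const_mul_arg (slotScale j.succ) (Φ := thetaSlot z j.succ)
        (Ψ := fun b τ' => slotScale j.succ * thetaSlot z j.succ b τ') fun _ _ _ => rfl]
      refine hc.hasDerivAt fun b τ' hτ' => ?_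
      rw [slotScale, if_neg (Fin.succ_ne_zero j)]
      exact hasDerivAt_Theta z j b hτ'
    have h2 (u : ℂ) (k : Fin 8) : Function.update (Fin.cons 1 z : Fin 9 → ℂ) j.succ u k.succ =
        Function.update z j u k := by
      rw [← Fin.cons_update, Fin.cons_succ]
    have h3 (u : ℂ) : Function.update (Fin.cons 1 z : Fin 9 → ℂ) j.succ u 0 = 1 := by
      rw [← Fin.cons_update, Fin.cons_zero]
    simpa [scaledForms, formJac, h2, h3] using h1

theorem map_nhds_scaledForms {τ : ℂ} (hτ : 0 < τ.im) (z : Fin 8 → ℂ)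
    (hdet : (formJac τ z).det ≠ 0) :
    Filter.map (scaledForms τ) (nhds (Fin.cons 1 z)) = nhds (scaledForms τ (Fin.cons 1 z)) := by
  have h1 : HasStrictFDerivAt (scaledForms τ) (fderiv ℂ (scaledForms τ) (Fin.cons 1 z))
      (Fin.cons 1 z) := (contDiff_scaledForms hτ).contDiffAt.hasStrictFDerivAt one_ne_zero
  refine h1.map_nhds_eq_of_surj ?_
  set D := fderiv ℂ (scaledForms τ) (Fin.cons 1 z)
  have h2 (i s : Fin 9) : D (Pi.single s 1) i = formJac τ z i s := by
    have h3 := (hasFDerivAt_pi'.1 h1.hasFDerivAt i).comp_hasDerivAt_of_eq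
      ((Fin.cons 1 z : Fin 9 → ℂ) s) (hasDerivAt_update (Fin.cons 1 z : Fin 9 → ℂ) s _)
      (by simp)
    exact h3.unique (hasDerivAt_scaledForms hτ z i s)
  have h3 (w : Fin 9 → ℂ) : D w = (formJac τ z).mulVec w := by
    ext i
    rw [← Finset.univ_sum_single w, map_sum, Finset.sum_apply, Matrix.mulVec, dotProduct]
    refine Finset.sum_congr rfl fun s _ => ?_
    have h4 : (Pi.single s (w s) : Fin 9 → ℂ) = w s • Pi.single s 1 := by
      rw [← Pi.single_smul, smul_eq_mul, mul_one]
    rw [Finset.univ_sum_single w, h4, map_smul, Pi.smul_apply, h2, smul_eq_mul, mul_comm]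
  refine LinearMap.range_eq_top.2 fun y => ?_
  obtain ⟨w, hw⟩ := (Matrix.mulVec_surjective_iff_isUnit.2
    ((Matrix.isUnit_iff_isUnit_det _).2 (isUnit_iff_ne_zero.2 hdet))) y
  exact ⟨w, (h3 w).trans hw⟩

/-- The point at which the Jacobian is evaluated. -/
def evPoint (j : Fin 8) : ℂ := evExp j * Complex.log 2 / (πC * I)

theorem exp_evPoint (j : Fin 8) : Complex.exp (πC * I * evPoint j) = 2 ^ evExp j := by
  have h : πC * I ≠ 0 := mul_ne_zero πC_ne_zero I_ne_zero
  rw [evPoint, mul_div_cancel₀ _ h, Complex.exp_nat_mul, Complex.exp_log two_ne_zero]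

theorem exists_qExp_eq {y : ℂ} (hy : y ≠ 0) (hy1 : ‖y‖ < 1) : ∃ τ : ℂ, 0 < τ.im ∧ qExp τ = y := by
  have h : 2 * πC * I ≠ 0 := mul_ne_zero (mul_ne_zero two_ne_zero πC_ne_zero) I_ne_zero
  have h1 : qExp (Complex.log y / (2 * πC * I)) = y := by
    rw [qExp, mul_div_cancel₀ _ h, Complex.exp_log hy]
  refine ⟨_, ?_, h1⟩
  have h2 : Complex.log y / (2 * πC * I) = ((2 * Real.pi)⁻¹ : ℝ) * (-(I * Complex.log y)) := by
    rw [πC]; push_cast; field_simp; rw [I_sq]; ring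
  rw [h2, Complex.im_ofReal_mul]
  refine mul_pos (by positivity) ?_
  simpa [Complex.log_re] using Real.log_neg (norm_pos_iff.2 hy) hy1

theorem det_formJac_ne_zero : ∃ r > 0, ∀ τ : ℂ, 0 < τ.im → ‖qExp τ‖ < r →
    (formJac τ evPoint).det ≠ 0 := by
  set M : Matrix (Fin 9) (Fin 9) (PowerSeries ℂ) :=
    jacSer (fun j => 2 ^ evExp j) (fun j => (2 ^ evExp j)⁻¹)
  have hslot (s : Fin 9) : slotScale s ≠ 0 := by
    rw [slotScale]; split_ifs <;> simp [πC_ne_zero]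
  have hM (τ : ℂ) (hτ : 0 < τ.im) (i s : Fin 9) :
      HasEv (qExp τ) (M i s) (formScale i * ((slotScale s)⁻¹ * formJac τ evPoint i s)) := by
    have h1 (b : ℕ) (τ' : ℂ) (hτ' : 0 < τ'.im) := hasEv_thetaHat evPoint s b hτ'
    simp only [Complex.exp_neg, exp_evPoint] at h1
    have h2 : HasEv (qExp τ) (M i s) (((if s = 0 then formIdx i else 1 : ℕ) : ℂ) *
        (formScale i * formVal τ (thetaSlot evPoint s) i)) :=
      (HasEv.natCast _).mul (HasEv.formSer hτ h1 i)
    refine HasEv.of_eq h2 rfl ?_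
    rw [formJac]
    have := hslot s
    field_simp
  have hdet (τ : ℂ) (hτ : 0 < τ.im) : HasEv (qExp τ) M.det
      ((∏ i, formScale i) * ((∏ s, (slotScale s)⁻¹) * (formJac τ evPoint).det)) := by
    rw [← Matrix.det_mul_row, ← Matrix.det_mul_column]
    exact HasEv.det (hM τ hτ)
  obtain ⟨r, hr, h⟩ := ne_zero_of_hasEv_near_zero det_jacSer_ne_zero fun y hy hy1 => by
    obtain ⟨τ, hτ, rfl⟩ := exists_qExp_eq hy hy1
    exact ⟨_, hdet τ hτ⟩
  refine ⟨r, hr, fun τ hτ hq h0 => h _ _ (Complex.exp_ne_zero _) hq (hdet τ hτ) ?_⟩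
  rw [h0, mul_zero, mul_zero]

/-! ### Independence at a fixed point of the upper half-plane -/

theorem eval_swVal_scaledForms {P : MvPolynomial (Fin 11) ℂ} {τ : ℂ} (hτ : 0 < τ.im)
    (hP : ∀ z, MvPolynomial.eval (fun i => abGens i τ z) P = 0) (v : Fin 9 → ℂ) :
    MvPolynomial.eval (swVal (E4 τ) (E6 τ) (Dl τ) (scaledForms τ v)) P = 0 := by
  set z : Fin 8 → ℂ := fun j => v j.succ
  let p : Polynomial ℂ :=
    MvPolynomial.aeval (fun i => Polynomial.C (abGens i τ z) * Polynomial.X ^ genIdx i) P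
  have hp (t : ℂ) : p.eval t = MvPolynomial.eval
      (swVal (E4 τ) (E6 τ) (Dl τ) fun i => t ^ formIdx i * nineForms i τ z) P := by
    rw [← Polynomial.coe_aeval_eq_eval, ← AlgHom.comp_apply, MvPolynomial.comp_aeval,
      ← MvPolynomial.coe_aeval_eq_eval]
    change _ = MvPolynomial.aeval _ P
    congr 2
    funext i
    rw [swVal_scale, ← abGens_eq_swVal]
    simp only [map_mul, map_pow, Polynomial.aeval_C, Polynomial.aeval_X, Algebra.algebraMap_self,
      RingHom.id_apply]
    rw [mul_comm]
  have h0 : p = 0 := by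
    refine Polynomial.eq_zero_of_infinite_isRoot p
      ((infinite_range_shiftFactor hτ (z 0)).mono ?_)
    rintro _ ⟨N, rfl⟩
    change p.eval _ = 0
    rw [hp, ← hP (shiftPoint τ N z)]
    congr 2
    funext i
    rw [abGens_eq_swVal]
    congr 2
    funext j
    rw [nineForms_shiftPoint hτ]
  rw [show scaledForms τ v = fun i => v 0 ^ formIdx i * nineForms i τ z from rfl, ← hp, h0,
    Polynomial.eval_zero]

theorem differentiableOn_eval {V : Type*} [NormedAddCommGroup V] [NormedSpace ℂ V] {s : Set V}
    (P : MvPolynomial (Fin 11) ℂ) {f : V → Fin 11 → ℂ}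
    (hf : ∀ i, DifferentiableOn ℂ (fun x => f x i) s) :
    DifferentiableOn ℂ (fun x => MvPolynomial.eval (f x) P) s := by
  induction P using MvPolynomial.induction_on with
  | C a => simp
  | add p q hp hq => simpa only [map_add] using hp.fun_add hq
  | mul_X p i hp => simpa only [map_mul, MvPolynomial.eval_X] using hp.fun_mul (hf i)

theorem eval_eq_zero_of_forall {P : MvPolynomial (Fin 11) ℂ} {τ : ℂ} (hτ : GoodTau τ)
    (hP : ∀ z, MvPolynomial.eval (fun i => abGens i τ z) P = 0)
    {z : Fin 8 → ℂ} (hdet : (formJac τ z).det ≠ 0) (y : Fin 11 → ℂ) (h0 : y 0 = E4 τ / 12)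
    (h4 : y 4 = E6 τ / 216) : MvPolynomial.eval y P = 0 := by
  obtain ⟨hτ, he, hg, hd⟩ := hτ
  obtain ⟨x, rfl⟩ := exists_swVal_eq he hd (by rw [Dl]; ring) y h0 h4
  set f : (Fin 9 → ℂ) → ℂ := fun x => MvPolynomial.eval (swVal (E4 τ) (E6 τ) (Dl τ) x) P with hf
  have hfd : Differentiable ℂ f := differentiableOn_univ.1 <|
    differentiableOn_eval P fun i => (differentiable_swVal _ _ _ i).differentiableOn
  set x0 := scaledForms τ (Fin.cons 1 z)
  have hev : ∀ᶠ x in nhds x0, f x = 0 := by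
    rw [← map_nhds_scaledForms hτ z hdet, Filter.eventually_map]
    exact Filter.Eventually.of_forall fun v => eval_swVal_scaledForms hτ hP v
  have hl : Differentiable ℂ fun s : ℂ => f (x0 + s • (x - x0)) := by fun_prop
  have h1 : ∀ᶠ s in nhds (0 : ℂ), f (x0 + s • (x - x0)) = 0 := by
    have hc : Filter.Tendsto (fun s : ℂ => x0 + s • (x - x0)) (nhds 0) (nhds x0) := by
      have : Continuous fun s : ℂ => x0 + s • (x - x0) := by fun_prop
      simpa using this.tendsto 0
    exact hc.eventually hev
  have hl' := hl.differentiableOn.analyticOnNhd isOpen_univ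
  have h2 := hl'.eqOn_zero_of_preconnected_of_eventuallyEq_zero isPreconnected_univ
    (Set.mem_univ 0) h1 (Set.mem_univ 1)
  simpa [hf] using h2

/-! ### The Eisenstein series E4 and E6 -/

theorem E4_eq (τ : UpperHalfPlane) : E4 τ = ModularForm.E₄ τ := by
  have hq : ‖qExp τ‖ < 1 := UpperHalfPlane.norm_exp_two_pi_I_lt_one τ
  rw [ModularForm.E₄, EisensteinSeries.q_expansion_bernoulli _ (by decide), E4,
    tsum_pow_div_one_sub_eq_tsum_sigma hq, bernoulli_eq_bernoulli'_of_ne_one (by norm_num),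
    bernoulli'_four]
  simp only [zpow_natCast, qExp, πC]
  norm_num

theorem E6_eq (τ : UpperHalfPlane) : E6 τ = ModularForm.E₆ τ := by
  have hq : ‖qExp τ‖ < 1 := UpperHalfPlane.norm_exp_two_pi_I_lt_one τ
  have hb : bernoulli 6 = 1 / 42 := by
    rw [bernoulli_eq_bernoulli'_of_ne_one (by norm_num)]
    simp [bernoulli'_def 6, Finset.sum_range_succ, Nat.choose,
      bernoulli'_eq_zero_of_odd (n := 5) (by decide) (by norm_num)]
    norm_num
  rw [ModularForm.E₆, EisensteinSeries.q_expansion_bernoulli _ (by decide), E6,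
    tsum_pow_div_one_sub_eq_tsum_sigma hq, hb]
  simp only [zpow_natCast, qExp, πC]
  norm_num

theorem Dl_ne_zero {τ : ℂ} (hτ : 0 < τ.im) : Dl τ ≠ 0 := by
  rw [Dl, E4_eq ⟨τ, hτ⟩, E6_eq ⟨τ, hτ⟩, ← ModularForm.discriminant_eq_E₄_cube_sub_E₆_sq]
  exact ModularForm.discriminant_ne_zero _

/-- A level one modular form as a holomorphic function of `q` on the unit disc. -/
theorem exists_cuspFunction {k : ℕ} (hk : 3 ≤ k) (hk2 : Even k) :
    ∃ C : ℂ → ℂ, DifferentiableOn ℂ C (Metric.ball 0 1) ∧ C 0 = 1 ∧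
      ∀ τ : UpperHalfPlane, ModularForm.E hk τ = C (qExp τ) := by
  have h1 := one_mem_strictPeriods_SL
  refine ⟨UpperHalfPlane.cuspFunction 1 (ModularForm.E hk), fun q hq =>
    (ModularFormClass.differentiableAt_cuspFunction (ModularForm.E hk) one_pos h1
      (by simpa using hq)).differentiableWithinAt, ?_, fun τ => ?_⟩
  · have := EisensteinSeries.E_qExpansion_coeff_zero hk hk2
    rw [UpperHalfPlane.qExpansion_coeff] at this
    simpa using this
  · rw [← SlashInvariantFormClass.eq_cuspFunction (ModularForm.E hk) τ h1 one_ne_zero]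
    simp [Function.Periodic.qParam, qExp, πC]

/-- The matrix with rows `(1, 0)` and `(N, 1)`. -/
def lowerUnip (N : ℕ) : Matrix.SpecialLinearGroup (Fin 2) ℤ :=
  ⟨!![1, 0; N, 1], by simp⟩

theorem E_lowerUnip_smul {k : ℕ} (hk : 3 ≤ k) (N : ℕ) (τ : UpperHalfPlane) :
    ModularForm.E hk (lowerUnip N • τ) = (N * τ + 1) ^ k * ModularForm.E hk τ := by
  have := SlashInvariantForm.slash_action_eqn'' (Γ := (Matrix.SpecialLinearGroup.mapGL ℝ).range)
    (ModularForm.E hk) (MonoidHom.mem_range.2 ⟨lowerUnip N, rfl⟩) τ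
  rw [← zpow_natCast]
  refine this.trans (congrArg (· ^ (k : ℤ) * _) ?_)
  change (((N : ℤ) : ℝ) : ℂ) * τ + (((1 : ℤ) : ℝ) : ℂ) = _
  simp

/-- The tuple `w` with the entries `a₀` and `b₀` replaced by `x` and `y`. -/
def withE (w : Fin 11 → ℂ) (x y : ℂ) : Fin 11 → ℂ :=
  Function.update (Function.update w 0 x) 4 y

theorem withE_apply (w : Fin 11 → ℂ) (x y : ℂ) (i : Fin 11) :
    withE w x y i = if i = 4 then y else if i = 0 then x else w i := by
  simp only [withE, Function.update_apply]

/-- Substituting univariate polynomials for the entries `a₀` and `b₀`. -/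
theorem exists_polynomial_eval_withE (P : MvPolynomial (Fin 11) ℂ) (w : Fin 11 → ℂ)
    (p q : Polynomial ℂ) : ∃ f : Polynomial ℂ, ∀ t,
      f.eval t = MvPolynomial.eval (withE w (p.eval t) (q.eval t)) P := by
  refine ⟨MvPolynomial.aeval
    (fun i => if i = 4 then q else if i = 0 then p else Polynomial.C (w i)) P, fun t => ?_⟩
  rw [← Polynomial.coe_aeval_eq_eval, ← AlgHom.comp_apply, MvPolynomial.comp_aeval,
    ← MvPolynomial.coe_aeval_eq_eval]
  change _ = MvPolynomial.aeval _ P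
  congr 2
  funext i
  rw [withE_apply]
  split_ifs <;> simp

theorem abGens_independent (P : MvPolynomial (Fin 11) ℂ)
    (hP : ∀ τ, GoodTau τ → ∀ z, MvPolynomial.eval (fun i => abGens i τ z) P = 0) : P = 0 := by
  obtain ⟨C4, hd4, h40, hE4⟩ := exists_cuspFunction (show 3 ≤ 4 by norm_num) (by decide)
  obtain ⟨C6, hd6, h60, hE6⟩ := exists_cuspFunction (show 3 ≤ 6 by norm_num) (by decide)
  have hball : Metric.ball (0 : ℂ) 1 ∈ nhds 0 := Metric.ball_mem_nhds _ one_pos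
  have hc4 : Filter.Tendsto C4 (nhds 0) (nhds 1) :=
    h40 ▸ (hd4.differentiableAt hball).continuousAt
  have hc6 : Filter.Tendsto C6 (nhds 0) (nhds 1) :=
    h60 ▸ (hd6.differentiableAt hball).continuousAt
  have hne4 := hc4.eventually_ne one_ne_zero
  have hne6 := hc6.eventually_ne one_ne_zero
  obtain ⟨r, hr, hdet⟩ := det_formJac_ne_zero
  have hq1 (τ : UpperHalfPlane) : qExp τ ∈ Metric.ball (0 : ℂ) 1 := by
    simpa [qExp, πC] using UpperHalfPlane.norm_exp_two_pi_I_lt_one τ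
  -- vanishing on the disc
  have hdisc (w : Fin 11 → ℂ) : ∀ q ∈ Metric.ball (0 : ℂ) 1,
      MvPolynomial.eval (withE w (C4 q / 12) (C6 q / 216)) P = 0 := by
    have hd : DifferentiableOn ℂ
        (fun q => MvPolynomial.eval (withE w (C4 q / 12) (C6 q / 216)) P) (Metric.ball 0 1) := by
      refine differentiableOn_eval P fun i => ?_
      simp only [withE_apply]
      split_ifs
      · exact hd6.div_const _
      · exact hd4.div_const _
      · exact differentiableOn_const _
    refine (hd.analyticOnNhd Metric.isOpen_ball).eqOn_zero_of_preconnected_of_frequently_eq_zero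
      (convex_ball _ _).isPreconnected (Metric.mem_ball_self one_pos)
      (Filter.Eventually.frequently ?_)
    filter_upwards [nhdsWithin_le_nhds hne4, nhdsWithin_le_nhds hne6, nhdsWithin_le_nhds hball,
      nhdsWithin_le_nhds (Metric.ball_mem_nhds (0 : ℂ) hr), self_mem_nhdsWithin]
      with q hq4 hq6 hqb hqr hq0
    obtain ⟨τ, hτ, rfl⟩ := exists_qExp_eq hq0 (by simpa using hqb)
    have h4 : E4 τ = C4 (qExp τ) := (E4_eq ⟨τ, hτ⟩).trans (hE4 ⟨τ, hτ⟩)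
    have h6 : E6 τ = C6 (qExp τ) := (E6_eq ⟨τ, hτ⟩).trans (hE6 ⟨τ, hτ⟩)
    have hg : GoodTau τ := ⟨hτ, h4 ▸ hq4, h6 ▸ hq6, Dl_ne_zero hτ⟩
    refine eval_eq_zero_of_forall hg (hP τ hg) (hdet τ hτ (by simpa using hqr)) _ ?_ ?_
    · rw [withE_apply, if_neg (by decide), if_pos rfl, h4]
    · rw [withE_apply, if_pos rfl, h6]
  -- scaling by modularity
  have hscale (w : Fin 11 → ℂ) (τ : UpperHalfPlane) (t : ℂ) :
      MvPolynomial.eval (withE w (t ^ 4 * (E4 τ / 12)) (t ^ 6 * (E6 τ / 216))) P = 0 := by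
    obtain ⟨f, hf⟩ := exists_polynomial_eval_withE P w
      (Polynomial.X ^ 4 * Polynomial.C (E4 τ / 12)) (Polynomial.X ^ 6 * Polynomial.C (E6 τ / 216))
    simp only [Polynomial.eval_mul, Polynomial.eval_pow, Polynomial.eval_X,
      Polynomial.eval_C] at hf
    have h0 : f = 0 := by
      refine Polynomial.eq_zero_of_infinite_isRoot f
        ((Set.infinite_range_of_injective (f := fun N : ℕ => N * (τ : ℂ) + 1) ?_).mono ?_)
      · intro M N h
        exact_mod_cast mul_right_cancel₀ τ.ne_zero (add_right_cancel h)
      · rintro _ ⟨N, rfl⟩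
        change f.eval _ = 0
        rw [hf, E4_eq, E6_eq, ← mul_div_assoc, ← mul_div_assoc, ← E_lowerUnip_smul,
          ← E_lowerUnip_smul, hE4, hE6]
        exact hdisc w _ (hq1 _)
    rw [← hf, h0, Polynomial.eval_zero]
  -- the ratio `E₆² / E₄³` takes infinitely many values
  set R : Set ℂ := {ρ | ∃ τ : UpperHalfPlane, E4 τ ≠ 0 ∧ ρ = E6 τ ^ 2 / E4 τ ^ 3} with hR
  have hRinf : R.Infinite := by
    intro hfin
    have h1 : (1 : ℂ) ∉ R := by
      rintro ⟨τ, hτ, h⟩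
      refine Dl_ne_zero τ.im_pos ?_
      rw [eq_div_iff (pow_ne_zero _ hτ), one_mul] at h
      rw [Dl, h, sub_self, zero_div]
    have hlim : Filter.Tendsto (fun q => C6 q ^ 2 / C4 q ^ 3) (nhds 0) (nhds 1) := by
      simpa [Pi.div_def] using (hc6.pow 2).div (hc4.pow 3) (by simp)
    have hev := hlim.eventually (hfin.isClosed.isOpen_compl.mem_nhds h1)
    obtain ⟨q, ⟨⟨hq, hq4⟩, hqb⟩, hq0⟩ := (((hev.and hne4).and hball).filter_mono
      (nhdsWithin_le_nhds (s := {0}ᶜ)) |>.and self_mem_nhdsWithin).exists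
    obtain ⟨τ, hτ, rfl⟩ := exists_qExp_eq hq0 (by simpa using hqb)
    have h4 : E4 τ = C4 (qExp τ) := (E4_eq ⟨τ, hτ⟩).trans (hE4 ⟨τ, hτ⟩)
    have h6 : E6 τ = C6 (qExp τ) := (E6_eq ⟨τ, hτ⟩).trans (hE6 ⟨τ, hτ⟩)
    exact hq ⟨⟨τ, hτ⟩, h4 ▸ hq4, by simp only [← h4, ← h6]⟩
  have hx (w : Fin 11 → ℂ) (x y : ℂ) (hx : x ≠ 0) : MvPolynomial.eval (withE w x y) P = 0 := by
    obtain ⟨f, hf⟩ := exists_polynomial_eval_withE P w (Polynomial.C x) Polynomial.X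
    simp only [Polynomial.eval_X, Polynomial.eval_C] at hf
    have h0 : f = 0 := by
      refine Polynomial.eq_zero_of_infinite_isRoot f
        (Set.Infinite.of_image (fun Y => Y ^ 2 / (x ^ 3 / 27)) (hRinf.mono ?_))
      rintro _ ⟨τ, hτ, rfl⟩
      obtain ⟨t, ht⟩ := IsAlgClosed.exists_pow_nat_eq (12 * x / E4 τ) (show 0 < 4 by norm_num)
      refine ⟨t ^ 6 * (E6 τ / 216), ?_, ?_⟩
      · change f.eval _ = 0
        rw [hf, ← hscale w τ t, ht]
        congr 3
        field_simp
      · have h12 : t ^ 12 = (12 * x / E4 τ) ^ 3 := by rw [← ht]; ring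
        have : (t ^ 6 * (E6 τ / 216)) ^ 2 = t ^ 12 * (E6 τ / 216) ^ 2 := by ring
        simp only [this, h12]
        field_simp
        ring
    rw [← hf, h0, Polynomial.eval_zero]
  refine MvPolynomial.funext fun w => ?_
  obtain ⟨f, hf⟩ := exists_polynomial_eval_withE P w Polynomial.X (Polynomial.C (w 4))
  simp only [Polynomial.eval_X, Polynomial.eval_C] at hf
  have h0 : f = 0 := by
    refine Polynomial.eq_zero_of_infinite_isRoot f
      ((Set.finite_singleton (0 : ℂ)).infinite_compl.mono fun x hx0 => ?_)
    exact (hf x).trans (hx w x _ hx0)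
  have := hf (w 0)
  rw [h0, Polynomial.eval_zero] at this
  rw [map_zero, this]
  simp [withE]

/-- ψ and ψ̃ are injective ℂ-algebra homomorphisms, with inverses on their
images given by the substitutions α_i ↦ a_i (α_1 ↦ 0), β_j ↦ b_j, resp. α_i ↦ c_i,
β_j ↦ d_j (β_1 ↦ 0); their restrictions to J^{E8}_{*,*} = R ∩ R̃ coincide and give an
injection of J^{E8}_{*,*} into ℂ[α_0,…,α_4,β_0,…,β_6]. -/
theorem psi_psitilde_properties :
    (∀ Q Q' : MvPolynomial (Fin 11) ℂ, ∀ α β : ℕ → ℂ,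
      MvPolynomial.eval (hatGens α β) (Q + Q') =
        MvPolynomial.eval (hatGens α β) Q + MvPolynomial.eval (hatGens α β) Q' ∧
      MvPolynomial.eval (hatGens α β) (Q * Q') =
        MvPolynomial.eval (hatGens α β) Q * MvPolynomial.eval (hatGens α β) Q' ∧
      MvPolynomial.eval (cdhatGens α β) (Q + Q') =
        MvPolynomial.eval (cdhatGens α β) Q + MvPolynomial.eval (cdhatGens α β) Q' ∧
      MvPolynomial.eval (cdhatGens α β) (Q * Q') =
        MvPolynomial.eval (cdhatGens α β) Q * MvPolynomial.eval (cdhatGens α β) Q') ∧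
    (∀ c : ℂ, ∀ α β : ℕ → ℂ,
      MvPolynomial.eval (hatGens α β) (MvPolynomial.C c : MvPolynomial (Fin 11) ℂ) = c ∧
      MvPolynomial.eval (cdhatGens α β) (MvPolynomial.C c : MvPolynomial (Fin 11) ℂ) = c) ∧
    (∀ Q Q' : MvPolynomial (Fin 11) ℂ,
      (∀ α β : ℕ → ℂ, α 0 ≠ 0 →
        MvPolynomial.eval (hatGens α β) Q = MvPolynomial.eval (hatGens α β) Q') →
      Q = Q') ∧
    (∀ Q Q' : MvPolynomial (Fin 11) ℂ,
      (∀ α β : ℕ → ℂ, β 0 ≠ 0 →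
        MvPolynomial.eval (cdhatGens α β) Q = MvPolynomial.eval (cdhatGens α β) Q') →
      Q = Q') ∧
    (∀ Q : MvPolynomial (Fin 11) ℂ, ∀ τ : ℂ, GoodTau τ → ∀ z,
      MvPolynomial.eval (hatGens (fun i => aSW i τ z) (fun j => bSW j τ z)) Q =
        MvPolynomial.eval (fun i => abGens i τ z) Q) ∧
    (∀ Q : MvPolynomial (Fin 11) ℂ, ∀ τ : ℂ, GoodTau τ → ∀ z,
      MvPolynomial.eval (cdhatGens (fun i => cSW i τ z) (fun j => dSW j τ z)) Q =
        MvPolynomial.eval (fun i => cdGens i τ z) Q) ∧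
    (∀ Q Q' : MvPolynomial (Fin 11) ℂ,
      (∀ τ : ℂ, GoodTau τ → ∀ z,
        MvPolynomial.eval (fun i => abGens i τ z) Q =
          MvPolynomial.eval (fun i => cdGens i τ z) Q') →
      (∀ α β : ℕ → ℂ, α 0 ≠ 0 → β 0 ≠ 0 →
        MvPolynomial.eval (hatGens α β) Q = MvPolynomial.eval (cdhatGens α β) Q') ∧
      ∃ Φ : MvPolynomial SV ℂ, ∀ α β : ℕ → ℂ, α 0 ≠ 0 → β 0 ≠ 0 →
        evalSV Φ α β = MvPolynomial.eval (hatGens α β) Q) := by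
  refine ⟨fun Q Q' α β => ⟨map_add _ _ _, map_mul _ _ _, map_add _ _ _, map_mul _ _ _⟩,
    fun c α β => ⟨MvPolynomial.eval_C _, MvPolynomial.eval_C _⟩, hatGens_injective,
    cdhatGens_injective, fun Q τ _ z => ?_, fun Q τ hτ z => ?_,
    substitutions_agree_of_independent abGens_independent⟩
  · rw [hatGens_SW]
  · rw [cdhatGens_SW hτ]

end E8Jacobi
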